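/- arXiv:1601.07205 — 2 statements merged into one kernel-verified Lean document; each statement's English description precedes it below -/
import Mathlib

section
/- Fix α ∈ [1, 2) and a one-dimensional linear subspace L ⊂ ℝ². For any β < (2/α) − 1 there exist a set E ⊆ L^⊥ and a quasiconformal homeomorphism f : ℝ² → ℝ² such that the Hausdorff dimension of f(a + L) is at least α for every a ∈ E, and the Hausdorff dimension of E is strictly greater than β. -/
open Set Metric Filter MeasureTheory
open scoped ENNReal Topology NNReal

noncomputable section

/-- `L_Φ(x,r) = sup {|Φ(x) - Φ(y)| : y ∈ Ω, |x - y| ≤ r}`. -/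
noncomputable def linDil {X : Type*} [MetricSpace X] (Ω : Set X) (Φ : X → X) (x : X) (r : ℝ) :
    ℝ≥0∞ :=
  ⨆ y ∈ {y | y ∈ Ω ∧ dist x y ≤ r}, edist (Φ x) (Φ y)

/-- `l_Φ(x,r) = inf {|Φ(x) - Φ(y)| : y ∈ Ω, |x - y| ≥ r}`. -/
noncomputable def linCon {X : Type*} [MetricSpace X] (Ω : Set X) (Φ : X → X) (x : X) (r : ℝ) :
    ℝ≥0∞ :=
  ⨅ y ∈ {y | y ∈ Ω ∧ r ≤ dist x y}, edist (Φ x) (Φ y)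

/-- `H_Φ(x) = limsup_{r → 0⁺} L_Φ(x,r) / l_Φ(x,r)`. -/
noncomputable def qcH {X : Type*} [MetricSpace X] (Ω : Set X) (Φ : X → X) (x : X) : ℝ≥0∞ :=
  Filter.limsup (fun r : ℝ => linDil Ω Φ x r / linCon Ω Φ x r) (𝓝[>] (0 : ℝ))

/-- A map `Φ`, viewed as a map of `Ω` into `X`, is quasiconformal if `H_Φ(x) ≤ H` for all
`x ∈ Ω`, for some finite `H ≥ 1`. -/
def QuasiconformalOn {X : Type*} [MetricSpace X] (Ω : Set X) (Φ : X → X) : Prop :=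
  ∃ H : ℝ, 1 ≤ H ∧ ∀ x ∈ Ω, qcH Ω Φ x ≤ ENNReal.ofReal H

/-- `Φ` restricts to a homeomorphism of `Ω` onto `Ω'`. -/
def IsHomeoOn {X : Type*} [TopologicalSpace X] (Φ : X → X) (Ω Ω' : Set X) : Prop :=
  ∃ e : Ω ≃ₜ Ω', ∀ x : Ω, (e x : X) = Φ (x : X)

/-- `f` is a similarity with ratio `r`. -/
def IsSimilarityWith {X : Type*} [MetricSpace X] (r : ℝ) (f : X → X) : Prop :=
  0 < r ∧ ∀ x y, dist (f x) (f y) = r * dist x y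

/-- The strong separation condition for the iterated function system `f` on the set `Q`:
each `f i` maps the closure of `Q` into `Q`, and the images of the closure of `Q` are
pairwise disjoint. -/
def StrongSeparation {X : Type*} [MetricSpace X] {ι : Type*} (f : ι → X → X) (Q : Set X) :
    Prop :=
  (∀ i, f i '' closure Q ⊆ Q) ∧
    ∀ i j, i ≠ j → Disjoint (f i '' closure Q) (f j '' closure Q)

/-- `f_σ = f_{σ₁} ∘ ⋯ ∘ f_{σ_k}` for a finite word `σ`. -/
def iterComp {X ι : Type*} (f : ι → X → X) : List ι → X → X
  | [] => id
  | i :: w => f i ∘ iterComp f w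

/-- The invariant set `K = ⋂_k ⋃_{|σ| = k} f_σ(closure Q)` of an iterated function system. -/
def invariantSet {X : Type*} [MetricSpace X] {ι : Type*} (f : ι → X → X) (Q : Set X) :
    Set X :=
  ⋂ k : ℕ, ⋃ w : Fin k → ι, iterComp f (List.ofFn w) '' closure Q

/-- The distance between two subsets of a metric space. -/
noncomputable def setDist {X : Type*} [MetricSpace X] (A B : Set X) : ℝ :=
  sInf ((fun p : X × X => dist p.1 p.2) '' A ×ˢ B)

end

namespace BHWaux

set_option linter.unusedSectionVars false

section Moves

variable {V : Type*} [NormedAddCommGroup V] [NormedSpace ℝ V]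
variable {ι : Type*}

/-- A family of disjoint closed balls of equal radius in the ball of radius `3/4`. -/
structure Valid (c : ι → V) (s : ℝ) : Prop where
  pos : 0 < s
  sep : ∀ i j, i ≠ j → 2 * s < ‖c i - c j‖
  bdd : ∀ i, ‖c i‖ + s < 3 / 4

/-- `Φ` is a bi-Lipschitz bijection, the identity far away, mapping the first family of balls
onto the second one by homotheties. -/
structure Moves (c : ι → V) (s : ℝ) (c' : ι → V) (s' : ℝ) (Φ : V ≃ V) (K : ℝ) : Prop where
  lip : ∀ x y, ‖Φ x - Φ y‖ ≤ K * ‖x - y‖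
  lip' : ∀ x y, ‖Φ.symm x - Φ.symm y‖ ≤ K * ‖x - y‖
  out : ∀ z, 3 / 4 ≤ ‖z‖ → Φ z = z
  ball : ∀ i v, ‖v‖ ≤ 1 → Φ (c i + s • v) = c' i + s' • v

def Rel (c : ι → V) (s : ℝ) (c' : ι → V) (s' : ℝ) : Prop :=
  ∃ (Φ : V ≃ V) (K : ℝ), 0 ≤ K ∧ Moves c s c' s' Φ K

lemma Moves.symm {c c' : ι → V} {s s' : ℝ} {Φ : V ≃ V} {K : ℝ} (h : Moves c s c' s' Φ K) :
    Moves c' s' c s Φ.symm K where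
  lip := h.lip'
  lip' := h.lip
  out z hz := by rw [Equiv.symm_apply_eq, h.out z hz]
  ball i v hv := by rw [Equiv.symm_apply_eq, h.ball i v hv]

lemma Rel.symm {c c' : ι → V} {s s' : ℝ} (h : Rel c s c' s') : Rel c' s' c s := by
  obtain ⟨Φ, K, hK, h⟩ := h
  exact ⟨Φ.symm, K, hK, h.symm⟩

lemma Rel.trans {c c' c'' : ι → V} {s s' s'' : ℝ} (h : Rel c s c' s') (h' : Rel c' s' c'' s'') :
    Rel c s c'' s'' := by
  obtain ⟨Φ, K, hK, h⟩ := h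
  obtain ⟨Φ', K', hK', h'⟩ := h'
  refine ⟨Φ.trans Φ', K * K', by positivity, ?_, ?_, ?_, ?_⟩
  · intro x y
    calc _ ≤ K' * ‖Φ x - Φ y‖ := h'.lip _ _
      _ ≤ K' * (K * ‖x - y‖) := by gcongr; exact h.lip _ _
      _ = _ := by ring
  · intro x y
    calc _ ≤ K * ‖Φ'.symm x - Φ'.symm y‖ := h.lip' _ _
      _ ≤ K * (K' * ‖x - y‖) := by gcongr; exact h'.lip' _ _
      _ = _ := by ring
  · intro z hz
    simp [h.out z hz, h'.out z hz]
  · intro i v hv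
    simp [h.ball i v hv, h'.ball i v hv]

/-- identity plus contraction -/
lemma exists_equiv_id_add [CompleteSpace V] (u : V → V) (hu : ∀ x y, ‖u x - u y‖ ≤ 1 / 2 * ‖x - y‖) :
    ∃ Φ : V ≃ V, (∀ x, Φ x = x + u x) ∧ (∀ x y, ‖Φ x - Φ y‖ ≤ 2 * ‖x - y‖) ∧
      (∀ x y, ‖Φ.symm x - Φ.symm y‖ ≤ 2 * ‖x - y‖) := by
  have key : ∀ x y, ‖x - y‖ ≤ 2 * ‖(x + u x) - (y + u y)‖ := by
    intro x y
    have h1 : ‖x - y‖ ≤ ‖(x + u x) - (y + u y)‖ + ‖u x - u y‖ := by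
      calc ‖x - y‖ = ‖((x + u x) - (y + u y)) - (u x - u y)‖ := by congr 1; abel
        _ ≤ _ := norm_sub_le _ _
    linarith [hu x y]
  have hbij : Function.Bijective (fun x => x + u x) := by
    constructor
    · intro x y hxy
      have := key x y
      simp only at hxy
      rw [hxy, sub_self, norm_zero, mul_zero] at this
      exact sub_eq_zero.1 (norm_le_zero_iff.1 this)
    · intro y
      have hc : ContractingWith (1 / 2 : ℝ≥0) (fun x => y - u x) := by
        refine ⟨by norm_num [← NNReal.coe_lt_coe], LipschitzWith.of_dist_le_mul ?_⟩
        intro a b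
        rw [dist_eq_norm, dist_eq_norm]
        have := hu b a
        rw [norm_sub_rev b a] at this
        simpa using this
      obtain ⟨x, hx, -⟩ := hc.exists_fixedPoint y (edist_ne_top _ _)
      refine ⟨x, ?_⟩
      have hx' : y - u x = x := hx
      simp only
      rw [← eq_sub_iff_add_eq, hx']
  refine ⟨Equiv.ofBijective _ hbij, fun x => rfl, ?_, ?_⟩
  · intro x y
    change ‖(x + u x) - (y + u y)‖ ≤ _
    calc _ = ‖(x - y) + (u x - u y)‖ := by congr 1; abel
      _ ≤ _ := norm_add_le _ _
      _ ≤ _ := by linarith [hu x y, norm_nonneg (x - y)]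
  · intro x y
    set Ψ := Equiv.ofBijective _ hbij
    have := key (Ψ.symm x) (Ψ.symm y)
    have e : ∀ z, Ψ.symm z + u (Ψ.symm z) = z := fun z => Ψ.apply_symm_apply z
    rwa [e, e] at this

/-- cutoff function -/
noncomputable def cut (s η : ℝ) (w : V) : ℝ := max 0 (min 1 (1 - (‖w‖ - s) / η))

lemma cut_one {s η : ℝ} (hη : 0 < η) {w : V} (h : ‖w‖ ≤ s) : cut s η w = 1 := by
  unfold cut
  have : (‖w‖ - s) / η ≤ 0 := div_nonpos_of_nonpos_of_nonneg (by linarith) hη.le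
  rw [min_eq_left (by linarith)]; simp

lemma cut_zero {s η : ℝ} (hη : 0 < η) {w : V} (h : s + η ≤ ‖w‖) : cut s η w = 0 := by
  unfold cut
  have : 1 ≤ (‖w‖ - s) / η := by rw [le_div_iff₀ hη]; linarith
  exact max_eq_left ((min_le_right _ _).trans (by linarith))

lemma cut_nonneg {s η : ℝ} (w : V) : 0 ≤ cut s η w := le_max_left _ _

lemma cut_le {s η : ℝ} (w : V) : cut s η w ≤ 1 := max_le (by norm_num) (min_le_left _ _)

lemma cut_lip {s η : ℝ} (hη : 0 < η) (w w' : V) :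
    |cut s η w - cut s η w'| ≤ 1 / η * ‖w - w'‖ := by
  unfold cut
  calc _ ≤ |min 1 (1 - (‖w‖ - s) / η) - min 1 (1 - (‖w'‖ - s) / η)| := by
        simpa using abs_max_sub_max_le_max 0 (min 1 (1 - (‖w‖ - s) / η)) 0 (min 1 (1 - (‖w'‖ - s) / η))
    _ ≤ |(1 - (‖w‖ - s) / η) - (1 - (‖w'‖ - s) / η)| := by
        simpa using abs_min_sub_min_le_max 1 (1 - (‖w‖ - s) / η) 1 (1 - (‖w'‖ - s) / η)
    _ = 1 / η * |‖w'‖ - ‖w‖| := by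
        rw [show (1 - (‖w‖ - s) / η) - (1 - (‖w'‖ - s) / η) = 1 / η * (‖w'‖ - ‖w‖) by ring,
          abs_mul, abs_of_pos (by positivity)]
    _ ≤ _ := by
        gcongr
        rw [norm_sub_rev]
        exact abs_norm_sub_norm_le _ _

lemma cut_smul_lip {s η : ℝ} (hs : 0 < s) (hη : 0 < η) (w w' : V) :
    ‖cut s η w • w - cut s η w' • w'‖ ≤ (1 + 1 / η * (s + η)) * ‖w - w'‖ := by
  have main : ∀ w w' : V, ‖w'‖ ≤ s + η →
      ‖cut s η w • w - cut s η w' • w'‖ ≤ (1 + 1 / η * (s + η)) * ‖w - w'‖ := by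
    intro w w' h
    calc _ = ‖cut s η w • (w - w') + (cut s η w - cut s η w') • w'‖ := by
          congr 1; rw [smul_sub, sub_smul]; abel
      _ ≤ ‖cut s η w • (w - w')‖ + ‖(cut s η w - cut s η w') • w'‖ := norm_add_le _ _
      _ ≤ 1 * ‖w - w'‖ + (1 / η * ‖w - w'‖) * (s + η) := by
          rw [norm_smul, norm_smul, Real.norm_eq_abs, Real.norm_eq_abs, abs_of_nonneg (cut_nonneg w)]
          gcongr
          · exact cut_le w
          · exact cut_lip hη w w'
      _ = _ := by ring
  rcases le_total ‖w'‖ (s + η) with h | h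
  · exact main w w' h
  rcases le_total ‖w‖ (s + η) with h' | h'
  · have := main w' w h'
    rwa [norm_sub_rev, norm_sub_rev w' w] at this
  · rw [cut_zero hη h, cut_zero hη h']
    simp
    positivity

lemma exists_eta [Finite ι] {c : ι → V} {s : ℝ} (h : Valid c s) :
    ∃ η > 0, (∀ i j, i ≠ j → 2 * s + η ≤ ‖c i - c j‖) ∧ ∀ i, ‖c i‖ + s + η ≤ 3 / 4 := by
  have h1 : ∀ᶠ η in 𝓝[>] (0 : ℝ), ∀ i j, i ≠ j → 2 * s + η ≤ ‖c i - c j‖ := by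
    rw [eventually_all]; intro i
    rw [eventually_all]; intro j
    by_cases hij : i = j
    · simp [hij]
    have := h.sep i j hij
    filter_upwards [mem_nhdsWithin_of_mem_nhds (Iio_mem_nhds (sub_pos.2 this))] with η hη
    intro _
    simp at hη; linarith
  have h2 : ∀ᶠ η in 𝓝[>] (0 : ℝ), ∀ i, ‖c i‖ + s + η ≤ 3 / 4 := by
    rw [eventually_all]; intro i
    have := h.bdd i
    filter_upwards [mem_nhdsWithin_of_mem_nhds (Iio_mem_nhds (sub_pos.2 this))] with η hη
    simp at hη; linarith
  obtain ⟨η, ⟨h1, h2⟩, h3⟩ := ((h1.and h2).and self_mem_nhdsWithin).exists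
  exact ⟨η, h3, h1, h2⟩

lemma rel_of_near [CompleteSpace V] [Finite ι] {c : ι → V} {s : ℝ} (h : Valid c s) :
    ∀ᶠ p in 𝓝 ((c, s) : (ι → V) × ℝ), Rel c s p.1 p.2 := by
  cases nonempty_fintype ι
  obtain ⟨η, hη, h1, h2⟩ := exists_eta h
  have hs := h.pos
  have hlim : Tendsto (fun p : (ι → V) × ℝ => ∑ i, (‖p.1 i - c i‖ * (1 / η) +
      |p.2 / s - 1| * (1 + 1 / η * (s + η)))) (𝓝 (c, s)) (𝓝 0) := by
    have : Continuous (fun p : (ι → V) × ℝ => ∑ i, (‖p.1 i - c i‖ * (1 / η) +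
      |p.2 / s - 1| * (1 + 1 / η * (s + η)))) := by fun_prop
    have := this.tendsto (c, s)
    simpa [div_self hs.ne'] using this
  filter_upwards [hlim.eventually (Iio_mem_nhds (show (0 : ℝ) < 1 / 2 by norm_num))] with p hp
  set b := p.2 / s - 1 with hb
  let u : V → V := fun z => ∑ i, (cut s η (z - c i) • (p.1 i - c i) +
    b • (cut s η (z - c i) • (z - c i)))
  have hu : ∀ x y, ‖u x - u y‖ ≤ 1 / 2 * ‖x - y‖ := by
    intro x y
    have : u x - u y = ∑ i, ((cut s η (x - c i) - cut s η (y - c i)) • (p.1 i - c i) +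
      b • (cut s η (x - c i) • (x - c i) - cut s η (y - c i) • (y - c i))) := by
      simp only [u]
      rw [← Finset.sum_sub_distrib]
      refine Finset.sum_congr rfl fun i _ => ?_
      generalize cut s η (x - c i) = A
      generalize cut s η (y - c i) = B
      clear_value b
      module
    rw [this]
    calc _ ≤ ∑ i, ‖((cut s η (x - c i) - cut s η (y - c i)) • (p.1 i - c i) +
      b • (cut s η (x - c i) • (x - c i) - cut s η (y - c i) • (y - c i)))‖ := norm_sum_le _ _
      _ ≤ ∑ i, (‖p.1 i - c i‖ * (1 / η) + |b| * (1 + 1 / η * (s + η))) * ‖x - y‖ := by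
        refine Finset.sum_le_sum fun i _ => ?_
        refine (norm_add_le _ _).trans ?_
        have e : (x - c i) - (y - c i) = x - y := by abel
        have a1 := cut_lip (s := s) hη (x - c i) (y - c i)
        have a2 := cut_smul_lip hs hη (x - c i) (y - c i)
        rw [e] at a1 a2
        rw [norm_smul, norm_smul, Real.norm_eq_abs, Real.norm_eq_abs]
        calc _ ≤ (1 / η * ‖x - y‖) * ‖p.1 i - c i‖ + |b| * ((1 + 1 / η * (s + η)) * ‖x - y‖) := by
              gcongr
          _ = _ := by ring
      _ = (∑ i, (‖p.1 i - c i‖ * (1 / η) + |b| * (1 + 1 / η * (s + η)))) * ‖x - y‖ := by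
        rw [Finset.sum_mul]
      _ ≤ _ := by
        gcongr
  obtain ⟨Φ, hΦ, hl, hl'⟩ := exists_equiv_id_add u hu
  refine ⟨Φ, 2, by norm_num, hl, hl', ?_, ?_⟩
  · intro z hz
    rw [hΦ]
    have : u z = 0 := by
      refine Finset.sum_eq_zero fun i _ => ?_
      rw [cut_zero hη]
      · simp
      · have := norm_sub_norm_le z (c i)
        linarith [h2 i]
    rw [this, add_zero]
  · intro i v hv
    have hsv : ‖s • v‖ ≤ s := by
      rw [norm_smul, Real.norm_eq_abs, abs_of_pos hs]
      nlinarith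
    rw [hΦ]
    have : u (c i + s • v) = (p.1 i - c i) + b • (s • v) := by
      simp only [u]
      rw [Finset.sum_eq_single i]
      · rw [add_sub_cancel_left, cut_one hη hsv, one_smul, one_smul]
      · intro j _ hj
        rw [cut_zero hη]
        · simp
        · have a1 := h1 i j (Ne.symm hj)
          have : ‖c i - c j‖ ≤ ‖c i + s • v - c j‖ + ‖s • v‖ := by
            calc _ = ‖(c i + s • v - c j) - s • v‖ := by congr 1; abel
              _ ≤ _ := norm_sub_le _ _
          linarith
      · intro hi; exact absurd (Finset.mem_univ i) hi
    rw [this, hb, sub_smul, one_smul, smul_smul, div_mul_cancel₀ _ hs.ne']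
    abel

lemma rel_of_path [CompleteSpace V] [Finite ι] (γ : ℝ → (ι → V) × ℝ) (hγ : Continuous γ)
    (h : ∀ t ∈ Icc (0 : ℝ) 1, Valid (γ t).1 (γ t).2) :
    Rel (γ 0).1 (γ 0).2 (γ 1).1 (γ 1).2 := by
  refine (isPreconnected_Icc (a := (0 : ℝ)) (b := 1)).induction₂'
    (fun a b => Rel (γ a).1 (γ a).2 (γ b).1 (γ b).2) ?_ ?_ (by simp) (by simp)
  · intro t ht
    have := (hγ.tendsto t).eventually (rel_of_near (h t ht))
    exact mem_nhdsWithin_of_mem_nhds (this.mono fun y hy => ⟨hy, hy.symm⟩)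
  · intro x y z _ _ _ h1 h2
    exact h1.trans h2

/-- Balls whose centers can be moved along straight segments without collisions. -/
lemma rel_of_segment [CompleteSpace V] [Finite ι] {p q : ι → V} {r ρ : ℝ}
    (hp : Valid p r) (hq : Valid q ρ)
    (h : ∀ i j, i ≠ j → ∀ t ∈ Icc (0 : ℝ) 1, (1 - t) • (p i - p j) + t • (q i - q j) ≠ 0) :
    Rel p r q ρ := by
  -- a common small radius
  have hex : ∃ ε > 0, ε ≤ r ∧ ε ≤ ρ ∧ ∀ i j, i ≠ j → ∀ t ∈ Icc (0 : ℝ) 1,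
      2 * ε < ‖(1 - t) • (p i - p j) + t • (q i - q j)‖ := by
    have h1 : ∀ᶠ ε in 𝓝[>] (0 : ℝ), ∀ i j, i ≠ j → ∀ t ∈ Icc (0 : ℝ) 1,
        2 * ε < ‖(1 - t) • (p i - p j) + t • (q i - q j)‖ := by
      rw [eventually_all]; intro i
      rw [eventually_all]; intro j
      by_cases hij : i = j
      · simp [hij]
      obtain ⟨t0, ht0, hmin⟩ := (isCompact_Icc (a := (0 : ℝ)) (b := 1)).exists_isMinOn
        (by simp) (f := fun t => ‖(1 - t) • (p i - p j) + t • (q i - q j)‖)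
        (by fun_prop)
      have hpos : 0 < ‖(1 - t0) • (p i - p j) + t0 • (q i - q j)‖ :=
        norm_pos_iff.2 (h i j hij t0 ht0)
      filter_upwards [mem_nhdsWithin_of_mem_nhds (Iio_mem_nhds (half_pos hpos))] with ε hε
      intro _ t ht
      have := hmin ht
      simp only [mem_ofPred_eq] at this
      simp only [mem_Iio] at hε
      linarith
    have h2 : ∀ᶠ ε in 𝓝[>] (0 : ℝ), ε < r := mem_nhdsWithin_of_mem_nhds (Iio_mem_nhds hp.pos)
    have h3 : ∀ᶠ ε in 𝓝[>] (0 : ℝ), ε < ρ := mem_nhdsWithin_of_mem_nhds (Iio_mem_nhds hq.pos)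
    obtain ⟨ε, ⟨⟨h1, h2⟩, h3⟩, h4⟩ := (((h1.and h2).and h3).and self_mem_nhdsWithin).exists
    exact ⟨ε, h4, h2.le, h3.le, h1⟩
  obtain ⟨ε, hε, hεr, hερ, hsep⟩ := hex
  have shrink : ∀ (c : ι → V) (s : ℝ), Valid c s → ε ≤ s → Rel c s c ε := by
    intro c s hc hs
    have := rel_of_path (fun t : ℝ => (c, (1 - t) * s + t * ε)) (by fun_prop) ?_
    · simpa using this
    · intro t ht
      have e1 : (1 - t) * s + t * ε ≤ s := by nlinarith [ht.1, ht.2]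
      have e2 : ε ≤ (1 - t) * s + t * ε := by nlinarith [ht.1, ht.2]
      refine ⟨by linarith, fun i j hij => ?_, fun i => ?_⟩
      · have := hc.sep i j hij; linarith
      · have := hc.bdd i; linarith
  refine (shrink p r hp hεr).trans (Rel.trans ?_ (shrink q ρ hq hερ).symm)
  have := rel_of_path (fun t : ℝ => ((fun i => (1 - t) • p i + t • q i), ε)) (by fun_prop) ?_
  · simpa using this
  · intro t ht
    refine ⟨hε, fun i j hij => ?_, fun i => ?_⟩
    · have := hsep i j hij t ht
      calc _ < _ := this
        _ = _ := by congr 1; simp only [smul_sub]; abel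
    · have a := hp.bdd i
      have b := hq.bdd i
      have : ‖(1 - t) • p i + t • q i‖ ≤ (1 - t) * ‖p i‖ + t * ‖q i‖ := by
        refine (norm_add_le _ _).trans ?_
        rw [norm_smul, norm_smul, Real.norm_eq_abs, Real.norm_eq_abs, abs_of_nonneg ht.1,
          abs_of_nonneg (sub_nonneg.2 ht.2)]
      have a' : (1 - t) * ‖p i‖ ≤ (1 - t) * (3 / 4 - r) :=
        mul_le_mul_of_nonneg_left (by linarith) (sub_nonneg.2 ht.2)
      have b' : t * ‖q i‖ ≤ t * (3 / 4 - ρ) := mul_le_mul_of_nonneg_left (by linarith) ht.1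
      have a'' : (1 - t) * ε ≤ (1 - t) * r := mul_le_mul_of_nonneg_left hεr (sub_nonneg.2 ht.2)
      have b'' : t * ε ≤ t * ρ := mul_le_mul_of_nonneg_left hερ ht.1
      simp only
      rcases lt_or_ge t 1 with h1 | h1
      · have := mul_lt_mul_of_pos_left a (sub_pos.2 h1)
        have := mul_le_mul_of_nonneg_left b.le ht.1
        linarith
      · have : t = 1 := le_antisymm ht.2 h1
        subst this
        norm_num at *
        linarith

end Moves

end BHWaux

namespace BHWaux

set_option linter.unusedSectionVars false

section Sol

variable {V : Type*} [NormedAddCommGroup V] [NormedSpace ℝ V]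
variable {ι : Type*}

structure Sol (p : ι → V) (r : ℝ) (q : ι → V) (ρ : ℝ) (Φ : V ≃ V) (f : V → V) : Prop where
  ball : ∀ i v, ‖v‖ ≤ 1 → f (p i + r • v) = q i + ρ • f v
  off : ∀ z, (∀ i, r < ‖z - p i‖) → f z = Φ z
  maps : ∀ v, ‖v‖ ≤ 1 → ‖f v‖ ≤ 1

lemma Moves.maps {p q : ι → V} {r ρ : ℝ} {Φ : V ≃ V} {K : ℝ} (h : Moves p r q ρ Φ K)
    (v : V) (hv : ‖v‖ ≤ 1) : ‖Φ v‖ ≤ 1 := by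
  by_contra hc
  push Not at hc
  have := h.out (Φ v) (by linarith)
  have := Φ.injective this
  rw [this] at hc
  linarith

lemma Valid.uniq {p : ι → V} {r : ℝ} (h : Valid p r) {z : V} {i j : ι}
    (hi : ‖z - p i‖ ≤ r) (hj : ‖z - p j‖ ≤ r) : i = j := by
  by_contra hij
  have := h.sep i j hij
  have h2 : ‖p i - p j‖ ≤ ‖z - p j‖ + ‖z - p i‖ := by
    calc _ = ‖(z - p j) - (z - p i)‖ := by congr 1; abel
      _ ≤ _ := norm_sub_le _ _
  linarith

lemma Valid.coord {p : ι → V} {r : ℝ} (h : Valid p r) {z : V} {i : ι}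
    (hi : ‖z - p i‖ ≤ r) : ∃ v, ‖v‖ ≤ 1 ∧ z = p i + r • v := by
  have hr := h.pos
  refine ⟨r⁻¹ • (z - p i), ?_, ?_⟩
  · rw [norm_smul, Real.norm_eq_abs, abs_of_pos (by positivity)]
    rw [inv_mul_le_iff₀ hr]; linarith
  · rw [smul_smul, mul_inv_cancel₀ hr.ne', one_smul]; abel

lemma Valid.mem {p : ι → V} {r : ℝ} (h : Valid p r) {v : V} (hv : ‖v‖ ≤ 1) (i : ι) :
    ‖p i + r • v - p i‖ ≤ r := by
  have hr := h.pos
  rw [add_sub_cancel_left, norm_smul, Real.norm_eq_abs, abs_of_pos hr]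
  nlinarith

open Classical in
noncomputable def step (p : ι → V) (r : ℝ) (q : ι → V) (ρ : ℝ) (Φ : V ≃ V) (f : V → V) (z : V) : V :=
  if h : ∃ i, ‖z - p i‖ ≤ r then q h.choose + ρ • f (r⁻¹ • (z - p h.choose)) else Φ z

lemma step_ball {p q : ι → V} {r ρ : ℝ} (hp : Valid p r) (Φ : V ≃ V) (f : V → V) (i : ι) (v : V)
    (hv : ‖v‖ ≤ 1) : step p r q ρ Φ f (p i + r • v) = q i + ρ • f v := by
  have h : ∃ j, ‖p i + r • v - p j‖ ≤ r := ⟨i, hp.mem hv i⟩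
  have e : h.choose = i := hp.uniq h.choose_spec (hp.mem hv i)
  rw [step, dif_pos h, e, add_sub_cancel_left, smul_smul, inv_mul_cancel₀ hp.pos.ne', one_smul]

lemma step_off {p q : ι → V} {r ρ : ℝ} (Φ : V ≃ V) (f : V → V) (z : V)
    (hz : ∀ i, r < ‖z - p i‖) : step p r q ρ Φ f z = Φ z := by
  rw [step, dif_neg]
  push Not
  exact hz

lemma in_or_off {p : ι → V} {r : ℝ} (hp : Valid p r) (z : V) :
    (∃ i v, ‖v‖ ≤ 1 ∧ z = p i + r • v) ∨ ∀ i, r < ‖z - p i‖ := by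
  by_cases h : ∃ i, ‖z - p i‖ ≤ r
  · obtain ⟨i, hi⟩ := h
    obtain ⟨v, hv, e⟩ := hp.coord hi
    exact Or.inl ⟨i, v, hv, e⟩
  · push Not at h
    exact Or.inr h

lemma norm_img_le {q : ι → V} {ρ : ℝ} (hq : Valid q ρ) (i : ι) {w : V} (hw : ‖w‖ ≤ 1) :
    ‖q i + ρ • w‖ ≤ 1 := by
  have := hq.bdd i
  have h0 := hq.pos
  have h1 := norm_add_le (q i) (ρ • w)
  rw [norm_smul, Real.norm_eq_abs, abs_of_pos h0] at h1
  nlinarith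

lemma exists_sol [CompleteSpace V] {p q : ι → V} {r ρ : ℝ} {Φ : V ≃ V} {K : ℝ}
    (hp : Valid p r) (hq : Valid q ρ) (h : Moves p r q ρ Φ K) : ∃ f, Sol p r q ρ Φ f := by
  by_cases hι : Nonempty ι
  swap
  · have hι' : IsEmpty ι := not_nonempty_iff.1 hι
    exact ⟨Φ, fun i => isEmptyElim i, fun z _ => rfl, h.maps⟩
  obtain ⟨i0⟩ := hι
  have hρ0 := hq.pos
  have hρ1 : ρ < 1 := by linarith [hq.bdd i0, norm_nonneg (q i0)]
  let F : ℕ → V → V := fun n => (step p r q ρ Φ)^[n] id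
  have F0 : F 0 = id := rfl
  have Fs : ∀ n, F (n + 1) = step p r q ρ Φ (F n) := fun n =>
    Function.iterate_succ_apply' _ _ _
  have Fmaps : ∀ n v, ‖v‖ ≤ 1 → ‖F n v‖ ≤ 1 := by
    intro n
    induction n with
    | zero => intro v hv; simpa [F0] using hv
    | succ n ih =>
      intro v hv
      rw [Fs]
      rcases in_or_off hp v with ⟨i, w, hw, rfl⟩ | hoff
      · rw [step_ball hp Φ (F n) i w hw]
        exact norm_img_le hq i (ih w hw)
      · rw [step_off Φ _ v hoff]
        exact h.maps v hv
  have F1 : ∀ z, F 1 z = Φ z := by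
    intro z
    rw [Fs 0]
    rcases in_or_off hp z with ⟨i, w, hw, rfl⟩ | hoff
    · rw [step_ball hp Φ _ i w hw, F0, h.ball i w hw]; rfl
    · exact step_off Φ _ z hoff
  have Fd : ∀ n z, ‖F n z - F (n + 1) z‖ ≤ 2 * ρ ^ n := by
    intro n
    induction n with
    | zero =>
      intro z
      rw [F1, F0]
      rcases le_total ‖z‖ 1 with hz | hz
      · have := norm_sub_le z (Φ z)
        have := h.maps z hz
        simp only [id, pow_zero]
        linarith
      · rw [h.out z (by linarith)]; simp
    | succ n ih =>
      intro z
      rw [Fs (n + 1), Fs n]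
      rcases in_or_off hp z with ⟨i, w, hw, rfl⟩ | hoff
      · rw [step_ball hp Φ _ i w hw, step_ball hp Φ _ i w hw, add_sub_add_left_eq_sub, ← Fs n,
          ← smul_sub, norm_smul, Real.norm_eq_abs, abs_of_pos hρ0]
        have := ih w
        rw [pow_succ]
        nlinarith
      · rw [step_off Φ _ z hoff, step_off Φ _ z hoff, sub_self, norm_zero]; positivity
  have hlim : ∀ z, ∃ l, Tendsto (fun n => F n z) atTop (𝓝 l) := by
    intro z
    refine cauchySeq_tendsto_of_complete (cauchySeq_of_le_geometric ρ 2 hρ1 fun n => ?_)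
    rw [dist_eq_norm]; exact Fd n z
  choose f hf using hlim
  refine ⟨f, ?_, ?_, ?_⟩
  · intro i v hv
    have a1 := (hf (p i + r • v)).comp (tendsto_add_atTop_nat 1)
    have a2 : Tendsto (fun n => q i + ρ • F n v) atTop (𝓝 (q i + ρ • f v)) :=
      ((hf v).const_smul ρ).const_add (q i)
    refine tendsto_nhds_unique a1 (a2.congr fun n => ?_)
    simp only [Function.comp]
    rw [Fs, step_ball hp Φ _ i v hv]
  · intro z hz
    have a1 := (hf z).comp (tendsto_add_atTop_nat 1)
    refine tendsto_nhds_unique a1 (tendsto_const_nhds.congr fun n => ?_)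
    simp only [Function.comp]
    rw [Fs, step_off Φ _ z hz]
  · intro v hv
    exact le_of_tendsto (hf v).norm (Eventually.of_forall fun n => Fmaps n v hv)

lemma Sol.out {p q : ι → V} {r ρ : ℝ} {Φ : V ≃ V} {K : ℝ} {f : V → V}
    (hp : Valid p r) (h : Moves p r q ρ Φ K) (hf : Sol p r q ρ Φ f)
    (z : V) (hz : 3 / 4 ≤ ‖z‖) : f z = z := by
  rw [hf.off, h.out z hz]
  intro i
  have := hp.bdd i
  have := norm_sub_norm_le z (p i)
  linarith

lemma Sol.comp {p q : ι → V} {r ρ : ℝ} {Φ : V ≃ V} {K : ℝ} {f g : V → V}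
    (hp : Valid p r) (hq : Valid q ρ) (h : Moves p r q ρ Φ K) (hf : Sol p r q ρ Φ f)
    (hg : Sol q ρ p r Φ.symm g) (hρ1 : ρ < 1) (z : V) : f (g z) = z := by
  have hρ0 := hq.pos
  have key : ∀ n z, ‖f (g z) - z‖ ≤ 2 * ρ ^ n := by
    intro n
    induction n with
    | zero =>
      intro z
      rcases le_total ‖z‖ 1 with hz | hz
      · have := norm_sub_le (f (g z)) z
        have := hf.maps _ (hg.maps z hz)
        simp only [pow_zero]
        linarith
      · rw [hg.out hq h.symm z (by linarith), hf.out hp h z (by linarith)]; simp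
    | succ n ih =>
      intro z
      rcases in_or_off hq z with ⟨i, w, hw, rfl⟩ | hoff
      · rw [hg.ball i w hw, hf.ball i _ (hg.maps w hw), add_sub_add_left_eq_sub,
          ← smul_sub, norm_smul, Real.norm_eq_abs, abs_of_pos hρ0]
        have := ih w
        rw [pow_succ]
        nlinarith
      · rw [hg.off z hoff, hf.off, Equiv.apply_symm_apply, sub_self, norm_zero]
        · positivity
        · intro i
          by_contra hc
          push Not at hc
          obtain ⟨v, hv, e⟩ := hp.coord hc
          rw [Equiv.symm_apply_eq, h.ball i v hv] at e
          have := hoff i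
          rw [e] at this
          exact absurd (hq.mem hv i) (not_le.2 this)
  have hl : Tendsto (fun n : ℕ => 2 * ρ ^ n) atTop (𝓝 0) := by
    simpa using (tendsto_pow_atTop_nhds_zero_of_lt_one hρ0.le hρ1).const_mul 2
  have := ge_of_tendsto' hl (fun n => key n z)
  exact sub_eq_zero.1 (norm_le_zero_iff.1 this)

/-- The two points lie in a common ball. -/
def Same (p : ι → V) (r : ℝ) (x y : V) : Prop := ∃ i, ‖x - p i‖ ≤ r ∧ ‖y - p i‖ ≤ r

lemma Same.coord {p : ι → V} {r : ℝ} (hp : Valid p r) {x y : V} (h : Same p r x y) :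
    ∃ i v w, ‖v‖ ≤ 1 ∧ ‖w‖ ≤ 1 ∧ x = p i + r • v ∧ y = p i + r • w := by
  obtain ⟨i, hx, hy⟩ := h
  obtain ⟨v, hv, e⟩ := hp.coord hx
  obtain ⟨w, hw, e'⟩ := hp.coord hy
  exact ⟨i, v, w, hv, hw, e, e'⟩

lemma norm_scale {p : V} {r : ℝ} (hr : 0 < r) (v w : V) :
    ‖(p + r • v) - (p + r • w)‖ = r * ‖v - w‖ := by
  rw [add_sub_add_left_eq_sub, ← smul_sub, norm_smul, Real.norm_eq_abs, abs_of_pos hr]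

lemma core_far {p : ι → V} {r : ℝ} (hp : Valid p r) {i : ι} {v y : V}
    (hv : ‖v‖ ≤ 3 / 4) (hy : r < ‖y - p i‖) : r / 4 ≤ ‖(p i + r • v) - y‖ := by
  have hr := hp.pos
  have h1 : ‖y - p i‖ ≤ ‖(p i + r • v) - y‖ + ‖r • v‖ := by
    calc ‖y - p i‖ = ‖r • v - ((p i + r • v) - y)‖ := by congr 1; abel
      _ ≤ ‖r • v‖ + ‖(p i + r • v) - y‖ := norm_sub_le _ _
      _ = _ := add_comm _ _
  rw [norm_smul, Real.norm_eq_abs, abs_of_pos hr] at h1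
  nlinarith

/-- Lipschitz bound for points not in a common ball. -/
lemma Sol.lip {p q : ι → V} {r ρ : ℝ} {Φ : V ≃ V} {K : ℝ} {f : V → V}
    (hp : Valid p r) (hq : Valid q ρ) (h : Moves p r q ρ Φ K) (hf : Sol p r q ρ Φ f)
    {x y : V} (hxy : ¬ Same p r x y) : ‖f x - f y‖ ≤ (K + 16 * (ρ / r)) * ‖x - y‖ := by
  have hr := hp.pos
  have hρ := hq.pos
  have aux : ∀ x y, ¬ Same p r x y → ‖f x - Φ x‖ ≤ 8 * (ρ / r) * ‖x - y‖ := by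
    intro x y hxy
    rcases in_or_off hp x with ⟨i, v, hv, rfl⟩ | hoff
    · rw [hf.ball i v hv, h.ball i v hv, norm_scale hρ]
      rcases le_total (3 / 4) ‖v‖ with h3 | h3
      · rw [hf.out hp h v h3, sub_self, norm_zero, mul_zero]; positivity
      · have hy : r < ‖y - p i‖ := by
          by_contra hc
          exact hxy ⟨i, hp.mem hv i, not_lt.1 hc⟩
        have a1 := core_far hp h3 hy
        have a2 := norm_sub_le (f v) v
        have a3 := hf.maps v hv
        calc ρ * ‖f v - v‖ ≤ ρ * 2 := by gcongr; linarith
          _ = 8 * (ρ / r) * (r / 4) := by field_simp; norm_num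
          _ ≤ _ := by gcongr
    · rw [hf.off x hoff, sub_self, norm_zero]; positivity
  have a1 := aux x y hxy
  have a2 := aux y x (fun ⟨i, h1, h2⟩ => hxy ⟨i, h2, h1⟩)
  rw [norm_sub_rev y x] at a2
  have a3 := h.lip x y
  calc ‖f x - f y‖ = ‖(f x - Φ x) + (Φ x - Φ y) - (f y - Φ y)‖ := by congr 1; abel
    _ ≤ ‖(f x - Φ x) + (Φ x - Φ y)‖ + ‖f y - Φ y‖ := norm_sub_le _ _
    _ ≤ ‖f x - Φ x‖ + ‖Φ x - Φ y‖ + ‖f y - Φ y‖ := by gcongr; exact norm_add_le _ _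
    _ ≤ _ := by linarith

lemma Sol.same {p q : ι → V} {r ρ : ℝ} {Φ : V ≃ V} {f : V → V}
    (hp : Valid p r) (hq : Valid q ρ) (hf : Sol p r q ρ Φ f) {x y : V} (hxy : Same p r x y) :
    Same q ρ (f x) (f y) := by
  obtain ⟨i, v, w, hv, hw, rfl, rfl⟩ := hxy.coord hp
  refine ⟨i, ?_, ?_⟩
  · rw [hf.ball i v hv]; exact hq.mem (hf.maps v hv) i
  · rw [hf.ball i w hw]; exact hq.mem (hf.maps w hw) i

lemma Sol.continuous {p q : ι → V} {r ρ : ℝ} {Φ : V ≃ V} {K : ℝ} {f : V → V} (hK : 0 ≤ K)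
    (hρ1 : ρ < 1)
    (hp : Valid p r) (hq : Valid q ρ) (h : Moves p r q ρ Φ K) (hf : Sol p r q ρ Φ f) :
    Continuous f := by
  have hr := hp.pos
  have hρ := hq.pos
  set C := K + 16 * (ρ / r) with hC
  have hC0 : 0 ≤ C := by positivity
  set Λ := max 1 (ρ / r) with hΛ
  have hΛ1 : 1 ≤ Λ := le_max_left _ _
  have hΛ2 : ρ / r ≤ Λ := le_max_right _ _
  have key : ∀ n x y, ‖f x - f y‖ ≤ C * Λ ^ n * ‖x - y‖ + 2 * ρ ^ n := by
    intro n
    induction n with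
    | zero =>
      intro x y
      by_cases hs : Same p r x y
      · obtain ⟨i, v, w, hv, hw, rfl, rfl⟩ := hs.coord hp
        rw [hf.ball i v hv, hf.ball i w hw, norm_scale hρ]
        have := norm_sub_le (f v) (f w)
        have := hf.maps v hv
        have := hf.maps w hw
        have : 0 ≤ C * Λ ^ 0 * ‖p i + r • v - (p i + r • w)‖ := by positivity
        simp only [pow_zero, mul_one] at *
        nlinarith [norm_nonneg (f v - f w)]
      · have := hf.lip hp hq h hs
        simp only [pow_zero]
        linarith
    | succ n ih =>
      intro x y
      by_cases hs : Same p r x y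
      · obtain ⟨i, v, w, hv, hw, rfl, rfl⟩ := hs.coord hp
        rw [hf.ball i v hv, hf.ball i w hw, norm_scale hρ, norm_scale hr]
        calc ρ * ‖f v - f w‖ ≤ ρ * (C * Λ ^ n * ‖v - w‖ + 2 * ρ ^ n) := by gcongr; exact ih v w
          _ = C * (Λ ^ n * (ρ / r)) * (r * ‖v - w‖) + 2 * ρ ^ (n + 1) := by
            field_simp
            ring
          _ ≤ C * (Λ ^ n * Λ) * (r * ‖v - w‖) + 2 * ρ ^ (n + 1) := by gcongr
          _ = _ := by ring
      · have h1 := hf.lip hp hq h hs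
        have h2 : C * ‖x - y‖ ≤ C * Λ ^ (n + 1) * ‖x - y‖ := by
          have := one_le_pow₀ (n := n + 1) hΛ1
          gcongr
          nlinarith
        have : 0 ≤ 2 * ρ ^ (n + 1) := by positivity
        linarith
  rw [continuous_iff_continuousAt]
  intro x
  rw [ContinuousAt, tendsto_iff_norm_sub_tendsto_zero, Metric.tendsto_nhds]
  intro ε hε
  have hl : Tendsto (fun n : ℕ => 2 * ρ ^ n) atTop (𝓝 0) := by
    simpa using (tendsto_pow_atTop_nhds_zero_of_lt_one hρ.le hρ1).const_mul 2
  obtain ⟨n, hn⟩ := (hl.eventually (Iio_mem_nhds (half_pos hε))).exists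
  have hl2 : Tendsto (fun y => C * Λ ^ n * ‖y - x‖) (𝓝 x) (𝓝 0) := by
    have : Continuous (fun y => C * Λ ^ n * ‖y - x‖) := by fun_prop
    simpa using this.tendsto x
  filter_upwards [hl2.eventually (Iio_mem_nhds (half_pos hε))] with y hy
  simp only [dist_zero_right, norm_norm]
  have hy' : C * Λ ^ n * ‖y - x‖ < ε / 2 := hy
  have hn' : 2 * ρ ^ n < ε / 2 := hn
  linarith [key n y x]

/-- Weak quasisymmetry. -/
lemma Sol.wqs {p q : ι → V} {r ρ : ℝ} {Φ : V ≃ V} {K : ℝ} {f g : V → V} (hK : 0 ≤ K)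
    (hr1 : r < 1) (hρ1 : ρ < 1) (hrρ : r ≤ ρ)
    (hp : Valid p r) (hq : Valid q ρ) (h : Moves p r q ρ Φ K) (hf : Sol p r q ρ Φ f)
    (hg : Sol q ρ p r Φ.symm g) :
    ∃ H : ℝ, 1 ≤ H ∧ ∀ x y z, ‖x - y‖ ≤ ‖x - z‖ → ‖f x - f y‖ ≤ H * ‖f x - f z‖ := by
  have hr := hp.pos
  have hρ := hq.pos
  have hfg := hf.comp hp hq h hg hρ1
  have hgf := hg.comp hq hp h.symm hf hr1
  obtain ⟨C, hC1, hCu, hCl⟩ : ∃ C : ℝ, 1 ≤ C ∧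
      (∀ x y, ¬ Same p r x y → ‖f x - f y‖ ≤ C * ‖x - y‖) ∧
      (∀ x y, ¬ Same p r x y → ‖x - y‖ ≤ C * ‖f x - f y‖) := by
    have hb1 : 0 ≤ 16 * (ρ / r) := by positivity
    have hb2 : 0 ≤ 16 * (r / ρ) := by positivity
    refine ⟨1 + K + 16 * (ρ / r) + 16 * (r / ρ), by linarith, ?_, ?_⟩
    · intro x y hs
      refine (hf.lip hp hq h hs).trans ?_
      exact mul_le_mul_of_nonneg_right (by linarith) (norm_nonneg _)
    · intro x y hs
      have hs' : ¬ Same q ρ (f x) (f y) := by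
        intro hc
        have := hg.same hq hp hc
        rw [hgf, hgf] at this
        exact hs this
      have := hg.lip hq hp h.symm hs'
      rw [hgf, hgf] at this
      refine this.trans ?_
      exact mul_le_mul_of_nonneg_right (by linarith) (norm_nonneg _)
  have hC0 : 0 < C := by linarith
  -- smallness after finitely many rescalings
  have hsmall : ∀ d : ℝ, 0 < d → ∃ n : ℕ, 2 * r ^ n < d := by
    intro d hd
    have hl : Tendsto (fun n : ℕ => 2 * r ^ n) atTop (𝓝 0) := by
      simpa using (tendsto_pow_atTop_nhds_zero_of_lt_one hr.le hr1).const_mul 2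
    exact (hl.eventually (Iio_mem_nhds hd)).exists
  -- global lower bound
  have hlow : ∀ n x z, 2 * r ^ n < ‖x - z‖ → ‖x - z‖ ≤ C * ‖f x - f z‖ := by
    intro n
    induction n with
    | zero =>
      intro x z hxz
      refine hCl x z fun hs => ?_
      obtain ⟨i, v, w, hv, hw, rfl, rfl⟩ := hs.coord hp
      rw [norm_scale hr] at hxz
      have := norm_sub_le v w
      simp only [pow_zero] at hxz
      nlinarith [norm_nonneg (v - w)]
    | succ n ih =>
      intro x z hxz
      by_cases hs : Same p r x z
      · obtain ⟨i, v, w, hv, hw, rfl, rfl⟩ := hs.coord hp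
        rw [norm_scale hr] at hxz ⊢
        rw [hf.ball i v hv, hf.ball i w hw, norm_scale hρ]
        have h1 : 2 * r ^ n < ‖v - w‖ := by
          rw [pow_succ] at hxz
          by_contra hc
          push Not at hc
          nlinarith
        have h2 := ih v w h1
        calc r * ‖v - w‖ ≤ ρ * (C * ‖f v - f w‖) := by gcongr
          _ = _ := by ring
      · exact hCl x z hs
  set H := C * C * (1 + ρ / r) + 8 * C * (ρ / r) with hH
  have hlam : 0 < ρ / r := by positivity
  have hH1 : 1 ≤ H := by
    have : 1 ≤ C * C := by nlinarith
    have : 0 ≤ 8 * C * (ρ / r) := by positivity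
    nlinarith
  have hHa : C * C ≤ H := by
    have : 0 ≤ C * C * (ρ / r) := by positivity
    have : 0 ≤ 8 * C * (ρ / r) := by positivity
    rw [hH]; linarith
  have hHb : C * (ρ / r) * C ≤ H := by
    have : 0 ≤ C * C := by positivity
    have : 0 ≤ 8 * C * (ρ / r) := by positivity
    rw [hH]; linarith
  have hHc : 8 * C * (ρ / r) ≤ H := by
    have : 0 ≤ C * C * (1 + ρ / r) := by positivity
    rw [hH]; linarith
  have main : ∀ n x y z, 2 * r ^ n < ‖x - z‖ → ‖x - y‖ ≤ ‖x - z‖ →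
      ‖f x - f y‖ ≤ H * ‖f x - f z‖ := by
    -- the base configuration
    have base : ∀ n x y z, 2 * r ^ n < ‖x - z‖ → ‖x - y‖ ≤ ‖x - z‖ →
        ¬ (∃ i, ‖x - p i‖ ≤ r ∧ ‖y - p i‖ ≤ r ∧ ‖z - p i‖ ≤ r) →
        ‖f x - f y‖ ≤ H * ‖f x - f z‖ := by
      intro n x y z hxz hle hno
      have l1 := hlow n x z hxz
      by_cases hs : Same p r x y
      · obtain ⟨i, hxi, hyi⟩ := hs
        have hzi : r < ‖z - p i‖ := by
          by_contra hc
          exact hno ⟨i, hxi, hyi, not_lt.1 hc⟩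
        obtain ⟨v, hv, rfl⟩ := hp.coord hxi
        obtain ⟨w, hw, rfl⟩ := hp.coord hyi
        rcases le_total ‖v‖ (3 / 4) with h3 | h3
        · have a1 := core_far hp h3 hzi
          rw [hf.ball i w hw]
          have a2 : ‖f (p i + r • v) - (q i + ρ • f w)‖ ≤ 2 * ρ := by
            rw [hf.ball i v hv, norm_scale hρ]
            have := norm_sub_le (f v) (f w)
            have := hf.maps v hv
            have := hf.maps w hw
            nlinarith
          calc _ ≤ 2 * ρ := a2
            _ = 8 * (ρ / r) * (r / 4) := by field_simp; norm_num
            _ ≤ 8 * (ρ / r) * (C * ‖f (p i + r • v) - f z‖) := by gcongr; linarith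
            _ = 8 * C * (ρ / r) * ‖f (p i + r • v) - f z‖ := by ring
            _ ≤ _ := by gcongr
        · have hns : ¬ Same p r v w := by
            rintro ⟨j, hj, -⟩
            have := hp.bdd j
            have := norm_sub_norm_le v (p j)
            linarith
          have a1 := hCu v w hns
          calc ‖f (p i + r • v) - f (p i + r • w)‖ = ρ * ‖f v - f w‖ := by
                rw [hf.ball i w hw, hf.ball i v hv, norm_scale hρ]
            _ ≤ ρ * (C * ‖v - w‖) := by gcongr
            _ = C * (ρ / r) * ‖p i + r • v - (p i + r • w)‖ := by
                rw [norm_scale hr]; field_simp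
            _ ≤ C * (ρ / r) * (C * ‖f (p i + r • v) - f z‖) := by gcongr; exact hle.trans l1
            _ = C * (ρ / r) * C * ‖f (p i + r • v) - f z‖ := by ring
            _ ≤ _ := by gcongr
      · calc ‖f x - f y‖ ≤ C * ‖x - y‖ := hCu x y hs
          _ ≤ C * (C * ‖f x - f z‖) := by gcongr; exact hle.trans l1
          _ = C * C * ‖f x - f z‖ := by ring
          _ ≤ _ := by gcongr
    intro n
    induction n with
    | zero =>
      intro x y z hxz hle
      refine base 0 x y z hxz hle ?_
      rintro ⟨i, hx, -, hz⟩
      have : ‖x - z‖ ≤ ‖x - p i‖ + ‖z - p i‖ := by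
        calc _ = ‖(x - p i) - (z - p i)‖ := by congr 1; abel
          _ ≤ _ := norm_sub_le _ _
      simp only [pow_zero] at hxz
      linarith
    | succ n ih =>
      intro x y z hxz hle
      by_cases hs : ∃ i, ‖x - p i‖ ≤ r ∧ ‖y - p i‖ ≤ r ∧ ‖z - p i‖ ≤ r
      · obtain ⟨i, hx, hy, hz⟩ := hs
        obtain ⟨v, hv, rfl⟩ := hp.coord hx
        obtain ⟨w, hw, rfl⟩ := hp.coord hy
        obtain ⟨t, ht, rfl⟩ := hp.coord hz
        rw [norm_scale hr] at hxz
        rw [norm_scale hr, norm_scale hr] at hle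
        rw [hf.ball i v hv, hf.ball i w hw, hf.ball i t ht, norm_scale hρ, norm_scale hρ]
        have h1 : 2 * r ^ n < ‖v - t‖ := by
          rw [pow_succ] at hxz
          by_contra hc
          push Not at hc
          nlinarith
        have h2 := ih v w t h1 (le_of_mul_le_mul_left hle hr)
        calc ρ * ‖f v - f w‖ ≤ ρ * (H * ‖f v - f t‖) := by gcongr
          _ = _ := by ring
      · exact base (n + 1) x y z hxz hle hs
  refine ⟨H, hH1, ?_⟩
  intro x y z hle
  rcases eq_or_ne x z with rfl | hne
  · rw [sub_self, norm_zero] at hle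
    have : x = y := sub_eq_zero.1 (norm_le_zero_iff.1 hle)
    subst this
    simp
  · obtain ⟨n, hn⟩ := hsmall ‖x - z‖ (norm_pos_iff.2 (sub_ne_zero.2 hne))
    exact main n x y z hn hle

end Sol

lemma qc_of_wqs {X : Type*} [MetricSpace X] (f : X → X) (H : ℝ) (hH : 1 ≤ H)
    (h : ∀ x y z, dist x y ≤ dist x z → dist (f x) (f y) ≤ H * dist (f x) (f z)) :
    QuasiconformalOn Set.univ f := by
  refine ⟨H, hH, fun x _ => ?_⟩
  have hle : ∀ r, linDil univ f x r / linCon univ f x r ≤ ENNReal.ofReal H := by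
    intro r
    refine ENNReal.div_le_of_le_mul ?_
    unfold linDil linCon
    refine iSup₂_le fun y hy => ?_
    rw [ENNReal.mul_iInf_of_ne (by simp; linarith) ENNReal.ofReal_ne_top]
    refine le_iInf fun z => ?_
    rw [ENNReal.mul_iInf_of_ne (by simp; linarith) ENNReal.ofReal_ne_top]
    refine le_iInf fun hz => ?_
    rw [edist_dist, edist_dist, ← ENNReal.ofReal_mul (by linarith)]
    exact ENNReal.ofReal_le_ofReal (h x y z (hy.2.trans hz.2))
  unfold qcH
  refine (limsup_le_limsup (Eventually.of_forall hle)).trans ?_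
  simp

end BHWaux

namespace BHWaux

/-- Lower bound for the Hausdorff dimension of a coded set. -/
lemma le_dimH_range {X : Type*} [MetricSpace X] {b : ℕ} (hb : 1 < b) (u : (ℕ → Fin b) → X)
    {c s σ : ℝ} (hc : 0 < c) (hs : 0 < s) (hσ : 0 < σ) (hbs : 1 ≤ (b : ℝ) * s ^ σ)
    (hu : ∀ (k : ℕ) (ω ω' : ℕ → Fin b), (∀ j < k, ω j = ω' j) → ω k ≠ ω' k →
      c * s ^ k ≤ dist (u ω) (u ω')) :
    ENNReal.ofReal σ ≤ dimH (range u) := by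
  have hb0 : 0 < (b : ℝ) := by positivity
  have first : ∀ ω ω' : ℕ → Fin b, ω ≠ ω' → ∃ k, (∀ j < k, ω j = ω' j) ∧ ω k ≠ ω' k := by
    intro ω ω' hne
    have hex : ∃ k, ω k ≠ ω' k := Function.ne_iff.1 hne
    classical
    refine ⟨Nat.find hex, fun j hj => ?_, Nat.find_spec hex⟩
    have := Nat.find_min hex hj
    push Not at this
    exact this
  have hinj : Function.Injective u := by
    intro ω ω' he
    by_contra hne
    obtain ⟨k, h1, h2⟩ := first ω ω' hne
    have := hu k ω ω' h1 h2
    rw [he, dist_self] at this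
    have : 0 < c * s ^ k := by positivity
    linarith
  have : Nonempty (ℕ → Fin b) := ⟨fun _ => ⟨0, by omega⟩⟩
  set g : X → ℝ := fun x => Real.ofDigits (Function.invFun u x) with hg
  have hgu : ∀ ω, g (u ω) = Real.ofDigits ω := fun ω => by
    simp only [hg]; rw [Function.leftInverse_invFun hinj]
  have hhol : HolderOnWith (Real.toNNReal ((1 / c) ^ σ)) (Real.toNNReal σ) g (range u) := by
    rintro _ ⟨ω, rfl⟩ _ ⟨ω', rfl⟩
    rw [hgu, hgu]
    by_cases hne : ω = ω'
    · subst hne; simp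
    obtain ⟨k, h1, h2⟩ := first ω ω' hne
    have a1 := Real.abs_ofDigits_sub_ofDigits_le h1
    have a2 := hu k ω ω' h1 h2
    have a3 : ((b : ℝ) ^ k)⁻¹ ≤ (1 / c) ^ σ * dist (u ω) (u ω') ^ σ := by
      rw [← Real.mul_rpow (by positivity) dist_nonneg]
      calc ((b : ℝ) ^ k)⁻¹ = ((b : ℝ)⁻¹) ^ k := by rw [inv_pow]
        _ ≤ (s ^ σ) ^ k := by
          gcongr
          rw [inv_le_iff_one_le_mul₀ hb0]; linarith
        _ = (s ^ k) ^ σ := by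
          rw [← Real.rpow_natCast, ← Real.rpow_natCast, ← Real.rpow_mul hs.le,
            ← Real.rpow_mul hs.le, mul_comm]
        _ ≤ _ := by
          gcongr
          rw [one_div, le_inv_mul_iff₀ hc]
          exact a2
    rw [edist_dist, Real.dist_eq, edist_dist, Real.coe_toNNReal _ hσ.le,
      ENNReal.ofReal_rpow_of_nonneg dist_nonneg hσ.le]
    change _ ≤ ENNReal.ofReal ((1 / c) ^ σ) * _
    rw [← ENNReal.ofReal_mul (by positivity)]
    exact ENNReal.ofReal_le_ofReal (a1.trans a3)
  have hd := hhol.dimH_image_le (Real.toNNReal_pos.2 hσ)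
  have himg : Icc (0 : ℝ) 1 ⊆ g '' range u := by
    intro t ht
    obtain ⟨ω, -, hω⟩ := Real.ofDigits_SurjOn hb ht
    exact ⟨u ω, ⟨ω, rfl⟩, by rw [hgu, hω]⟩
  have h1 : (1 : ℝ≥0∞) ≤ dimH (g '' range u) := by
    have : dimH (Icc (0 : ℝ) 1) = 1 := by
      rw [Real.dimH_of_nonempty_interior]
      · simp
      · rw [interior_Icc]; exact ⟨1 / 2, by norm_num⟩
    rw [← this]
    exact dimH_mono himg
  have h2 := h1.trans hd
  rw [ENNReal.le_div_iff_mul_le (Or.inl (by simpa using hσ)) (Or.inl (by simp)), one_mul] at h2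
  exact h2

/-- The point with a given code. -/
noncomputable def code {b : ℕ} (x : Fin b → ℝ) (r : ℝ) (ω : ℕ → Fin b) : ℝ := ∑' k, r ^ k * x (ω k)

def shift {b : ℕ} (ω : ℕ → Fin b) : ℕ → Fin b := fun k => ω (k + 1)

lemma code_summable {b : ℕ} {x : Fin b → ℝ} {r : ℝ} (hr : 0 < r) (hr1 : r ≤ 1 / 4)
    (hx : ∀ i, |x i| ≤ 1 / 4) (ω : ℕ → Fin b) : Summable fun k => r ^ k * x (ω k) := by
  refine Summable.of_norm_bounded (g := fun k => r ^ k * (1 / 4))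
    ((summable_geometric_of_lt_one hr.le (by linarith)).mul_right _) fun k => ?_
  rw [norm_mul, Real.norm_eq_abs, Real.norm_eq_abs, abs_of_pos (by positivity)]
  gcongr
  exact hx _

lemma code_succ {b : ℕ} {x : Fin b → ℝ} {r : ℝ} (hr : 0 < r) (hr1 : r ≤ 1 / 4)
    (hx : ∀ i, |x i| ≤ 1 / 4) (ω : ℕ → Fin b) :
    code x r ω = x (ω 0) + r * code x r (shift ω) := by
  unfold code
  rw [(code_summable hr hr1 hx ω).tsum_eq_zero_add, ← tsum_mul_left]
  simp only [pow_zero, one_mul, shift]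
  congr 1
  refine tsum_congr fun k => ?_
  ring

lemma code_le {b : ℕ} {x : Fin b → ℝ} {r : ℝ} (hr : 0 < r) (hr1 : r ≤ 1 / 4)
    (hx : ∀ i, |x i| ≤ 1 / 4) (ω : ℕ → Fin b) : |code x r ω| ≤ 1 / 2 := by
  have hg := (hasSum_geometric_of_lt_one hr.le (by linarith)).mul_right (1 / 4)
  have := tsum_of_norm_bounded hg (f := fun k => r ^ k * x (ω k)) fun k => by
    rw [norm_mul, Real.norm_eq_abs, Real.norm_eq_abs, abs_of_pos (by positivity)]
    gcongr
    exact hx _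
  refine this.trans ?_
  have h1 : (1 - r)⁻¹ ≤ 2 := by
    rw [inv_le_comm₀ (by linarith) (by norm_num)]; linarith
  linarith

lemma code_sep {b : ℕ} {x : Fin b → ℝ} {r : ℝ} (hr : 0 < r) (hr1 : r ≤ 1 / 4)
    (hx : ∀ i, |x i| ≤ 1 / 4) (hsep : ∀ i j, i ≠ j → 3 * r ≤ |x i - x j|) :
    ∀ (k : ℕ) (ω ω' : ℕ → Fin b), (∀ j < k, ω j = ω' j) → ω k ≠ ω' k →
      r * r ^ k ≤ |code x r ω - code x r ω'| := by
  intro k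
  induction k with
  | zero =>
    intro ω ω' _ hne
    rw [code_succ hr hr1 hx ω, code_succ hr hr1 hx ω']
    have h1 := hsep _ _ hne
    have h2 := code_le hr hr1 hx (shift ω)
    have h3 := code_le hr hr1 hx (shift ω')
    have h4 : |x (ω 0) - x (ω' 0)| ≤ |x (ω 0) + r * code x r (shift ω) -
        (x (ω' 0) + r * code x r (shift ω'))| + r * |code x r (shift ω)| +
        r * |code x r (shift ω')| := by
      have e1 : r * |code x r (shift ω)| = |r * code x r (shift ω)| := by
        rw [abs_mul, abs_of_pos hr]
      have e2 : r * |code x r (shift ω')| = |r * code x r (shift ω')| := by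
        rw [abs_mul, abs_of_pos hr]
      rw [e1, e2]
      generalize r * code x r (shift ω) = A
      generalize r * code x r (shift ω') = B
      calc |x (ω 0) - x (ω' 0)| = |(x (ω 0) + A - (x (ω' 0) + B)) - A + B| := by
            congr 1; ring
        _ ≤ |(x (ω 0) + A - (x (ω' 0) + B)) - A| + |B| := abs_add_le _ _
        _ ≤ _ := by gcongr; exact abs_sub _ _
    simp only [pow_zero, mul_one]
    nlinarith
  | succ k ih =>
    intro ω ω' h hne
    have h0 : ω 0 = ω' 0 := h 0 (by omega)
    have h1 := ih (shift ω) (shift ω') (fun j hj => h (j + 1) (by omega)) hne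
    rw [code_succ hr hr1 hx ω, code_succ hr hr1 hx ω', h0, add_sub_add_left_eq_sub, ← mul_sub,
      abs_mul, abs_of_pos hr, pow_succ]
    nlinarith

lemma lex_aux {k l N M : ℕ} {r ρ t : ℝ} (hkl : k < l) (hr : 0 < r) (hρ : 0 < ρ)
    (ht : t ∈ Icc (0 : ℝ) 1)
    (h1 : (1 - t) * (r * ((k / N : ℕ) : ℝ) - r * ((l / N : ℕ) : ℝ)) +
      t * (ρ * ((k / M : ℕ) : ℝ) - ρ * ((l / M : ℕ) : ℝ)) = 0)
    (h2 : (1 - t) * (r * ((k % N : ℕ) : ℝ) - r * ((l % N : ℕ) : ℝ)) +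
      t * (ρ * ((k % M : ℕ) : ℝ) - ρ * ((l % M : ℕ) : ℝ)) = 0) : False := by
  have lex : ∀ N : ℕ, 0 ≤ ((l / N : ℕ) : ℝ) - ((k / N : ℕ) : ℝ) ∧
      (((l / N : ℕ) : ℝ) - ((k / N : ℕ) : ℝ) = 0 →
        0 < ((l % N : ℕ) : ℝ) - ((k % N : ℕ) : ℝ)) := by
    intro N
    refine ⟨sub_nonneg.2 (by exact_mod_cast Nat.div_le_div_right hkl.le), fun he => ?_⟩
    have he' : l / N = k / N := by exact_mod_cast sub_eq_zero.1 he
    have e1 := Nat.div_add_mod l N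
    have e2 := Nat.div_add_mod k N
    rw [he'] at e1
    have : k % N < l % N := by omega
    exact sub_pos.2 (by exact_mod_cast this)
  obtain ⟨A0, A1⟩ := lex N
  obtain ⟨B0, B1⟩ := lex M
  set A := ((l / N : ℕ) : ℝ) - ((k / N : ℕ) : ℝ) with hA
  set A' := ((l % N : ℕ) : ℝ) - ((k % N : ℕ) : ℝ) with hA'
  set B := ((l / M : ℕ) : ℝ) - ((k / M : ℕ) : ℝ) with hB
  set B' := ((l % M : ℕ) : ℝ) - ((k % M : ℕ) : ℝ) with hB'
  have g1 : ((1 - t) * r) * A + (t * ρ) * B = 0 := by rw [hA, hB]; linarith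
  have g2 : ((1 - t) * r) * A' + (t * ρ) * B' = 0 := by rw [hA', hB']; linarith
  have u0 : 0 ≤ (1 - t) * r := mul_nonneg (sub_nonneg.2 ht.2) hr.le
  have w0 : 0 ≤ t * ρ := mul_nonneg ht.1 hρ.le
  have m1 := mul_nonneg u0 A0
  have m2 := mul_nonneg w0 B0
  have z1 : ((1 - t) * r) * A = 0 := by linarith
  have z2 : (t * ρ) * B = 0 := by linarith
  rcases eq_or_lt_of_le ht.1 with rfl | ht0
  · simp only [sub_zero, one_mul, zero_mul, add_zero, mul_eq_zero, hr.ne', false_or] at z1 g2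
    linarith [A1 z1]
  have wp : 0 < t * ρ := mul_pos ht0 hρ
  have Bp := B1 ((mul_eq_zero.1 z2).resolve_left wp.ne')
  rcases eq_or_lt_of_le ht.2 with rfl | ht1
  · simp only [sub_self, one_mul, zero_mul, zero_add, mul_eq_zero, hρ.ne', false_or] at g2
    linarith
  have up : 0 < (1 - t) * r := mul_pos (sub_pos.2 ht1) hr
  have Ap := A1 ((mul_eq_zero.1 z1).resolve_left up.ne')
  have := mul_pos up Ap
  have := mul_pos wp Bp
  linarith

lemma params {α β : ℝ} (hα₁ : 1 ≤ α) (hα₂ : α < 2) (hβ0 : 0 < β) (hβ : β < 2 / α - 1) :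
    ∃ M N₁ N₂ : ℕ, 2 ≤ M ∧ M ≤ N₁ ∧ 1 < N₂ ∧ N₂ ≤ N₁ ∧ N₁ * N₂ ≤ M * M ∧
      1 ≤ (N₁ : ℝ) * (1 / (12 * (M : ℝ))) ^ α ∧ 1 ≤ (N₂ : ℝ) * (1 / (12 * (N₁ : ℝ))) ^ β := by
  have hα0 : 0 < α := by linarith
  have hβ1 : 0 < 1 - β := by
    have : 2 / α ≤ 2 := by rw [div_le_iff₀ hα0]; linarith
    linarith
  have hexp : 0 < 2 - α * (1 + β) := by
    have : (1 + β) < 2 / α := by linarith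
    rw [lt_div_iff₀ hα0] at this
    linarith
  have e1 := ((tendsto_rpow_atTop hβ1).comp tendsto_natCast_atTop_atTop).eventually_ge_atTop
    (2 * 12 ^ β)
  have e2 := ((tendsto_rpow_atTop hexp).comp tendsto_natCast_atTop_atTop).eventually_ge_atTop
    (2 * (24 ^ (1 + β) * 12 ^ (α * (1 + β))))
  obtain ⟨M, ⟨e1, e2⟩, hM⟩ := ((e1.and e2).and (eventually_ge_atTop 2)).exists
  simp only [Function.comp] at e1 e2
  have hM1 : (2 : ℝ) ≤ M := by exact_mod_cast hM
  have hM0 : (0 : ℝ) < M := by linarith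
  set A : ℝ := (12 * (M : ℝ)) ^ α with hA
  have hAM : 12 * (M : ℝ) ≤ A := by
    calc 12 * (M : ℝ) = (12 * (M : ℝ)) ^ (1 : ℝ) := (Real.rpow_one _).symm
      _ ≤ _ := Real.rpow_le_rpow_of_exponent_le (by linarith) hα₁
  set N₁ := ⌈A⌉₊ with hN₁
  have n1 : A ≤ N₁ := Nat.le_ceil A
  have n2 : (N₁ : ℝ) ≤ 2 * A := by
    have := Nat.ceil_lt_add_one (show 0 ≤ A by linarith)
    linarith
  have hMN : (M : ℝ) ≤ N₁ := by linarith
  have hN0 : (0 : ℝ) < N₁ := by linarith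
  set B : ℝ := (12 * (N₁ : ℝ)) ^ β with hB
  have hB1 : 1 < B := Real.one_lt_rpow (by linarith) hβ0
  set N₂ := ⌈B⌉₊ with hN₂
  have k1 : B ≤ N₂ := Nat.le_ceil B
  have k2 : (N₂ : ℝ) ≤ 2 * B := by
    have := Nat.ceil_lt_add_one (show 0 ≤ B by linarith)
    linarith
  refine ⟨M, N₁, N₂, hM, by exact_mod_cast hMN, ?_, ?_, ?_, ?_, ?_⟩
  · have : (1 : ℝ) < N₂ := by linarith
    exact_mod_cast this
  · have : (N₂ : ℝ) ≤ N₁ := by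
      calc (N₂ : ℝ) ≤ 2 * B := k2
        _ = (2 * 12 ^ β) * (N₁ : ℝ) ^ β := by
          rw [hB, Real.mul_rpow (by norm_num) hN0.le]; ring
        _ ≤ (N₁ : ℝ) ^ (1 - β) * (N₁ : ℝ) ^ β := by
          gcongr
          exact e1.trans (Real.rpow_le_rpow hM0.le hMN hβ1.le)
        _ = N₁ := by rw [← Real.rpow_add hN0]; simp
    exact_mod_cast this
  · have : (N₁ : ℝ) * N₂ ≤ M * M := by
      calc (N₁ : ℝ) * N₂ ≤ (12 * N₁) * (2 * B) := by gcongr; linarith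
        _ = 2 * (12 * (N₁ : ℝ)) ^ (1 + β) := by
          rw [Real.rpow_add (by positivity), Real.rpow_one]; ring
        _ ≤ 2 * (24 * A) ^ (1 + β) :=
          mul_le_mul_of_nonneg_left (Real.rpow_le_rpow (by positivity) (by linarith)
            (by linarith)) (by norm_num)
        _ = (2 * (24 ^ (1 + β) * 12 ^ (α * (1 + β)))) * (M : ℝ) ^ (α * (1 + β)) := by
          rw [hA, Real.mul_rpow (by norm_num) (by positivity), ← Real.rpow_mul (by positivity),
            Real.mul_rpow (by norm_num) hM0.le]; ring
        _ ≤ (M : ℝ) ^ (2 - α * (1 + β)) * (M : ℝ) ^ (α * (1 + β)) := by gcongr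
        _ = M * M := by
          rw [← Real.rpow_add hM0]
          simp [sq]
    exact_mod_cast this
  · rw [one_div, Real.inv_rpow (by positivity), ← div_eq_mul_inv, le_div_iff₀ (by positivity)]
    linarith
  · rw [one_div, Real.inv_rpow (by positivity), ← div_eq_mul_inv, le_div_iff₀ (by positivity)]
    linarith

section Grid

variable {V : Type*} [NormedAddCommGroup V] [InnerProductSpace ℝ V]

lemma coord_fst {e₁ e₂ : V} (h1 : ‖e₁‖ = 1) (h12 : inner ℝ e₁ e₂ = 0) (x y : ℝ) :
    inner ℝ e₁ (x • e₁ + y • e₂) = x := by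
  rw [inner_add_right, inner_smul_right, inner_smul_right, h12, real_inner_self_eq_norm_sq, h1]
  ring

lemma coord_snd {e₁ e₂ : V} (h2 : ‖e₂‖ = 1) (h12 : inner ℝ e₁ e₂ = 0) (x y : ℝ) :
    inner ℝ e₂ (x • e₁ + y • e₂) = y := by
  rw [inner_add_right, inner_smul_right, inner_smul_right, real_inner_comm, h12,
    real_inner_self_eq_norm_sq, h2]
  ring

lemma abs_le_norm_grid {e₁ e₂ : V} (h1 : ‖e₁‖ = 1) (h2 : ‖e₂‖ = 1) (h12 : inner ℝ e₁ e₂ = 0)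
    (x y : ℝ) : |x| ≤ ‖x • e₁ + y • e₂‖ ∧ |y| ≤ ‖x • e₁ + y • e₂‖ := by
  constructor
  · have := abs_real_inner_le_norm e₁ (x • e₁ + y • e₂)
    rwa [coord_fst h1 h12, h1, one_mul] at this
  · have := abs_real_inner_le_norm e₂ (x • e₁ + y • e₂)
    rwa [coord_snd h2 h12, h2, one_mul] at this

lemma norm_grid_le {e₁ e₂ : V} (h1 : ‖e₁‖ = 1) (h2 : ‖e₂‖ = 1) (x y : ℝ) :
    ‖x • e₁ + y • e₂‖ ≤ |x| + |y| := by
  refine (norm_add_le _ _).trans ?_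
  rw [norm_smul, norm_smul, h1, h2, mul_one, mul_one, Real.norm_eq_abs, Real.norm_eq_abs]

lemma abs_nat_sub_ge {a b : ℕ} (h : a ≠ b) : 1 ≤ |(a : ℝ) - b| := by
  have : (a : ℤ) - b ≠ 0 := by omega
  have := Int.one_le_abs this
  exact_mod_cast this

lemma valid_grid {ι : Type*} {e₁ e₂ : V} (h1 : ‖e₁‖ = 1) (h2 : ‖e₂‖ = 1)
    (h12 : inner ℝ e₁ e₂ = 0) {M : ℕ} (hM : 0 < M) (a b : ι → ℕ) (ha : ∀ i, a i < M)
    (hb : ∀ i, b i < M) (hinj : ∀ i j, a i = a j → b i = b j → i = j) {s : ℝ}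
    (hs : s = 1 / (12 * (M : ℝ))) :
    Valid (fun i => (3 * s * (a i : ℝ)) • e₁ + (3 * s * (b i : ℝ)) • e₂) s := by
  have hM' : (0 : ℝ) < M := by exact_mod_cast hM
  have hs0 : 0 < s := by rw [hs]; positivity
  have hsM : s * M = 1 / 12 := by rw [hs]; field_simp
  refine ⟨hs0, fun i j hij => ?_, fun i => ?_⟩
  · have e : (3 * s * (a i : ℝ)) • e₁ + (3 * s * (b i : ℝ)) • e₂ -
        ((3 * s * (a j : ℝ)) • e₁ + (3 * s * (b j : ℝ)) • e₂) =
        (3 * s * ((a i : ℝ) - a j)) • e₁ + (3 * s * ((b i : ℝ) - b j)) • e₂ := by module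
    rw [e]
    have key := abs_le_norm_grid h1 h2 h12 (3 * s * ((a i : ℝ) - a j)) (3 * s * ((b i : ℝ) - b j))
    rw [abs_mul (3 * s), abs_mul (3 * s), abs_of_pos (show 0 < 3 * s by linarith)] at key
    by_cases hab : a i = a j
    · have := abs_nat_sub_ge (fun hb => hij (hinj i j hab hb))
      nlinarith [key.2]
    · have := abs_nat_sub_ge hab
      nlinarith [key.1]
  · have := norm_grid_le h1 h2 (3 * s * (a i : ℝ)) (3 * s * (b i : ℝ))
    rw [abs_of_nonneg (by positivity), abs_of_nonneg (by positivity)] at this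
    have a1 : (a i : ℝ) + 1 ≤ M := by exact_mod_cast ha i
    have b1 : (b i : ℝ) + 1 ≤ M := by exact_mod_cast hb i
    nlinarith

end Grid

end BHWaux

namespace BHWaux

lemma exists_frame (L : Submodule ℝ (EuclideanSpace ℝ (Fin 2))) (hL : Module.finrank ℝ L = 1) :
    ∃ e₁ ∈ L, ∃ e₂ ∈ Lᗮ, ‖e₁‖ = 1 ∧ ‖e₂‖ = 1 ∧ inner ℝ e₁ e₂ = 0 := by
  have hn : Module.finrank ℝ Lᗮ = 1 := by
    have := L.finrank_add_finrank_orthogonal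
    rw [finrank_euclideanSpace_fin, hL] at this
    omega
  have unit : ∀ S : Submodule ℝ (EuclideanSpace ℝ (Fin 2)), Module.finrank ℝ S = 1 →
      ∃ e ∈ S, ‖e‖ = 1 := by
    intro S hS
    have : Nontrivial S := Module.nontrivial_of_finrank_pos (R := ℝ) (by omega)
    obtain ⟨e, he⟩ := exists_norm_eq S (zero_le_one)
    exact ⟨e, e.2, he⟩
  obtain ⟨e₁, h1, n1⟩ := unit L hL
  obtain ⟨e₂, h2, n2⟩ := unit _ hn
  exact ⟨e₁, h1, e₂, h2, n1, n2, (Submodule.mem_orthogonal L e₂).1 h2 e₁ h1⟩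

lemma sol_sep {V : Type*} [NormedAddCommGroup V] [NormedSpace ℝ V] {N₁ N₂ : ℕ}
    {p q : Fin N₁ × Fin N₂ → V} {r ρ η : ℝ} {Φ : V ≃ V} {f : V → V} (hf : Sol p r q ρ Φ f)
    (hρ : 0 < ρ)
    (hη : ∀ i j, i ≠ j → 2 * ρ + η ≤ ‖q i - q j‖)
    (Z : (ℕ → Fin N₁) → (ℕ → Fin N₂) → V) (hZ1 : ∀ ω τ, ‖Z ω τ‖ ≤ 1)
    (hZ : ∀ ω τ, Z ω τ = p (ω 0, τ 0) + r • Z (shift ω) (shift τ)) :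
    ∀ (k : ℕ) (ω ω' : ℕ → Fin N₁) (τ : ℕ → Fin N₂), (∀ j < k, ω j = ω' j) → ω k ≠ ω' k →
      η * ρ ^ k ≤ dist (f (Z ω τ)) (f (Z ω' τ)) := by
  intro k
  induction k with
  | zero =>
    intro ω ω' τ _ hne
    rw [hZ ω τ, hZ ω' τ, hf.ball _ _ (hZ1 _ _), hf.ball _ _ (hZ1 _ _), dist_eq_norm]
    have h1 := hη (ω 0, τ 0) (ω' 0, τ 0) (fun h => hne (congrArg Prod.fst h))
    have h2 := hf.maps _ (hZ1 (shift ω) (shift τ))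
    have h3 := hf.maps _ (hZ1 (shift ω') (shift τ))
    generalize f (Z (shift ω) (shift τ)) = A at *
    generalize f (Z (shift ω') (shift τ)) = B at *
    generalize q (ω 0, τ 0) = a at *
    generalize q (ω' 0, τ 0) = b at *
    have e : a - b = (a + ρ • A - (b + ρ • B)) - ρ • A + ρ • B := by module
    have h4 : ‖a - b‖ ≤ ‖a + ρ • A - (b + ρ • B)‖ + ‖ρ • A‖ + ‖ρ • B‖ := by
      rw [e]
      refine (norm_add_le _ _).trans ?_
      gcongr
      exact norm_sub_le _ _
    rw [norm_smul, norm_smul, Real.norm_eq_abs, abs_of_pos hρ] at h4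
    simp only [pow_zero, mul_one]
    nlinarith
  | succ k ih =>
    intro ω ω' τ h hne
    have h0 : ω 0 = ω' 0 := h 0 (by omega)
    have h1 := ih (shift ω) (shift ω') (shift τ) (fun j hj => h (j + 1) (by omega)) hne
    rw [hZ ω τ, hZ ω' τ, hf.ball _ _ (hZ1 _ _), hf.ball _ _ (hZ1 _ _), dist_eq_norm, h0,
      norm_scale hρ, pow_succ]
    rw [dist_eq_norm] at h1
    nlinarith

lemma grid_segment {V : Type*} [NormedAddCommGroup V] [InnerProductSpace ℝ V]
    {e₁ e₂ : V} (h1 : ‖e₁‖ = 1) (h2 : ‖e₂‖ = 1) (h12 : inner ℝ e₁ e₂ = 0)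
    {k l N M : ℕ} {r ρ t : ℝ} (hkl : k ≠ l) (hr : 0 < r) (hρ : 0 < ρ)
    (ht : t ∈ Icc (0 : ℝ) 1) :
    (1 - t) • (((r * ((k / N : ℕ) : ℝ)) • e₁ + (r * ((k % N : ℕ) : ℝ)) • e₂) -
        ((r * ((l / N : ℕ) : ℝ)) • e₁ + (r * ((l % N : ℕ) : ℝ)) • e₂)) +
      t • (((ρ * ((k / M : ℕ) : ℝ)) • e₁ + (ρ * ((k % M : ℕ) : ℝ)) • e₂) -
        ((ρ * ((l / M : ℕ) : ℝ)) • e₁ + (ρ * ((l % M : ℕ) : ℝ)) • e₂)) ≠ 0 := by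
  intro h
  have e : ((1 - t) * (r * ((k / N : ℕ) : ℝ) - r * ((l / N : ℕ) : ℝ)) +
      t * (ρ * ((k / M : ℕ) : ℝ) - ρ * ((l / M : ℕ) : ℝ))) • e₁ +
      ((1 - t) * (r * ((k % N : ℕ) : ℝ) - r * ((l % N : ℕ) : ℝ)) +
      t * (ρ * ((k % M : ℕ) : ℝ) - ρ * ((l % M : ℕ) : ℝ))) • e₂ = 0 := by
    rw [← h]; module
  have c1 := coord_fst h1 h12 ((1 - t) * (r * ((k / N : ℕ) : ℝ) - r * ((l / N : ℕ) : ℝ)) +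
      t * (ρ * ((k / M : ℕ) : ℝ) - ρ * ((l / M : ℕ) : ℝ)))
      ((1 - t) * (r * ((k % N : ℕ) : ℝ) - r * ((l % N : ℕ) : ℝ)) +
      t * (ρ * ((k % M : ℕ) : ℝ) - ρ * ((l % M : ℕ) : ℝ)))
  have c2 := coord_snd h2 h12 ((1 - t) * (r * ((k / N : ℕ) : ℝ) - r * ((l / N : ℕ) : ℝ)) +
      t * (ρ * ((k / M : ℕ) : ℝ) - ρ * ((l / M : ℕ) : ℝ)))
      ((1 - t) * (r * ((k % N : ℕ) : ℝ) - r * ((l % N : ℕ) : ℝ)) +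
      t * (ρ * ((k % M : ℕ) : ℝ) - ρ * ((l % M : ℕ) : ℝ)))
  rw [e, inner_zero_right] at c1 c2
  rcases lt_or_gt_of_ne hkl with h' | h'
  · exact lex_aux h' hr hρ ht c1.symm c2.symm
  · exact lex_aux (k := l) (l := k) (N := N) (M := M) h' hr hρ ht (by linarith) (by linarith)

end BHWaux

open BHWaux

/-- **Bishop–Hakobyan–Williams.** Fix `α ∈ [1,2)` and a one-dimensional linear subspace
`L ⊂ ℝ²`. For any `β < 2/α - 1` there are a set `E ⊆ L^⊥` and a quasiconformal
homeomorphism `f : ℝ² → ℝ²` with `dim f(a + L) ≥ α` for every `a ∈ E`, and `dim E > β`. -/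
theorem BHW_qc_line_dimension_increase
    (α : ℝ) (hα₁ : 1 ≤ α) (hα₂ : α < 2)
    (L : Submodule ℝ (EuclideanSpace ℝ (Fin 2))) (hL : Module.finrank ℝ L = 1)
    (β : ℝ) (hβ : β < 2 / α - 1) :
    ∃ (E : Set (EuclideanSpace ℝ (Fin 2)))
      (f : EuclideanSpace ℝ (Fin 2) ≃ₜ EuclideanSpace ℝ (Fin 2)),
      E ⊆ (Lᗮ : Set (EuclideanSpace ℝ (Fin 2))) ∧
      QuasiconformalOn Set.univ ⇑f ∧
      (∀ a ∈ E, α ≤ (dimH (⇑f '' {x | ∃ v ∈ L, x = a + v})).toReal) ∧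
      β < (dimH E).toReal := by
  have hα0 : 0 < α := by linarith
  have hpos : 0 < 2 / α - 1 := by
    have : 1 < 2 / α := by rw [lt_div_iff₀ hα0]; linarith
    linarith
  obtain ⟨β', hβ1, hβ2⟩ := exists_between (max_lt hβ hpos)
  have hβ0 : 0 < β' := (le_max_right β 0).trans_lt hβ1
  have hββ : β < β' := (le_max_left β 0).trans_lt hβ1
  obtain ⟨M, N₁, N₂, hM, hMN, hN2, hN21, hNM, hA, hB⟩ := params hα₁ hα₂ hβ0 hβ2
  obtain ⟨e₁, he₁, e₂, he₂, h1, h2, h12⟩ := exists_frame L hL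
  obtain ⟨ρ, hρ⟩ : ∃ ρ : ℝ, ρ = 1 / (12 * (M : ℝ)) := ⟨_, rfl⟩
  obtain ⟨r, hr⟩ : ∃ r : ℝ, r = 1 / (12 * (N₁ : ℝ)) := ⟨_, rfl⟩
  rw [← hρ] at hA
  rw [← hr] at hB
  have hM2 : (2 : ℝ) ≤ M := by exact_mod_cast hM
  have hMN' : (M : ℝ) ≤ N₁ := by exact_mod_cast hMN
  have hρ0 : 0 < ρ := by rw [hρ]; positivity
  have hr0 : 0 < r := by rw [hr]; have : (0 : ℝ) < N₁ := by linarith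
                         positivity
  have hrρ : r ≤ ρ := by
    rw [hr, hρ]
    apply one_div_le_one_div_of_le <;> linarith
  have hρ4 : ρ ≤ 1 / 4 := by
    rw [hρ]
    apply one_div_le_one_div_of_le <;> linarith
  have hr4 : r ≤ 1 / 4 := hrρ.trans hρ4
  have hrN : r * N₁ = 1 / 12 := by
    rw [hr]
    have : (0 : ℝ) < N₁ := by linarith
    field_simp
  -- the two families of balls
  let κ : Fin N₁ × Fin N₂ → ℕ := fun i => i.1 * N₂ + i.2
  have κdiv : ∀ i, κ i / N₂ = i.1 := fun i => by
    simp only [κ]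
    rw [mul_comm, Nat.mul_add_div (by omega), Nat.div_eq_of_lt i.2.2, add_zero]
  have κmod : ∀ i, κ i % N₂ = i.2 := fun i => by
    simp only [κ]
    rw [mul_comm, Nat.mul_add_mod, Nat.mod_eq_of_lt i.2.2]
  have κlt : ∀ i, κ i < M * M := fun i => by
    refine lt_of_lt_of_le ?_ hNM
    have a1 : (i.1 : ℕ) + 1 ≤ N₁ := i.1.2
    have a2 := i.2.2
    simp only [κ]
    nlinarith
  have κinj : ∀ i j, κ i = κ j → i = j := fun i j h => by
    refine Prod.ext (Fin.ext ?_) (Fin.ext ?_)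
    · rw [← κdiv, ← κdiv, h]
    · rw [← κmod, ← κmod, h]
  let p : Fin N₁ × Fin N₂ → EuclideanSpace ℝ (Fin 2) := fun i =>
    (3 * r * ((κ i / N₂ : ℕ) : ℝ)) • e₁ + (3 * r * ((κ i % N₂ : ℕ) : ℝ)) • e₂
  let q : Fin N₁ × Fin N₂ → EuclideanSpace ℝ (Fin 2) := fun i =>
    (3 * ρ * ((κ i / M : ℕ) : ℝ)) • e₁ + (3 * ρ * ((κ i % M : ℕ) : ℝ)) • e₂
  have dm : ∀ (N : ℕ) (i j : Fin N₁ × Fin N₂), κ i / N = κ j / N → κ i % N = κ j % N → i = j := by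
    intro N i j hd hm
    apply κinj
    rw [← Nat.div_add_mod (κ i) N, ← Nat.div_add_mod (κ j) N, hd, hm]
  have hp : Valid p r := valid_grid h1 h2 h12 (M := N₁) (by omega) (fun i => κ i / N₂)
    (fun i => κ i % N₂) (fun i => by rw [κdiv]; exact i.1.2)
    (fun i => by rw [κmod]; exact i.2.2.trans_le hN21) (dm N₂) hr
  have hq : Valid q ρ := valid_grid h1 h2 h12 (M := M) (by omega) (fun i => κ i / M)
    (fun i => κ i % M) (fun i => Nat.div_lt_of_lt_mul (κlt i))
    (fun i => Nat.mod_lt _ (by omega)) (dm M) hρ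
  have hrel : Rel p r q ρ := rel_of_segment hp hq fun i j hij t ht =>
    grid_segment h1 h2 h12 (fun h => hij (κinj i j h)) (by linarith) (by linarith) ht
  obtain ⟨Φ, K, hK, hΦ⟩ := hrel
  obtain ⟨f, hf⟩ := exists_sol hp hq hΦ
  obtain ⟨g, hg⟩ := exists_sol hq hp hΦ.symm
  have hρ1 : ρ < 1 := by linarith
  have hr1 : r < 1 := by linarith
  obtain ⟨H, hH, hw⟩ := Sol.wqs hK hr1 hρ1 hrρ hp hq hΦ hf hg
  let F : EuclideanSpace ℝ (Fin 2) ≃ₜ EuclideanSpace ℝ (Fin 2) :=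
    { toFun := f
      invFun := g
      left_inv := fun z => Sol.comp hq hp hΦ.symm hg hf hr1 z
      right_inv := fun z => Sol.comp hp hq hΦ hf hg hρ1 z
      continuous_toFun := Sol.continuous hK hρ1 hp hq hΦ hf
      continuous_invFun := Sol.continuous hK hr1 hq hp hΦ.symm hg }
  -- coded points
  let x₁ : Fin N₁ → ℝ := fun i => 3 * r * ((i : ℕ) : ℝ)
  let x₂ : Fin N₂ → ℝ := fun i => 3 * r * ((i : ℕ) : ℝ)
  have hx₁ : ∀ i, |x₁ i| ≤ 1 / 4 := fun i => by
    have : ((i : ℕ) : ℝ) ≤ N₁ := by exact_mod_cast i.2.le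
    simp only [x₁]
    rw [abs_of_nonneg (by positivity)]
    nlinarith
  have hx₂ : ∀ i, |x₂ i| ≤ 1 / 4 := fun i => by
    have : ((i : ℕ) : ℝ) ≤ N₁ := by exact_mod_cast i.2.le.trans hN21
    simp only [x₂]
    rw [abs_of_nonneg (by positivity)]
    nlinarith
  have hsep : ∀ i j, i ≠ j → 3 * r ≤ |x₂ i - x₂ j| := fun i j hij => by
    have := abs_nat_sub_ge (fun h => hij (Fin.ext h))
    simp only [x₂]
    rw [← mul_sub, abs_mul, abs_of_pos (by positivity)]
    nlinarith
  let Z : (ℕ → Fin N₁) → (ℕ → Fin N₂) → EuclideanSpace ℝ (Fin 2) := fun ω τ =>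
    code x₁ r ω • e₁ + code x₂ r τ • e₂
  have hZ1 : ∀ ω τ, ‖Z ω τ‖ ≤ 1 := fun ω τ => by
    have a1 := norm_grid_le h1 h2 (code x₁ r ω) (code x₂ r τ)
    have a2 := code_le hr0 hr4 hx₁ ω
    have a3 := code_le hr0 hr4 hx₂ τ
    exact a1.trans (by linarith)
  have hZ : ∀ ω τ, Z ω τ = p (ω 0, τ 0) + r • Z (shift ω) (shift τ) := fun ω τ => by
    simp only [Z, p, κdiv, κmod]
    rw [code_succ hr0 hr4 hx₁ ω, code_succ hr0 hr4 hx₂ τ]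
    simp only [x₁, x₂]
    module
  obtain ⟨η, hη, hη', -⟩ := exists_eta hq
  have hF := sol_sep hf hρ0 hη' Z hZ1 hZ
  refine ⟨range fun τ => code x₂ r τ • e₂, F, ?_, ?_, ?_, ?_⟩
  · rintro _ ⟨τ, rfl⟩
    exact Lᗮ.smul_mem _ he₂
  · exact qc_of_wqs f H hH fun x y z h => by
      simp only [dist_eq_norm] at h ⊢
      exact hw x y z h
  · rintro _ ⟨τ, rfl⟩
    have key := le_dimH_range (b := N₁) (by omega) (fun ω => f (Z ω τ)) hη hρ0 hα0 hA
      (fun k ω ω' h h' => hF k ω ω' τ h h')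
    rw [← ENNReal.ofReal_le_iff_le_toReal (Real.dimH_ne_top _)]
    refine key.trans (dimH_mono ?_)
    rintro _ ⟨ω, rfl⟩
    exact ⟨Z ω τ, ⟨code x₁ r ω • e₁, L.smul_mem _ he₁, add_comm _ _⟩, rfl⟩
  · refine hββ.trans_le ?_
    rw [← ENNReal.ofReal_le_iff_le_toReal (Real.dimH_ne_top _)]
    refine le_dimH_range hN2 _ hr0 hr0 hβ0 hB fun k τ τ' h h' => ?_
    rw [dist_eq_norm, ← sub_smul, norm_smul, h2, mul_one, Real.norm_eq_abs]
    exact code_sep hr0 hr4 hx₂ hsep k τ τ' h h'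
end

section
/- Let p > n ≥ 2, fix α ∈ [1, p/(p-(n-1))), and let L be a one-dimensional linear subspace of ℝⁿ. For any β < (n-1) − p(1 − 1/α) there exist a set E ⊆ L^⊥ with Hausdorff dimension strictly greater than β and a quasiconformal homeomorphism Φ : ℝⁿ → ℝⁿ such that: (i) Φ is differentiable almost everywhere and for every compact set K ⊆ ℝⁿ the integral over K of ‖DΦ(x)‖^p with respect to Lebesgue measure is finite (i.e. Φ ∈ W^{1,p}_loc(ℝⁿ;ℝⁿ)); and (ii) the Hausdorff dimension of Φ(a + L) is strictly greater than α for every a ∈ E. -/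
open Set Metric Filter MeasureTheory
open scoped ENNReal Topology NNReal

/-! ### Hausdorff dimension of coded Cantor sets -/

theorem le_dimH_of_coding {X : Type*} [MetricSpace X] {M : ℕ} (hM : 1 < M)
    (P : (ℕ → Fin M) → X) {c lam d : ℝ} (hc : 0 < c) (hl : 0 < lam) (hd : 0 < d)
    (hsep : ∀ (ω ω' : ℕ → Fin M) (k : ℕ), (∀ i < k, ω i = ω' i) → ω k ≠ ω' k →
      c * lam ^ k ≤ dist (P ω) (P ω'))
    (hMd : 1 ≤ M * lam ^ d) : ENNReal.ofReal d ≤ dimH (Set.range P) := by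
  classical
  have key : ∀ ω ω' : ℕ → Fin M, |Real.ofDigits ω - Real.ofDigits ω'| ≤
      (c ^ d)⁻¹ * dist (P ω) (P ω') ^ d := by
    intro ω ω'
    by_cases h : ω = ω'
    · subst h; simp [Real.zero_rpow hd.ne']
    have hex : ∃ k, ω k ≠ ω' k := by
      by_contra hcon; push Not at hcon; exact h (funext hcon)
    have h1 : ∀ i < Nat.find hex, ω i = ω' i := fun i hi => by
      have := Nat.find_min hex hi; push Not at this; exact this
    have h2 := hsep ω ω' _ h1 (Nat.find_spec hex)
    refine (Real.abs_ofDigits_sub_ofDigits_le h1).trans ?_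
    set k := Nat.find hex
    have hM0 : (0:ℝ) < M := by positivity
    have h3 : ((M:ℝ) ^ k)⁻¹ ≤ (lam ^ k) ^ d := by
      rw [← Real.rpow_natCast lam k, ← Real.rpow_mul hl.le, mul_comm, Real.rpow_mul hl.le,
        Real.rpow_natCast, inv_le_iff_one_le_mul₀ (by positivity), ← mul_pow]
      rw [mul_comm] at hMd
      exact one_le_pow₀ hMd
    refine h3.trans ?_
    rw [le_inv_mul_iff₀ (by positivity), ← Real.mul_rpow hc.le (by positivity)]
    exact Real.rpow_le_rpow (by positivity) h2 hd.le
  have hinj : Function.Injective P := by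
    intro ω ω' h
    by_contra hne
    have hex : ∃ k, ω k ≠ ω' k := by
      by_contra hcon; push Not at hcon; exact hne (funext hcon)
    have h1 : ∀ i < Nat.find hex, ω i = ω' i := fun i hi => by
      have := Nat.find_min hex hi; push Not at this; exact this
    have h2 := hsep ω ω' _ h1 (Nat.find_spec hex)
    rw [h, dist_self] at h2
    have : 0 < c * lam ^ (Nat.find hex) := by positivity
    linarith
  have : Nonempty (ℕ → Fin M) := ⟨fun _ => ⟨0, by omega⟩⟩
  set f : X → ℝ := fun x => Real.ofDigits (Function.invFun P x) with hf
  have hfP : ∀ ω, f (P ω) = Real.ofDigits ω := fun ω => by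
    simp only [hf]; rw [Function.leftInverse_invFun hinj ω]
  have hcd : 0 < (c ^ d)⁻¹ := by positivity
  have hH : HolderOnWith (Real.toNNReal ((c ^ d)⁻¹)) (Real.toNNReal d) f (Set.range P) := by
    rintro _ ⟨ω, rfl⟩ _ ⟨ω', rfl⟩
    rw [hfP, hfP, edist_dist, edist_dist, Real.dist_eq]
    refine (ENNReal.ofReal_le_ofReal (key ω ω')).trans ?_
    rw [ENNReal.ofReal_mul hcd.le, Real.coe_toNNReal d hd.le,
      ENNReal.ofReal_rpow_of_nonneg dist_nonneg hd.le]
    rfl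
  have h5 := hH.dimH_image_le (Real.toNNReal_pos.2 hd)
  have h6 : Set.Icc (0:ℝ) 1 ⊆ f '' Set.range P := by
    intro y hy
    obtain ⟨ω, -, rfl⟩ := Real.ofDigits_SurjOn hM hy
    exact ⟨P ω, ⟨ω, rfl⟩, hfP ω⟩
  have h7 : dimH (Set.Icc (0:ℝ) 1) = 1 := by
    rw [Real.dimH_of_nonempty_interior]
    · simp
    · rw [interior_Icc]; exact ⟨1/2, by norm_num, by norm_num⟩
  have h8 : (1:ℝ≥0∞) ≤ dimH (Set.range P) / (Real.toNNReal d) := by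
    rw [← h7]; exact (dimH_mono h6).trans h5
  have h9 := (ENNReal.le_div_iff_mul_le (Or.inl (by simpa using hd)) (Or.inl ENNReal.coe_ne_top)).1 h8
  rw [one_mul] at h9
  exact h9

/-! ### Separated sets -/

theorem exists_separated (V : Type*) [NormedAddCommGroup V] [NormedSpace ℝ V]
    [FiniteDimensional ℝ V] : ∃ c : ℝ, 0 < c ∧ ∀ m N : ℕ, ∀ ε : ℝ, 0 < ε → m * ε ≤ c →
      N ≤ m ^ (Module.finrank ℝ V) →
      ∃ t : Fin N → V, (∀ i, ‖t i‖ ≤ 1 / 4) ∧ ∀ i j, i ≠ j → ε ≤ ‖t i - t j‖ := by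
  let A : V ≃L[ℝ] (Fin (Module.finrank ℝ V) → ℝ) :=
    ContinuousLinearEquiv.ofFinrankEq (by simp)
  set K1 := ‖(A : V →L[ℝ] (Fin (Module.finrank ℝ V) → ℝ))‖ + 1 with hK1
  set K2 := ‖(A.symm : (Fin (Module.finrank ℝ V) → ℝ) →L[ℝ] V)‖ + 1 with hK2
  have hK1p : 0 < K1 := by positivity
  have hK2p : 0 < K2 := by positivity
  have hA : ∀ v, ‖A v‖ ≤ K1 * ‖v‖ := fun v =>
    ((A : V →L[ℝ] (Fin (Module.finrank ℝ V) → ℝ)).le_opNorm v).trans (by gcongr; simp [hK1])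
  have hAs : ∀ v, ‖A.symm v‖ ≤ K2 * ‖v‖ := fun v =>
    ((A.symm : _ →L[ℝ] V).le_opNorm v).trans (by gcongr; simp [hK1, hK2])
  refine ⟨1 / (4 * K1 * K2), by positivity, ?_⟩
  intro m N ε hε hm hN
  have hcard : Fintype.card (Fin N) ≤ Fintype.card (Fin (Module.finrank ℝ V) → Fin m) := by
    simpa using hN
  obtain ⟨e⟩ := Function.Embedding.nonempty_of_card_le hcard
  refine ⟨fun i => A.symm (fun k => K1 * ε * ((e i k : ℕ) : ℝ)), ?_, ?_⟩
  · intro i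
    refine (hAs _).trans ?_
    have : ‖fun k => K1 * ε * ((e i k : ℕ) : ℝ)‖ ≤ K1 * ε * m := by
      rw [pi_norm_le_iff_of_nonneg (by positivity)]
      intro k
      rw [Real.norm_of_nonneg (by positivity)]
      gcongr
      exact (e i k).2.le
    calc K2 * _ ≤ K2 * (K1 * ε * m) := by gcongr
      _ = K1 * K2 * (m * ε) := by ring
      _ ≤ K1 * K2 * (1 / (4 * K1 * K2)) := by gcongr
      _ = 1 / 4 := by field_simp
  · intro i j hij
    have hne : e i ≠ e j := fun h => hij (e.injective h)
    obtain ⟨k, hk⟩ := Function.ne_iff.1 hne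
    have h1 := hA (A.symm (fun k => K1 * ε * ((e i k : ℕ) : ℝ)) -
      A.symm (fun k => K1 * ε * ((e j k : ℕ) : ℝ)))
    rw [map_sub, A.apply_symm_apply, A.apply_symm_apply] at h1
    have h2 := (norm_le_pi_norm ((fun k => K1 * ε * ((e i k : ℕ) : ℝ)) -
      (fun k => K1 * ε * ((e j k : ℕ) : ℝ))) k).trans h1
    simp only [Pi.sub_apply] at h2
    rw [← mul_sub, norm_mul, Real.norm_of_nonneg (by positivity : 0 ≤ K1 * ε)] at h2
    have h3 : (1:ℝ) ≤ ‖((e i k : ℕ) : ℝ) - ((e j k : ℕ) : ℝ)‖ := by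
      have : ((e i k : ℕ) : ℤ) - ((e j k : ℕ) : ℤ) ≠ 0 := by
        intro h; apply hk; apply Fin.ext; omega
      have := Int.one_le_abs this
      rw [Real.norm_eq_abs]
      exact_mod_cast this
    have h4 : K1 * ε * 1 ≤ K1 * ε * ‖((e i k : ℕ) : ℝ) - ((e j k : ℕ) : ℝ)‖ := by gcongr
    have h5 := h4.trans h2
    rw [mul_one] at h5
    exact le_of_mul_le_mul_left h5 hK1p

/-! ### The base map -/

section BaseMap

variable {V : Type*} [NormedAddCommGroup V] [NormedSpace ℝ V] [FiniteDimensional ℝ V]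

theorem exists_homeo_of_small [Nontrivial V] {g : V → V}
    (hg : ∀ x y, ‖g x - g y‖ ≤ 1 / 2 * ‖x - y‖) :
    ∃ φ : V ≃ₜ V, (∀ x, φ x = x + g x) ∧ LipschitzWith 2 φ ∧ LipschitzWith 2 φ.symm := by
  have : CompleteSpace V := FiniteDimensional.complete ℝ V
  have hA : ApproximatesLinearOn (fun x => x + g x)
      ((ContinuousLinearEquiv.refl ℝ V : V ≃L[ℝ] V) : V →L[ℝ] V) univ (1 / 2 : ℝ≥0) := by
    intro x _ y _
    have : x + g x - (y + g y) - ((ContinuousLinearEquiv.refl ℝ V : V ≃L[ℝ] V) : V →L[ℝ] V) (x - y)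
      = g x - g y := by simp; abel
    rw [this]
    simpa using hg x y
  have hN : (1 / 2 : ℝ≥0) <
      ‖((ContinuousLinearEquiv.refl ℝ V : V ≃L[ℝ] V).symm : V →L[ℝ] V)‖₊⁻¹ := by
    have : ‖((ContinuousLinearEquiv.refl ℝ V : V ≃L[ℝ] V).symm : V →L[ℝ] V)‖₊ = 1 := by
      have h := ContinuousLinearMap.norm_id (𝕜 := ℝ) (E := V)
      apply NNReal.eq
      simpa using h
    rw [this, inv_one]
    exact NNReal.half_lt_self one_ne_zero
  have hφ : ∀ x, hA.toHomeomorph _ (Or.inr hN) x = x + g x := fun x => rfl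
  refine ⟨hA.toHomeomorph _ (Or.inr hN), hφ, ?_, ?_⟩
  · refine LipschitzWith.of_dist_le_mul fun x y => ?_
    rw [hφ, hφ, dist_eq_norm, dist_eq_norm]
    have h1 := hg x y
    have h2 : x + g x - (y + g y) = (x - y) + (g x - g y) := by abel
    rw [h2]
    have h3 := norm_add_le (x - y) (g x - g y)
    have h4 := norm_nonneg (x - y)
    simp only [NNReal.coe_ofNat]
    linarith
  · generalize hA.toHomeomorph _ (Or.inr hN) = φ at hφ
    refine LipschitzWith.of_dist_le_mul fun x y => ?_
    obtain ⟨x, rfl⟩ := φ.surjective x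
    obtain ⟨y, rfl⟩ := φ.surjective y
    rw [φ.symm_apply_apply, φ.symm_apply_apply, hφ, hφ, dist_eq_norm, dist_eq_norm]
    have h1 := hg x y
    have h2 : x - y = (x + g x - (y + g y)) - (g x - g y) := by abel
    have h3 := norm_sub_le (x + g x - (y + g y)) (g x - g y)
    rw [← h2] at h3
    simp only [NNReal.coe_ofNat]
    linarith

/-- Bilipschitz homeomorphisms that are the identity near and outside the unit sphere. -/
def GoodMap (φ : V ≃ₜ V) : Prop :=
  (∃ C : ℝ≥0, LipschitzWith C φ ∧ LipschitzWith C φ.symm) ∧ ∀ x, 7 / 8 ≤ ‖x‖ → φ x = x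

theorem GoodMap.refl : GoodMap (Homeomorph.refl V) :=
  ⟨⟨1, LipschitzWith.id, LipschitzWith.id⟩, fun _ _ => rfl⟩

theorem GoodMap.symm {φ : V ≃ₜ V} (h : GoodMap φ) : GoodMap φ.symm := by
  obtain ⟨⟨C, h1, h2⟩, h3⟩ := h
  refine ⟨⟨C, h2, h1⟩, fun x hx => ?_⟩
  rw [Homeomorph.symm_apply_eq, h3 x hx]

theorem GoodMap.trans {φ ψ : V ≃ₜ V} (h : GoodMap φ) (h' : GoodMap ψ) :
    GoodMap (φ.trans ψ) := by
  obtain ⟨⟨C, h1, h2⟩, h3⟩ := h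
  obtain ⟨⟨C', h1', h2'⟩, h3'⟩ := h'
  refine ⟨⟨C * C' , ?_, h2.comp h2'⟩, fun x hx => ?_⟩
  · rw [mul_comm]; exact h1'.comp h1
  · rw [Homeomorph.trans_apply, h3 x hx, h3' x hx]

/-- Cutoff function equal to `1` for `t ≤ R₁` and `0` for `t ≥ R₂`. -/
noncomputable def cutoff (R₁ R₂ : ℝ) (t : ℝ) : ℝ := max 0 (min 1 ((R₂ - t) / (R₂ - R₁)))

theorem cutoff_one {R₁ R₂ t : ℝ} (h : R₁ < R₂) (ht : t ≤ R₁) : cutoff R₁ R₂ t = 1 := by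
  have : 1 ≤ (R₂ - t) / (R₂ - R₁) := by rw [le_div_iff₀ (by linarith)]; linarith
  simp [cutoff, this]

theorem cutoff_zero {R₁ R₂ t : ℝ} (h : R₁ < R₂) (ht : R₂ ≤ t) : cutoff R₁ R₂ t = 0 := by
  have : (R₂ - t) / (R₂ - R₁) ≤ 0 := div_nonpos_of_nonpos_of_nonneg (by linarith) (by linarith)
  simp only [cutoff]
  rw [max_eq_left]
  exact (min_le_right _ _).trans this

theorem cutoff_abs_le {R₁ R₂ t : ℝ} : |cutoff R₁ R₂ t| ≤ 1 := by
  rw [abs_of_nonneg (le_max_left _ _)]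
  exact max_le zero_le_one (min_le_left _ _)

theorem cutoff_lip {R₁ R₂ : ℝ} (h : R₁ < R₂) (t u : ℝ) :
    |cutoff R₁ R₂ t - cutoff R₁ R₂ u| ≤ |t - u| / (R₂ - R₁) := by
  unfold cutoff
  refine (abs_max_sub_max_le_max _ _ _ _).trans ?_
  rw [sub_self, abs_zero]
  refine max_le (div_nonneg (abs_nonneg _) (by linarith)) ?_
  refine (abs_min_sub_min_le_max _ _ _ _).trans ?_
  rw [sub_self, abs_zero]
  refine max_le (div_nonneg (abs_nonneg _) (by linarith)) ?_
  rw [← sub_div, abs_div, abs_of_pos (by linarith : 0 < R₂ - R₁)]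
  have : R₂ - t - (R₂ - u) = -(t - u) := by ring
  rw [this, abs_neg]

theorem cutoff_smul_lip {R₁ R₂ : ℝ} (h : R₁ < R₂) (h0 : 0 ≤ R₂) (v w : V) :
    ‖cutoff R₁ R₂ ‖v‖ • v - cutoff R₁ R₂ ‖w‖ • w‖ ≤ (R₂ / (R₂ - R₁) + 1) * ‖v - w‖ := by
  have hpos : 0 < R₂ - R₁ := by linarith
  have main : ∀ v w : V, ‖v‖ ≤ R₂ →
      ‖cutoff R₁ R₂ ‖v‖ • v - cutoff R₁ R₂ ‖w‖ • w‖ ≤ (R₂ / (R₂ - R₁) + 1) * ‖v - w‖ := by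
    intro v w hv
    have h1 : cutoff R₁ R₂ ‖v‖ • v - cutoff R₁ R₂ ‖w‖ • w =
        (cutoff R₁ R₂ ‖v‖ - cutoff R₁ R₂ ‖w‖) • v + cutoff R₁ R₂ ‖w‖ • (v - w) := by
      rw [sub_smul, smul_sub]; abel
    rw [h1]
    refine (norm_add_le _ _).trans ?_
    rw [norm_smul, norm_smul, Real.norm_eq_abs, Real.norm_eq_abs]
    have h2 : |cutoff R₁ R₂ ‖v‖ - cutoff R₁ R₂ ‖w‖| ≤ ‖v - w‖ / (R₂ - R₁) :=
      (cutoff_lip h _ _).trans (by gcongr; exact abs_norm_sub_norm_le v w)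
    calc _ ≤ ‖v - w‖ / (R₂ - R₁) * R₂ + 1 * ‖v - w‖ := by
          gcongr
          exact cutoff_abs_le
      _ = _ := by ring
  by_cases hv : ‖v‖ ≤ R₂
  · exact main v w hv
  by_cases hw : ‖w‖ ≤ R₂
  · rw [norm_sub_rev, norm_sub_rev v w]; exact main w v hw
  push Not at hv hw
  rw [cutoff_zero h hv.le, cutoff_zero h hw.le]
  simp only [zero_smul, sub_self, norm_zero]
  positivity

variable {ι : Type*} [Fintype ι]

theorem exists_shrink_step [Nontrivial V] (a : ι → V) {s : ℝ} (hs : 0 < s) (hs' : s ≤ 1 / 8)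
    (ha : ∀ i, ‖a i‖ ≤ 1 / 2) (hsep : ∀ i j, i ≠ j → 3 * s ≤ ‖a i - a j‖)
    {q : ℝ} (hq1 : q ≤ 1) (hq : 1 - 1 / (10 * (Fintype.card ι + 1)) ≤ q) :
    ∃ φ : V ≃ₜ V, GoodMap φ ∧ ∀ i u, ‖u‖ ≤ 9 / 8 → φ (a i + s • u) = a i + (q * s) • u := by
  classical
  have hR : 9 / 8 * s < 3 / 2 * s := by linarith
  set χ : V → ℝ := fun v => cutoff (9 / 8 * s) (3 / 2 * s) ‖v‖ with hχ
  set g : V → V := fun x => (q - 1) • ∑ i, χ (x - a i) • (x - a i) with hg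
  have hlip : ∀ x y, ‖g x - g y‖ ≤ 1 / 2 * ‖x - y‖ := by
    intro x y
    simp only [hg]
    rw [← smul_sub, ← Finset.sum_sub_distrib, norm_smul]
    have h1 : ‖∑ i, (χ (x - a i) • (x - a i) - χ (y - a i) • (y - a i))‖ ≤
        ∑ _i : ι, 5 * ‖x - y‖ := by
      refine norm_sum_le_of_le _ fun i _ => ?_
      have := cutoff_smul_lip hR (by positivity) (x - a i) (y - a i)
      have e : (3 / 2 * s / (3 / 2 * s - 9 / 8 * s) + 1) = 5 := by field_simp; norm_num
      rw [e, sub_sub_sub_cancel_right] at this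
      exact this
    rw [Finset.sum_const, Finset.card_univ, nsmul_eq_mul] at h1
    have h2 : ‖q - 1‖ ≤ 1 / (10 * (Fintype.card ι + 1)) := by
      rw [Real.norm_eq_abs, abs_sub_comm, abs_of_nonneg (by linarith)]; linarith
    calc _ ≤ 1 / (10 * (Fintype.card ι + 1)) * (Fintype.card ι * (5 * ‖x - y‖)) := by gcongr
      _ = (Fintype.card ι / (Fintype.card ι + 1)) * (1 / 2 * ‖x - y‖) := by field_simp; ring
      _ ≤ 1 * (1 / 2 * ‖x - y‖) := by
        gcongr
        rw [div_le_one (by positivity)]; linarith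
      _ = _ := one_mul _
  obtain ⟨φ, hφ, h1, h2⟩ := exists_homeo_of_small hlip
  refine ⟨φ, ⟨⟨2, h1, h2⟩, fun x hx => ?_⟩, fun i u hu => ?_⟩
  · rw [hφ]
    simp only [hg]
    rw [Finset.sum_eq_zero, smul_zero, add_zero]
    intro i _
    have h3 := norm_sub_norm_le x (a i)
    have h4 := ha i
    simp only [hχ]
    rw [cutoff_zero hR (by linarith), zero_smul]
  · rw [hφ]
    simp only [hg]
    have hsu : ‖s • u‖ ≤ 9 / 8 * s := by
      rw [norm_smul, Real.norm_of_nonneg hs.le, mul_comm]; gcongr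
    rw [Finset.sum_eq_single i]
    · simp only [add_sub_cancel_left, hχ]
      rw [cutoff_one hR hsu, one_smul, smul_smul, add_assoc, ← add_smul]
      congr 2; ring
    · intro j _ hj
      have h3 := hsep i j (Ne.symm hj)
      have h4 : a i - a j = (a i + s • u - a j) - s • u := by abel
      have h5 := norm_sub_le (a i + s • u - a j) (s • u)
      rw [← h4] at h5
      simp only [hχ]
      rw [cutoff_zero hR (by linarith), zero_smul]
    · simp

theorem exists_shrink [Nontrivial V] (a : ι → V) {s : ℝ} (hs : 0 < s) (hs' : s ≤ 1 / 8)
    (ha : ∀ i, ‖a i‖ ≤ 1 / 2) (hsep : ∀ i j, i ≠ j → 3 * s ≤ ‖a i - a j‖)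
    {τ : ℝ} (hτ0 : 0 < τ) (hτ : τ ≤ 1) :
    ∃ φ : V ≃ₜ V, GoodMap φ ∧ ∀ i u, ‖u‖ ≤ 9 / 8 → φ (a i + s • u) = a i + (τ * s) • u := by
  set q : ℝ := 1 - 1 / (10 * (Fintype.card ι + 1)) with hq
  have hk : 1 / (10 * ((Fintype.card ι : ℝ) + 1)) ≤ 1 / 10 := by
    apply one_div_le_one_div_of_le (by norm_num)
    have : (0:ℝ) ≤ Fintype.card ι := by positivity
    linarith
  have hk0 : 0 < 1 / (10 * ((Fintype.card ι : ℝ) + 1)) := by positivity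
  have hq0 : 0 < q := by linarith
  have hq1 : q < 1 := by linarith
  have main : ∀ k : ℕ, ∀ τ : ℝ, q ^ k ≤ τ → τ ≤ 1 →
      ∃ φ : V ≃ₜ V, GoodMap φ ∧ ∀ i u, ‖u‖ ≤ 9 / 8 → φ (a i + s • u) = a i + (τ * s) • u := by
    intro k
    induction k with
    | zero =>
      intro τ h1 h2
      have : τ = 1 := by simp at h1; linarith
      exact ⟨Homeomorph.refl V, GoodMap.refl, fun i u _ => by simp [this]⟩
    | succ k ih =>
      intro τ h1 h2
      by_cases hτ : q ≤ τ
      · exact exists_shrink_step a hs hs' ha hsep h2 hτ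
      push Not at hτ
      have hτ0 : 0 < τ := lt_of_lt_of_le (by positivity) h1
      obtain ⟨φ, hφ, hφ'⟩ := ih (τ / q) (by rw [le_div_iff₀ hq0]; rwa [pow_succ] at h1)
        (by rw [div_le_one hq0]; exact hτ.le)
      obtain ⟨ψ, hψ, hψ'⟩ := exists_shrink_step a hs hs' ha hsep hq1.le le_rfl
      refine ⟨φ.trans ψ, hφ.trans hψ, fun i u hu => ?_⟩
      rw [Homeomorph.trans_apply, hφ' i u hu]
      have h3 : ‖(τ / q) • u‖ ≤ 9 / 8 := by
        rw [norm_smul, Real.norm_of_nonneg (by positivity)]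
        refine le_trans (mul_le_of_le_one_left (norm_nonneg _) ?_) hu
        rw [div_le_one hq0]; exact hτ.le
      have h4 := hψ' i _ h3
      rw [smul_smul, smul_smul] at h4
      rw [mul_comm (τ / q) s, h4]
      congr 2
      change q * s * (τ / q) = τ * s
      field_simp
  obtain ⟨k, hk⟩ := exists_pow_lt_of_lt_one hτ0 hq1
  exact main k τ hk.le hτ

/-- Two configurations are related if a good map translates small balls around the points of the
first one to small balls around the points of the second one. -/
def ConfigRel (c c' : ι → V) : Prop :=
  ∃ φ : V ≃ₜ V, GoodMap φ ∧ ∃ ε : ℝ, 0 < ε ∧ ∀ i v, ‖v‖ ≤ ε → φ (c i + v) = c' i + v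

theorem ConfigRel.refl (c : ι → V) : ConfigRel c c :=
  ⟨Homeomorph.refl V, GoodMap.refl, 1, one_pos, fun _ _ _ => rfl⟩

theorem ConfigRel.symm {c c' : ι → V} (h : ConfigRel c c') : ConfigRel c' c := by
  obtain ⟨φ, hφ, ε, hε, h⟩ := h
  refine ⟨φ.symm, hφ.symm, ε, hε, fun i v hv => ?_⟩
  rw [Homeomorph.symm_apply_eq, h i v hv]

theorem ConfigRel.trans {c c' c'' : ι → V} (h : ConfigRel c c') (h' : ConfigRel c' c'') :
    ConfigRel c c'' := by
  obtain ⟨φ, hφ, ε, hε, h⟩ := h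
  obtain ⟨φ', hφ', ε', hε', h'⟩ := h'
  refine ⟨φ.trans φ', hφ.trans hφ', min ε ε', lt_min hε hε', fun i v hv => ?_⟩
  rw [Homeomorph.trans_apply, h i v (hv.trans (min_le_left _ _)),
    h' i v (hv.trans (min_le_right _ _))]

theorem configRel_local [Nontrivial V] [DecidableEq ι] (c : ι → V) (i : ι) (x : V)
    (hx : ‖x‖ < 7 / 8) (hne : ∀ j, j ≠ i → c j ≠ x) :
    ∃ η : ℝ, 0 < η ∧ ∀ y, dist y x < η →
      ConfigRel (Function.update c i x) (Function.update c i y) := by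
  obtain ⟨R, hR0, hR1, hR2⟩ : ∃ R : ℝ, 0 < R ∧ ‖x‖ + R ≤ 7 / 8 ∧
      ∀ j, j ≠ i → 2 * R ≤ ‖c j - x‖ := by
    have h1 : ∀ j, ∀ᶠ R in 𝓝[>] (0:ℝ), j ≠ i → 2 * R ≤ ‖c j - x‖ := by
      intro j
      by_cases hj : j = i
      · simp [hj]
      have : 0 < ‖c j - x‖ := norm_pos_iff.2 (sub_ne_zero.2 (hne j hj))
      have h2 : ∀ᶠ R in 𝓝 (0:ℝ), R < ‖c j - x‖ / 2 := eventually_lt_nhds (by positivity)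
      filter_upwards [nhdsWithin_le_nhds h2] with R hR _
      linarith
    have h2 := eventually_all.2 h1
    have h3 : ∀ᶠ R in 𝓝 (0:ℝ), R < 7 / 8 - ‖x‖ := eventually_lt_nhds (by linarith)
    obtain ⟨R, ⟨hR1, hR2⟩, hR3⟩ := ((h2.and (nhdsWithin_le_nhds h3)).and
      (self_mem_nhdsWithin : Ioi (0:ℝ) ∈ 𝓝[>] (0:ℝ))).exists
    exact ⟨R, hR3, by linarith, hR1⟩
  refine ⟨R / 4, by positivity, fun y hy => ?_⟩
  have hRR : R / 2 < R := by linarith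
  set g : V → V := fun z => cutoff (R / 2) R ‖z - x‖ • (y - x) with hg
  have hlip : ∀ z w, ‖g z - g w‖ ≤ 1 / 2 * ‖z - w‖ := by
    intro z w
    simp only [hg]
    rw [← sub_smul, norm_smul, Real.norm_eq_abs, ← dist_eq_norm y x]
    have h1 := cutoff_lip hRR ‖z - x‖ ‖w - x‖
    have h2 : |‖z - x‖ - ‖w - x‖| ≤ ‖z - w‖ := by
      have := abs_norm_sub_norm_le (z - x) (w - x)
      rwa [sub_sub_sub_cancel_right] at this
    calc _ ≤ ‖z - w‖ / (R - R / 2) * (R / 4) := by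
          gcongr
          exact h1.trans (by gcongr)
      _ = 1 / 2 * ‖z - w‖ := by field_simp; norm_num
  obtain ⟨φ, hφ, h1, h2⟩ := exists_homeo_of_small hlip
  refine ⟨φ, ⟨⟨2, h1, h2⟩, fun z hz => ?_⟩, R / 2, by positivity, fun j v hv => ?_⟩
  · rw [hφ]
    simp only [hg]
    have h3 := norm_sub_norm_le z x
    rw [cutoff_zero hRR (by linarith), zero_smul, add_zero]
  · rw [hφ]
    simp only [hg]
    by_cases hj : j = i
    · subst hj
      simp only [Function.update_self, add_sub_cancel_left]
      rw [cutoff_one hRR hv, one_smul]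
      abel
    · simp only [Function.update_of_ne hj]
      have h3 := hR2 j hj
      have h4 : c j - x = (c j + v - x) - v := by abel
      have h5 := norm_sub_le (c j + v - x) v
      rw [← h4] at h5
      rw [cutoff_zero hRR (by linarith), zero_smul, add_zero]

theorem isPreconnected_ball_diff (hV : 1 < Module.rank ℝ V) {s : Set V} (hs : s.Finite) :
    IsPreconnected (ball (0 : V) (7 / 8) \ s) := by
  set e := OpenPartialHomeomorph.univBall (0 : V) (7 / 8) with he
  have h0 : (0:ℝ) < 7 / 8 := by norm_num
  have hsrc : e.source = univ := OpenPartialHomeomorph.univBall_source _ _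
  have htgt : e.target = ball 0 (7 / 8) := OpenPartialHomeomorph.univBall_target _ h0
  have hinj : Function.Injective e := by
    have := e.injOn
    rwa [hsrc, injOn_univ] at this
  have hfin : (e ⁻¹' s).Finite := hs.preimage hinj.injOn
  have hconn := (hfin.countable.isConnected_compl_of_one_lt_rank hV).isPreconnected
  have himg := hconn.image e (OpenPartialHomeomorph.continuous_univBall _ _).continuousOn
  convert himg using 1
  ext y
  constructor
  · rintro ⟨hy, hys⟩
    rw [← htgt] at hy
    refine ⟨e.symm y, ?_, e.right_inv hy⟩
    simp only [mem_compl_iff, mem_preimage]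
    rwa [e.right_inv hy]
  · rintro ⟨x, hx, rfl⟩
    refine ⟨?_, hx⟩
    rw [← htgt]
    exact e.map_source (by rw [hsrc]; trivial)

theorem configRel_move [Nontrivial V] [DecidableEq ι] (hV : 1 < Module.rank ℝ V)
    (c : ι → V) (i : ι) (x y : V) (hx : ‖x‖ < 7 / 8) (hxne : ∀ j, j ≠ i → c j ≠ x)
    (hy : ‖y‖ < 7 / 8) (hyne : ∀ j, j ≠ i → c j ≠ y) :
    ConfigRel (Function.update c i x) (Function.update c i y) := by
  set s : Set V := c '' {j | j ≠ i} with hs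
  have hfin : s.Finite := (Set.toFinite _).image _
  have hmem : ∀ z, z ∈ ball (0 : V) (7 / 8) \ s ↔ ‖z‖ < 7 / 8 ∧ ∀ j, j ≠ i → c j ≠ z := by
    intro z; simp [hs]
  refine (isPreconnected_ball_diff hV hfin).induction₂
    (fun x y => ConfigRel (Function.update c i x) (Function.update c i y)) ?_ ?_ ?_
    ((hmem x).2 ⟨hx, hxne⟩) ((hmem y).2 ⟨hy, hyne⟩)
  · intro z hz
    rw [hmem] at hz
    obtain ⟨η, hη, h⟩ := configRel_local c i z hz.1 hz.2
    exact nhdsWithin_le_nhds (Filter.mem_of_superset (ball_mem_nhds z hη) h)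
  · intro x y z _ _ _ h h'
    exact h.trans h'
  · intro x y _ _ h
    exact h.symm

theorem configRel_disjoint [Nontrivial V] (hV : 1 < Module.rank ℝ V)
    (c c' : ι → V) (hc : ∀ i, ‖c i‖ < 7 / 8) (hc' : ∀ i, ‖c' i‖ < 7 / 8)
    (hinj : Function.Injective c) (hinj' : Function.Injective c') (hd : ∀ i j, c i ≠ c' j) :
    ConfigRel c c' := by
  classical
  have main : ∀ S : Finset ι, ConfigRel c (S.piecewise c' c) := by
    intro S
    induction S using Finset.induction_on with
    | empty => simpa using ConfigRel.refl c
    | insert k S hk ih =>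
      refine ih.trans ?_
      have h1 := configRel_move hV (S.piecewise c' c) k (c k) (c' k) (hc k) ?_ (hc' k) ?_
      · rw [Finset.piecewise_insert]
        convert h1 using 1
        rw [eq_comm, Function.update_eq_self_iff]
        simp [hk]
      · intro j hj
        by_cases hjS : j ∈ S
        · simpa [hjS] using (hd k j).symm
        · simpa [hjS] using fun h => hj (hinj h)
      · intro j hj
        by_cases hjS : j ∈ S
        · simpa [hjS] using fun h => hj (hinj' h)
        · simpa [hjS] using hd j k
  simpa using main Finset.univ

theorem configRel_all [Nontrivial V] (hV : 1 < Module.rank ℝ V)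
    (c c' : ι → V) (hc : ∀ i, ‖c i‖ < 7 / 8) (hc' : ∀ i, ‖c' i‖ < 7 / 8)
    (hinj : Function.Injective c) (hinj' : Function.Injective c') :
    ConfigRel c c' := by
  have hinf : (ball (0 : V) (7 / 8) \ (range c ∪ range c')).Infinite := by
    refine Set.Infinite.sdiff ?_ ((finite_range c).union (finite_range c'))
    exact infinite_of_mem_nhds (0 : V) (ball_mem_nhds 0 (by norm_num))
  obtain ⟨t, ht, hcard⟩ := hinf.exists_subset_card_eq (Fintype.card ι)
  have e : ι ≃ t := Fintype.equivOfCardEq (by simp [hcard])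
  have hmem : ∀ i, (e i : V) ∈ ball (0 : V) (7 / 8) \ (range c ∪ range c') := fun i =>
    ht (e i).2
  have hdn : ∀ i, ‖(e i : V)‖ < 7 / 8 := fun i => by simpa using (hmem i).1
  have hdinj : Function.Injective (fun i => (e i : V)) :=
    Subtype.val_injective.comp e.injective
  refine (configRel_disjoint hV c (fun i => (e i : V)) hc hdn hinj hdinj ?_).trans
    (configRel_disjoint hV (fun i => (e i : V)) c' hdn hc' hdinj hinj' ?_)
  · intro i j h
    exact (hmem j).2 (Or.inl ⟨i, h⟩)
  · intro i j h
    exact (hmem i).2 (Or.inr ⟨j, h.symm⟩)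

theorem exists_base_map [Nontrivial V] (hV : 1 < Module.rank ℝ V)
    (a b : ι → V) {r ρ : ℝ} (hr : 0 < r) (hr' : r ≤ 1 / 8) (hρ : 0 < ρ) (hρ' : ρ ≤ 1 / 8)
    (ha : ∀ i, ‖a i‖ ≤ 1 / 2) (hasep : ∀ i j, i ≠ j → 3 * r ≤ ‖a i - a j‖)
    (hb : ∀ i, ‖b i‖ ≤ 1 / 2) (hbsep : ∀ i j, i ≠ j → 3 * ρ ≤ ‖b i - b j‖) :
    ∃ φ : V ≃ₜ V, GoodMap φ ∧ ∀ i u, ‖u‖ ≤ 9 / 8 → φ (a i + r • u) = b i + ρ • u := by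
  have hainj : Function.Injective a := by
    intro i j h
    by_contra hij
    have := hasep i j hij
    rw [h, sub_self, norm_zero] at this
    linarith
  have hbinj : Function.Injective b := by
    intro i j h
    by_contra hij
    have := hbsep i j hij
    rw [h, sub_self, norm_zero] at this
    linarith
  obtain ⟨φ₂, hφ₂, ε, hε, h₂⟩ := configRel_all hV a b (fun i => (ha i).trans_lt (by norm_num))
    (fun i => (hb i).trans_lt (by norm_num)) hainj hbinj
  set η : ℝ := min (ε / 2) (min r ρ) with hη
  have hη0 : 0 < η := lt_min (by positivity) (lt_min hr hρ)
  have hηr : η ≤ r := (min_le_right _ _).trans (min_le_left _ _)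
  have hηρ : η ≤ ρ := (min_le_right _ _).trans (min_le_right _ _)
  have hηε : η ≤ ε / 2 := min_le_left _ _
  obtain ⟨φ₁, hφ₁, h₁⟩ := exists_shrink a hr hr' ha hasep (τ := η / r) (by positivity)
    (by rw [div_le_one hr]; exact hηr)
  obtain ⟨φ₃, hφ₃, h₃⟩ := exists_shrink b hρ hρ' hb hbsep (τ := η / ρ) (by positivity)
    (by rw [div_le_one hρ]; exact hηρ)
  refine ⟨φ₁.trans (φ₂.trans φ₃.symm), hφ₁.trans (hφ₂.trans hφ₃.symm), fun i u hu => ?_⟩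
  rw [Homeomorph.trans_apply, Homeomorph.trans_apply, h₁ i u hu, Homeomorph.symm_apply_eq,
    h₃ i u hu, div_mul_cancel₀ _ hr.ne', div_mul_cancel₀ _ hρ.ne']
  apply h₂
  rw [norm_smul, Real.norm_of_nonneg hη0.le]
  calc η * ‖u‖ ≤ ε / 2 * (9 / 8) := by gcongr
    _ ≤ ε := by linarith

end BaseMap

/-! ### Self-similar extension of the base map -/

section SelfSimilar

variable {V : Type*} [NormedAddCommGroup V] [NormedSpace ℝ V] [FiniteDimensional ℝ V]
variable {ι : Type*} [Fintype ι]

/-- The data of two iterated function systems with a base map conjugating them at first level. -/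
structure CSys (V : Type*) [NormedAddCommGroup V] [NormedSpace ℝ V] (ι : Type*) where
  r : ℝ
  ρ : ℝ
  a : ι → V
  b : ι → V
  φ : V ≃ₜ V
  C : ℝ≥0
  hr : 0 < r
  hr' : r ≤ 1 / 8
  hρ : 0 < ρ
  hρ' : ρ ≤ 1 / 8
  ha : ∀ i, ‖a i‖ ≤ 1 / 2
  hb : ∀ i, ‖b i‖ ≤ 1 / 2
  hasep : ∀ i j, i ≠ j → 3 * r ≤ ‖a i - a j‖
  hbsep : ∀ i j, i ≠ j → 3 * ρ ≤ ‖b i - b j‖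
  lip : LipschitzWith C φ
  lip' : LipschitzWith C φ.symm
  hout : ∀ x, 7 / 8 ≤ ‖x‖ → φ x = x
  hin : ∀ i u, ‖u‖ ≤ 9 / 8 → φ (a i + r • u) = b i + ρ • u

/-- The system with the roles of source and target exchanged. -/
def CSys.swap (S : CSys V ι) : CSys V ι where
  r := S.ρ
  ρ := S.r
  a := S.b
  b := S.a
  φ := S.φ.symm
  C := S.C
  hr := S.hρ
  hr' := S.hρ'
  hρ := S.hr
  hρ' := S.hr'
  ha := S.hb
  hb := S.ha
  hasep := S.hbsep
  hbsep := S.hasep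
  lip := S.lip'
  lip' := S.lip
  hout := fun x hx => by rw [Homeomorph.symm_apply_eq, S.hout x hx]
  hin := fun i u hu => by rw [Homeomorph.symm_apply_eq, S.hin i u hu]

theorem CSys.dichotomy (S : CSys V ι) (x : V) :
    (∃ i u, ‖u‖ ≤ 9 / 8 ∧ x = S.a i + S.r • u) ∨ ∀ i, 9 / 8 * S.r < ‖x - S.a i‖ := by
  by_cases h : ∀ i, 9 / 8 * S.r < ‖x - S.a i‖
  · exact Or.inr h
  push Not at h
  obtain ⟨i, hi⟩ := h
  have hr := S.hr
  refine Or.inl ⟨i, S.r⁻¹ • (x - S.a i), ?_, ?_⟩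
  · rw [norm_smul, norm_inv, Real.norm_of_nonneg hr.le, inv_mul_le_iff₀ hr]
    linarith
  · rw [smul_inv_smul₀ hr.ne']; abel

theorem CSys.norm_φ_le (S : CSys V ι) {x : V} (hx : ‖x‖ ≤ 7 / 8) : ‖S.φ x‖ ≤ 7 / 8 := by
  by_contra h
  push Not at h
  have h1 := S.φ.injective (S.hout _ h.le)
  rw [h1] at h
  linarith

theorem CSys.norm_inner_le (S : CSys V ι) (i : ι) {u : V} (hu : ‖u‖ ≤ 9 / 8) :
    ‖S.a i + S.r • u‖ ≤ 3 / 4 := by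
  have h1 := norm_add_le (S.a i) (S.r • u)
  rw [norm_smul, Real.norm_of_nonneg S.hr.le] at h1
  have h2 : S.r * ‖u‖ ≤ 1 / 8 * (9 / 8) := mul_le_mul S.hr' hu (norm_nonneg _) (by norm_num)
  have h3 := S.ha i
  linarith

theorem CSys.sep_other (S : CSys V ι) {i j : ι} (hij : j ≠ i) {u : V} (hu : ‖u‖ ≤ 9 / 8) :
    15 / 8 * S.r ≤ ‖S.a i + S.r • u - S.a j‖ := by
  have h3 := S.hasep i j (Ne.symm hij)
  have h4 : S.a i - S.a j = (S.a i + S.r • u - S.a j) - S.r • u := by abel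
  have h5 := norm_sub_le (S.a i + S.r • u - S.a j) (S.r • u)
  rw [← h4, norm_smul, Real.norm_of_nonneg S.hr.le] at h5
  have h2 : S.r * ‖u‖ ≤ S.r * (9 / 8) := mul_le_mul_of_nonneg_left hu S.hr.le
  linarith

/-- One step of the recursive construction. -/
noncomputable def CSys.step (S : CSys V ι) (Ψ : V → V) (x : V) : V :=
  S.φ (x + ∑ i, S.r • (Ψ (S.r⁻¹ • (x - S.a i)) - S.r⁻¹ • (x - S.a i)))

/-- Invariant of the recursive construction. -/
structure CSys.Inv (Ψ : V → V) : Prop where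
  cont : Continuous Ψ
  out : ∀ x, 7 / 8 ≤ ‖x‖ → Ψ x = x
  inn : ∀ x, ‖x‖ ≤ 7 / 8 → ‖Ψ x‖ ≤ 7 / 8

theorem CSys.Inv.le {Ψ : V → V} (h : CSys.Inv Ψ) {t : ℝ} (ht : 7 / 8 ≤ t) {x : V}
    (hx : ‖x‖ ≤ t) : ‖Ψ x‖ ≤ t := by
  by_cases h1 : ‖x‖ ≤ 7 / 8
  · exact (h.inn x h1).trans ht
  · push Not at h1
    rw [h.out x h1.le]; exact hx

theorem CSys.term_zero (S : CSys V ι) {Ψ : V → V} (h : CSys.Inv Ψ) {x : V} {i : ι}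
    (hx : 7 / 8 * S.r ≤ ‖x - S.a i‖) :
    S.r • (Ψ (S.r⁻¹ • (x - S.a i)) - S.r⁻¹ • (x - S.a i)) = 0 := by
  rw [h.out, sub_self, smul_zero]
  rw [norm_smul, norm_inv, Real.norm_of_nonneg S.hr.le, le_inv_mul_iff₀ S.hr]
  linarith

theorem CSys.step_in (S : CSys V ι) {Ψ : V → V} (h : CSys.Inv Ψ) (i : ι) {u : V}
    (hu : ‖u‖ ≤ 9 / 8) : S.step Ψ (S.a i + S.r • u) = S.b i + S.ρ • Ψ u := by
  classical
  unfold CSys.step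
  rw [Finset.sum_eq_single i]
  · rw [add_sub_cancel_left, inv_smul_smul₀ S.hr.ne', smul_sub,
      ← S.hin i (Ψ u) (h.le (by norm_num) hu)]
    congr 1
    abel
  · intro j _ hj
    apply S.term_zero h
    have := S.sep_other hj hu
    have := S.hr
    linarith
  · simp

theorem CSys.step_out (S : CSys V ι) {Ψ : V → V} (h : CSys.Inv Ψ) {x : V}
    (hx : ∀ i, 7 / 8 * S.r ≤ ‖x - S.a i‖) : S.step Ψ x = S.φ x := by
  unfold CSys.step
  rw [Finset.sum_eq_zero, add_zero]
  intro i _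
  exact S.term_zero h (hx i)

theorem CSys.far_of_norm (S : CSys V ι) {x : V} (hx : 7 / 8 ≤ ‖x‖) (i : ι) :
    7 / 8 * S.r ≤ ‖x - S.a i‖ := by
  have h1 := norm_sub_norm_le x (S.a i)
  have h2 := S.ha i
  have h3 := S.hr'
  linarith

theorem CSys.step_inv (S : CSys V ι) {Ψ : V → V} (h : CSys.Inv Ψ) : CSys.Inv (S.step Ψ) := by
  refine ⟨?_, ?_, ?_⟩
  · unfold CSys.step
    have := h.cont
    have := S.φ.continuous
    fun_prop
  · intro x hx
    rw [S.step_out h (S.far_of_norm hx), S.hout x hx]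
  · intro x hx
    rcases S.dichotomy x with ⟨i, u, hu, rfl⟩ | h1
    · rw [S.step_in h i hu]
      exact (S.swap.norm_inner_le i (h.le (by norm_num) hu)).trans (by norm_num)
    · rw [S.step_out h]
      · exact S.norm_φ_le hx
      · intro i
        have := h1 i
        have := S.hr
        linarith

theorem CSys.step_dist (S : CSys V ι) {Ψ Ψ' : V → V} (h : CSys.Inv Ψ) (h' : CSys.Inv Ψ') {D : ℝ}
    (hD0 : 0 ≤ D) (hD : ∀ x, dist (Ψ x) (Ψ' x) ≤ D) (x : V) :
    dist (S.step Ψ x) (S.step Ψ' x) ≤ S.ρ * D := by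
  have hρ := S.hρ
  rcases S.dichotomy x with ⟨i, u, hu, rfl⟩ | h1
  · rw [S.step_in h i hu, S.step_in h' i hu, dist_add_left, dist_smul₀,
      Real.norm_of_nonneg hρ.le]
    gcongr
    exact hD u
  · have : ∀ i, 7 / 8 * S.r ≤ ‖x - S.a i‖ := by
      intro i
      have := h1 i
      have := S.hr
      linarith
    rw [S.step_out h this, S.step_out h' this, dist_self]
    positivity

/-- The properties of the limit map. -/
structure CSys.IsLim (S : CSys V ι) (Φ : V → V) : Prop where
  inv : CSys.Inv Φ
  inside : ∀ i u, ‖u‖ ≤ 9 / 8 → Φ (S.a i + S.r • u) = S.b i + S.ρ • Φ u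
  outside : ∀ x, (∀ i, 7 / 8 * S.r ≤ ‖x - S.a i‖) → Φ x = S.φ x

theorem CSys.exists_lim (S : CSys V ι) : ∃ Φ : V → V, S.IsLim Φ := by
  have hcomp : CompleteSpace V := FiniteDimensional.complete ℝ V
  set F : ℕ → V → V := fun k => S.step^[k] id with hF
  have hFs : ∀ k, F (k + 1) = S.step (F k) := fun k => Function.iterate_succ_apply' _ _ _
  have hinv : ∀ k, CSys.Inv (F k) := by
    intro k
    induction k with
    | zero => exact ⟨continuous_id, fun _ _ => rfl, fun _ h => h⟩
    | succ k ih => rw [hFs]; exact S.step_inv ih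
  have hρ := S.hρ
  have hρ1 : S.ρ < 1 := by have := S.hρ'; linarith
  have hdist : ∀ k x, dist (F k x) (F (k + 1) x) ≤ 2 * S.ρ ^ k := by
    intro k
    induction k with
    | zero =>
      intro x
      simp only [pow_zero, mul_one]
      by_cases hx : ‖x‖ ≤ 7 / 8
      · have h1 := (hinv 0).inn x hx
        have h2 := (hinv 1).inn x hx
        have h3 := dist_le_norm_add_norm (F 0 x) (F (0 + 1) x)
        simp only [zero_add] at h3 ⊢
        linarith
      · push Not at hx
        rw [(hinv 0).out x hx.le, (hinv (0 + 1)).out x hx.le, dist_self]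
        norm_num
    | succ k ih =>
      intro x
      have := S.step_dist (hinv k) (hinv (k + 1)) (by positivity) ih x
      rw [hFs k, hFs (k + 1), ← hFs k]
      rw [← hFs k] at this
      refine this.trans (le_of_eq ?_)
      ring
  have hcauchy : ∀ x, CauchySeq (fun k => F k x) := fun x =>
    cauchySeq_of_le_geometric S.ρ 2 hρ1 (fun k => hdist k x)
  choose Φ hΦ using fun x => cauchySeq_tendsto_of_complete (hcauchy x)
  have hunif : TendstoUniformly F Φ atTop := by
    rw [Metric.tendstoUniformly_iff]
    intro ε hε
    have h1 : Tendsto (fun k : ℕ => 2 * S.ρ ^ k / (1 - S.ρ)) atTop (𝓝 (2 * 0 / (1 - S.ρ))) :=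
      ((tendsto_pow_atTop_nhds_zero_of_lt_one hρ.le hρ1).const_mul 2).div_const _
    rw [mul_zero, zero_div] at h1
    filter_upwards [h1.eventually (gt_mem_nhds hε)] with k hk x
    rw [dist_comm]
    exact (dist_le_of_le_geometric_of_tendsto S.ρ 2 hρ1 (fun k => hdist k x) (hΦ x) k).trans_lt hk
  have hΦ' : ∀ x, Tendsto (fun k => F (k + 1) x) atTop (𝓝 (Φ x)) := fun x =>
    (hΦ x).comp (tendsto_add_atTop_nat 1)
  refine ⟨Φ, ⟨?_, ?_, ?_⟩, ?_, ?_⟩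
  · exact hunif.continuous (Frequently.of_forall fun k => (hinv k).cont)
  · intro x hx
    refine tendsto_nhds_unique (hΦ x) ?_
    simp_rw [fun k => (hinv k).out x hx]
    exact tendsto_const_nhds
  · intro x hx
    exact le_of_tendsto (hΦ x).norm (Eventually.of_forall fun k => (hinv k).inn x hx)
  · intro i u hu
    refine tendsto_nhds_unique (hΦ' _) ?_
    simp_rw [hFs, fun k => S.step_in (hinv k) i hu]
    exact ((hΦ u).const_smul S.ρ).const_add _
  · intro x hx
    refine tendsto_nhds_unique (hΦ' _) ?_
    simp_rw [hFs, fun k => S.step_out (hinv k) hx]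
    exact tendsto_const_nhds

theorem CSys.IsLim.left_inv {S : CSys V ι} {Φ Φ' : V → V} (h : S.IsLim Φ) (h' : S.swap.IsLim Φ')
    (x : V) : Φ' (Φ x) = x := by
  have hr1 : S.r < 1 := by have := S.hr'; linarith
  have hr := S.hr
  have main : ∀ k : ℕ, ∀ x, dist (Φ' (Φ x)) x ≤ 2 * S.r ^ k := by
    intro k
    induction k with
    | zero =>
      intro x
      simp only [pow_zero, mul_one]
      by_cases hx : ‖x‖ ≤ 7 / 8
      · have h1 := h'.inv.inn _ (h.inv.inn x hx)
        have h3 := dist_le_norm_add_norm (Φ' (Φ x)) x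
        linarith
      · push Not at hx
        rw [h.inv.out x hx.le, h'.inv.out x hx.le, dist_self]
        norm_num
    | succ k ih =>
      intro x
      rcases S.dichotomy x with ⟨i, u, hu, rfl⟩ | h1
      · rw [h.inside i u hu]
        have := h'.inside i (Φ u) (h.inv.le (by norm_num) hu)
        change Φ' (S.b i + S.ρ • Φ u) = S.a i + S.r • Φ' (Φ u) at this
        rw [this, dist_add_left, dist_smul₀, Real.norm_of_nonneg hr.le]
        calc _ ≤ S.r * (2 * S.r ^ k) := by gcongr; exact ih u
          _ = _ := by ring
      · rw [h.outside x (fun i => by have := h1 i; linarith), h'.outside]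
        · change dist (S.φ.symm (S.φ x)) x ≤ _
          rw [S.φ.symm_apply_apply, dist_self]
          positivity
        · intro i
          rcases S.swap.dichotomy (S.φ x) with ⟨j, u, hu, hx⟩ | h2
          · exfalso
            change S.φ x = S.b j + S.ρ • u at hx
            rw [← S.hin j u hu] at hx
            have := S.φ.injective hx
            have h3 := h1 j
            rw [this, add_sub_cancel_left, norm_smul, Real.norm_of_nonneg hr.le] at h3
            have : S.r * ‖u‖ ≤ S.r * (9 / 8) := by gcongr
            linarith
          · have := h2 i
            have := S.swap.hr
            linarith
  have hlim : Tendsto (fun k : ℕ => 2 * S.r ^ k) atTop (𝓝 (2 * 0)) :=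
    (tendsto_pow_atTop_nhds_zero_of_lt_one hr.le hr1).const_mul 2
  rw [mul_zero] at hlim
  have := ge_of_tendsto hlim (Eventually.of_forall fun k => main k x)
  exact dist_le_zero.1 this

theorem CSys.exists_homeo (S : CSys V ι) : ∃ Φ : V ≃ₜ V, S.IsLim Φ := by
  obtain ⟨Φ, h⟩ := S.exists_lim
  obtain ⟨Φ', h'⟩ := S.swap.exists_lim
  exact ⟨{ toFun := Φ
           invFun := Φ'
           left_inv := h.left_inv h'
           right_inv := fun x => CSys.IsLim.left_inv (S := S.swap) h' h x
           continuous_toFun := h.inv.cont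
           continuous_invFun := h'.inv.cont }, h⟩

/-- The level sets of the source iterated function system. -/
def CSys.U (S : CSys V ι) : ℕ → Set V
  | 0 => closedBall 0 1
  | k + 1 => ⋃ i, (fun u => S.a i + S.r • u) '' S.U k

theorem CSys.mem_U_succ (S : CSys V ι) {k : ℕ} {x : V} :
    x ∈ S.U (k + 1) ↔ ∃ i, ∃ u ∈ S.U k, S.a i + S.r • u = x := by
  simp [CSys.U]

theorem CSys.U_norm (S : CSys V ι) : ∀ {k : ℕ} {x : V}, x ∈ S.U k → ‖x‖ ≤ 1 := by
  intro k
  induction k with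
  | zero => intro x hx; simpa [CSys.U] using hx
  | succ k ih =>
    intro x hx
    obtain ⟨i, u, hu, rfl⟩ := S.mem_U_succ.1 hx
    exact (S.norm_inner_le i ((ih hu).trans (by norm_num))).trans (by norm_num)

theorem CSys.U_succ_norm (S : CSys V ι) {k : ℕ} {x : V} (hx : x ∈ S.U (k + 1)) : ‖x‖ ≤ 3 / 4 := by
  obtain ⟨i, u, hu, rfl⟩ := S.mem_U_succ.1 hx
  exact S.norm_inner_le i ((S.U_norm hu).trans (by norm_num))

theorem CSys.U_anti (S : CSys V ι) : ∀ k : ℕ, S.U (k + 1) ⊆ S.U k := by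
  intro k
  induction k with
  | zero =>
    intro x hx
    have := S.U_succ_norm hx
    simp only [CSys.U, mem_closedBall, dist_zero_right]
    linarith
  | succ k ih =>
    intro x hx
    obtain ⟨i, u, hu, rfl⟩ := S.mem_U_succ.1 hx
    exact S.mem_U_succ.2 ⟨i, u, ih hu, rfl⟩

theorem CSys.U_compact (S : CSys V ι) : ∀ k : ℕ, IsCompact (S.U k) := by
  intro k
  induction k with
  | zero =>
    have : ProperSpace V := FiniteDimensional.proper ℝ V
    exact isCompact_closedBall 0 1
  | succ k ih =>
    exact isCompact_iUnion fun i => ih.image (by fun_prop)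

/-- A point near `a i + r u` with `‖u‖ ≤ 1` is of the form `a i + r v` with `v` near `u`. -/
theorem CSys.near (S : CSys V ι) (i : ι) {u y : V} {t : ℝ} (ht : t ≤ 1 / 8) (hu : ‖u‖ ≤ 1)
    (hy : dist y (S.a i + S.r • u) ≤ t * S.r) :
    ∃ v, y = S.a i + S.r • v ∧ ‖v‖ ≤ 9 / 8 ∧ dist y (S.a i + S.r • u) = S.r * dist v u := by
  have hr := S.hr
  set v := S.r⁻¹ • (y - S.a i) with hv
  have hyv : y = S.a i + S.r • v := by rw [hv, smul_inv_smul₀ hr.ne']; abel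
  have hd : dist y (S.a i + S.r • u) = S.r * dist v u := by
    rw [hyv, dist_add_left, dist_smul₀, Real.norm_of_nonneg hr.le]
  refine ⟨v, hyv, ?_, hd⟩
  rw [hd, mul_comm] at hy
  have h1 := le_of_mul_le_mul_right hy hr
  have h2 := norm_sub_norm_le v u
  rw [← dist_eq_norm] at h2
  linarith

variable {S : CSys V ι} {Φ : V ≃ₜ V}

/-- Local bilipschitz behaviour of `Φ` off the next level set. -/
theorem CSys.IsLim.loc (h : S.IsLim Φ) : ∀ (k : ℕ) (x : V), x ∉ S.U (k + 1) →
    (k = 0 ∨ x ∈ S.U k) → ∃ ε : ℝ, 0 < ε ∧ ∀ y, dist y x < ε →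
      dist (Φ y) (Φ x) ≤ (S.C + 1) * (S.ρ / S.r) ^ k * dist y x ∧
      (S.ρ / S.r) ^ k * dist y x ≤ (S.C + 1) * dist (Φ y) (Φ x) := by
  have hr := S.hr
  have hρ := S.hρ
  intro k
  induction k with
  | zero =>
    intro x hx _
    have hopen : ∀ i, 7 / 8 * S.r < ‖x - S.a i‖ := by
      intro i
      by_contra hcon
      push Not at hcon
      apply hx
      refine S.mem_U_succ.2 ⟨i, S.r⁻¹ • (x - S.a i), ?_, by rw [smul_inv_smul₀ hr.ne']; abel⟩
      simp only [CSys.U, mem_closedBall, dist_zero_right]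
      rw [norm_smul, norm_inv, Real.norm_of_nonneg hr.le, inv_mul_le_iff₀ hr]
      linarith
    have hev : ∀ᶠ y in 𝓝 x, ∀ i, 7 / 8 * S.r < ‖y - S.a i‖ := by
      refine eventually_all.2 fun i => ?_
      have hc : Continuous fun y : V => ‖y - S.a i‖ := by fun_prop
      exact hc.continuousAt.eventually (lt_mem_nhds (hopen i))
    obtain ⟨ε, hε, hball⟩ := Metric.eventually_nhds_iff.1 hev
    refine ⟨ε, hε, fun y hy => ?_⟩
    rw [h.outside x (fun i => (hopen i).le), h.outside y (fun i => (hball hy i).le)]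
    simp only [pow_zero, mul_one, one_mul]
    have h1 := S.lip.dist_le_mul y x
    have h2 := S.lip'.dist_le_mul (S.φ y) (S.φ x)
    rw [S.φ.symm_apply_apply, S.φ.symm_apply_apply] at h2
    have h3 : 0 ≤ dist y x := dist_nonneg
    have h4 : 0 ≤ dist (S.φ y) (S.φ x) := dist_nonneg
    constructor <;> linarith
  | succ k ih =>
    intro x hx hx'
    have hx' : x ∈ S.U (k + 1) := by simpa using hx'
    obtain ⟨i, u, hu, rfl⟩ := S.mem_U_succ.1 hx'
    have hu' : u ∉ S.U (k + 1) := fun hcon => hx (S.mem_U_succ.2 ⟨i, u, hcon, rfl⟩)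
    obtain ⟨ε, hε, hball⟩ := ih u hu' (Or.inr hu)
    have hu1 := S.U_norm hu
    refine ⟨min ε (1 / 8) * S.r, by positivity, fun y hy => ?_⟩
    obtain ⟨v, rfl, hv, hd⟩ := S.near i (min_le_right ε (1 / 8)) hu1 hy.le
    have hvu : dist v u < ε := by
      rw [hd, mul_comm] at hy
      exact (lt_of_mul_lt_mul_right hy hr.le).trans_le (min_le_left _ _)
    obtain ⟨h1, h2⟩ := hball v hvu
    rw [h.inside i v hv, h.inside i u (hu1.trans (by norm_num)), hd, dist_add_left, dist_smul₀,
      Real.norm_of_nonneg hρ.le]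
    have e : (S.ρ / S.r) ^ (k + 1) * S.r = S.ρ * (S.ρ / S.r) ^ k := by
      rw [pow_succ]; field_simp
    constructor
    · calc S.ρ * dist (Φ v) (Φ u) ≤ S.ρ * ((S.C + 1) * (S.ρ / S.r) ^ k * dist v u) := by gcongr
        _ = (S.C + 1) * (S.ρ * (S.ρ / S.r) ^ k) * dist v u := by ring
        _ = _ := by rw [← e]; ring
    · calc (S.ρ / S.r) ^ (k + 1) * (S.r * dist v u)
          = ((S.ρ / S.r) ^ (k + 1) * S.r) * dist v u := by ring
        _ = S.ρ * ((S.ρ / S.r) ^ k * dist v u) := by rw [e]; ring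
        _ ≤ S.ρ * ((S.C + 1) * dist (Φ v) (Φ u)) := by gcongr
        _ = _ := by ring

theorem CSys.exists_level (S : CSys V ι) {x : V} (hx : x ∉ ⋂ k, S.U k) :
    ∃ k, x ∉ S.U (k + 1) ∧ (k = 0 ∨ x ∈ S.U k) := by
  classical
  simp only [mem_iInter, not_forall] at hx
  rcases hk : Nat.find hx with _ | k
  · refine ⟨0, fun hcon => ?_, Or.inl rfl⟩
    have := Nat.find_spec hx
    rw [hk] at this
    exact this (S.U_anti 0 hcon)
  · refine ⟨k, ?_, Or.inr ?_⟩
    · have := Nat.find_spec hx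
      rwa [hk] at this
    · have := Nat.find_min hx (m := k) (by omega)
      push Not at this
      exact this

theorem CSys.IsLim.upper (h : S.IsLim Φ) : ∀ (k : ℕ) (x y : V), x ∈ S.U k →
    dist y x ≤ 1 / 8 * S.r ^ k → dist (Φ y) (Φ x) ≤ 9 / 4 * S.ρ ^ k := by
  have hr := S.hr
  have hρ := S.hρ
  intro k
  induction k with
  | zero =>
    intro x y hx hy
    simp only [pow_zero, mul_one] at hy ⊢
    have hx1 := S.U_norm hx
    have h2 := norm_sub_norm_le y x
    rw [← dist_eq_norm] at h2
    have h3 : ‖Φ x‖ ≤ 9 / 8 := h.inv.le (by norm_num) (by linarith)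
    have h4 : ‖Φ y‖ ≤ 9 / 8 := h.inv.le (by norm_num) (by linarith)
    have := dist_le_norm_add_norm (Φ y) (Φ x)
    linarith
  | succ k ih =>
    intro x y hx hy
    obtain ⟨i, u, hu, rfl⟩ := S.mem_U_succ.1 hx
    have hu1 := S.U_norm hu
    have hrk : S.r ^ k ≤ 1 := pow_le_one₀ hr.le (S.hr'.trans (by norm_num))
    have hy' : dist y (S.a i + S.r • u) ≤ (1 / 8 * S.r ^ k) * S.r := by
      rw [pow_succ] at hy; linarith
    obtain ⟨v, rfl, hv, hd⟩ := S.near i (by linarith) hu1 hy'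
    rw [h.inside i v hv, h.inside i u (hu1.trans (by norm_num)), dist_add_left, dist_smul₀,
      Real.norm_of_nonneg hρ.le]
    rw [hd, mul_comm] at hy'
    have := ih u v hu (le_of_mul_le_mul_right hy' hr)
    calc _ ≤ S.ρ * (9 / 4 * S.ρ ^ k) := by gcongr
      _ = _ := by ring

theorem CSys.IsLim.lower (h : S.IsLim Φ) : ∀ (k : ℕ) (x y : V), x ∈ S.U (k + 1) →
    2 * S.r ^ k ≤ dist y x → 1 / 8 * S.ρ ^ k ≤ dist (Φ y) (Φ x) := by
  have hr := S.hr
  have hρ := S.hρ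
  intro k
  induction k with
  | zero =>
    intro x y hx hy
    simp only [pow_zero, mul_one] at hy ⊢
    have hx1 := S.U_succ_norm hx
    have h2 := dist_le_norm_add_norm y x
    have h3 : ‖Φ x‖ ≤ 7 / 8 := h.inv.inn x (by linarith)
    have h4 : Φ y = y := h.inv.out y (by linarith)
    rw [h4]
    have := norm_sub_norm_le y (Φ x)
    rw [← dist_eq_norm] at this
    linarith
  | succ k ih =>
    intro x y hx hy
    obtain ⟨i, u, hu, rfl⟩ := S.mem_U_succ.1 hx
    have hu1 := S.U_succ_norm hu
    rw [h.inside i u (hu1.trans (by norm_num))]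
    set w := S.ρ⁻¹ • (Φ y - S.b i) with hw
    have hΦy : Φ y = S.b i + S.ρ • w := by rw [hw, smul_inv_smul₀ hρ.ne']; abel
    have hd : dist (Φ y) (S.b i + S.ρ • Φ u) = S.ρ * dist w (Φ u) := by
      rw [hΦy, dist_add_left, dist_smul₀, Real.norm_of_nonneg hρ.le]
    rw [hd]
    clear_value w
    have hgoal : 1 / 8 * S.ρ ^ k ≤ dist w (Φ u) := by
      by_cases hw1 : ‖w‖ ≤ 1
      · obtain ⟨v, rfl⟩ := Φ.surjective w
        have hv : ‖v‖ ≤ 9 / 8 := by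
          by_contra hcon
          push Not at hcon
          rw [h.inv.out v (by linarith)] at hw1
          linarith
        rw [← h.inside i v hv] at hΦy
        have hyv := Φ.injective hΦy
        rw [hyv, dist_add_left, dist_smul₀, Real.norm_of_nonneg hr.le, pow_succ] at hy
        apply ih u v hu
        have : S.r * (2 * S.r ^ k) ≤ S.r * dist v u := by linarith
        exact le_of_mul_le_mul_left this hr
      · push Not at hw1
        have h3 : ‖Φ u‖ ≤ 7 / 8 := h.inv.inn u (by linarith)
        have := norm_sub_norm_le w (Φ u)
        rw [← dist_eq_norm] at this
        have hrk : S.ρ ^ k ≤ 1 := pow_le_one₀ hρ.le (S.hρ'.trans (by norm_num))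
        linarith
    calc 1 / 8 * S.ρ ^ (k + 1) = S.ρ * (1 / 8 * S.ρ ^ k) := by ring
      _ ≤ _ := by gcongr

/-- Criterion for a bound on the linear dilatation at a point. -/
theorem qcH_le_of_eventually {X : Type*} [MetricSpace X] {Φ : X → X} {x : X} {H : ℝ} (hH : 0 ≤ H)
    (h : ∀ᶠ s in 𝓝[>] (0:ℝ), ∃ B : ℝ, (∀ y, dist y x ≤ s → dist (Φ y) (Φ x) ≤ H * B) ∧
      ∀ y, s ≤ dist y x → B ≤ dist (Φ y) (Φ x)) :
    qcH univ Φ x ≤ ENNReal.ofReal H := by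
  unfold qcH
  refine Filter.limsup_le_of_le (by isBoundedDefault) ?_
  filter_upwards [h] with s hs
  obtain ⟨B, h1, h2⟩ := hs
  apply ENNReal.div_le_of_le_mul
  have hA : linDil univ Φ x s ≤ ENNReal.ofReal (H * B) := by
    refine iSup₂_le fun y hy => ?_
    rw [edist_dist, dist_comm]
    exact ENNReal.ofReal_le_ofReal (h1 y (by rw [dist_comm]; exact hy.2))
  have hB : ENNReal.ofReal B ≤ linCon univ Φ x s := by
    refine le_iInf₂ fun y hy => ?_
    rw [edist_dist, dist_comm (Φ x)]
    exact ENNReal.ofReal_le_ofReal (h2 y (by rw [dist_comm]; exact hy.2))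
  rw [ENNReal.ofReal_mul hH] at hA
  exact hA.trans (by gcongr)

theorem CSys.IsLim.quasiconformal (h : S.IsLim Φ) : QuasiconformalOn univ (Φ : V → V) := by
  have hr := S.hr
  have hρ := S.hρ
  have hr1 : S.r < 1 := S.hr'.trans_lt (by norm_num)
  set C : ℝ := S.C + 1 with hC
  have hC0 : 0 < C := by positivity
  have hC1 : 1 ≤ C := by simp [hC]
  set H : ℝ := max (C * C) (18 / S.ρ ^ 3) with hH
  have hHC : C * C ≤ H := le_max_left _ _
  have hHρ : 18 / S.ρ ^ 3 ≤ H := le_max_right _ _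
  have hH1 : 1 ≤ H := le_trans (by nlinarith) hHC
  refine ⟨H, hH1, fun x _ => ?_⟩
  apply qcH_le_of_eventually (by linarith)
  by_cases hx : x ∈ ⋂ k, S.U k
  · rw [mem_iInter] at hx
    have hev : ∀ᶠ s in 𝓝[>] (0:ℝ), s ≤ 1 / 8 :=
      nhdsWithin_le_nhds (Iic_mem_nhds (by norm_num))
    filter_upwards [hev, self_mem_nhdsWithin] with s hs hs0
    have hs0 : 0 < s := hs0
    obtain ⟨k, hk1, hk2⟩ := exists_nat_pow_near_of_lt_one (x := 8 * s) (by linarith)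
      (by linarith) hr hr1
    refine ⟨1 / 8 * S.ρ ^ (k + 3), fun y hy => ?_, fun y hy => ?_⟩
    · refine (h.upper k x y (hx k) (by linarith)).trans ?_
      calc 9 / 4 * S.ρ ^ k = 18 / S.ρ ^ 3 * (1 / 8 * S.ρ ^ (k + 3)) := by
            rw [pow_add]; field_simp; norm_num
        _ ≤ _ := by gcongr
    · apply h.lower (k + 3) x y (hx _)
      have h3 : S.r ^ (k + 3) = S.r ^ (k + 1) * (S.r * S.r) := by ring
      have h4 : S.r * S.r ≤ 1 / 8 * (1 / 8) := mul_le_mul S.hr' S.hr' hr.le (by norm_num)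
      have h5 : S.r ^ (k + 1) * (S.r * S.r) ≤ S.r ^ (k + 1) * (1 / 8 * (1 / 8)) := by gcongr
      have h6 : 0 < S.r ^ (k + 1) := by positivity
      linarith
  · obtain ⟨k, hk1, hk2⟩ := S.exists_level hx
    obtain ⟨ε, hε, hball⟩ := h.loc k x hk1 hk2
    rw [← hC] at hball
    set lam : ℝ := (S.ρ / S.r) ^ k with hlam
    have hlam0 : 0 < lam := by positivity
    have hcont : ContinuousAt Φ.symm (Φ x) := Φ.symm.continuous.continuousAt
    obtain ⟨η, hη, hfar⟩ := Metric.continuousAt_iff.1 hcont ε hε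
    have hev : ∀ᶠ s in 𝓝[>] (0:ℝ), s < ε :=
      nhdsWithin_le_nhds (Iio_mem_nhds hε)
    have hev' : ∀ᶠ s in 𝓝[>] (0:ℝ), s < η * C / lam :=
      nhdsWithin_le_nhds (Iio_mem_nhds (by positivity))
    filter_upwards [hev, hev', self_mem_nhdsWithin] with s hs hs' hs0
    have hs0 : 0 < s := hs0
    refine ⟨lam * s / C, fun y hy => ?_, fun y hy => ?_⟩
    · refine (hball y (by linarith)).1.trans ?_
      calc C * lam * dist y x ≤ C * lam * s := by gcongr
        _ = C * C * (lam * s / C) := by field_simp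
        _ ≤ _ := by gcongr
    · by_cases hyε : dist y x < ε
      · have h2 := (hball y hyε).2
        rw [div_le_iff₀ hC0, mul_comm _ C]
        exact le_trans (by gcongr) h2
      · have h3 : η ≤ dist (Φ y) (Φ x) := by
          by_contra hcon
          push Not at hcon
          have := hfar hcon
          rw [Φ.symm_apply_apply, Φ.symm_apply_apply] at this
          exact hyε this
        refine le_trans ?_ h3
        rw [div_le_iff₀ hC0]
        rw [lt_div_iff₀ hlam0] at hs'
        linarith

/-! ### Measure estimates -/

section MeasureEstimates

variable [MeasurableSpace V] [BorelSpace V] {S : CSys V ι} {Φ : V ≃ₜ V}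

open Pointwise in
theorem CSys.measure_image (S : CSys V ι) (μ : Measure V) [μ.IsAddHaarMeasure] (i : ι) (A : Set V) :
    μ ((fun u => S.a i + S.r • u) '' A) = ENNReal.ofReal (S.r ^ Module.finrank ℝ V) * μ A := by
  have : (fun u => S.a i + S.r • u) '' A = (fun v => S.a i + v) '' (S.r • A) := by
    rw [← image_smul, image_image]
  have hr := S.hr
  rw [this, image_add_left, measure_preimage_add, Measure.addHaar_smul,
    abs_of_nonneg (by positivity)]

theorem CSys.measure_U_le (S : CSys V ι) (μ : Measure V) [μ.IsAddHaarMeasure] (k : ℕ) :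
    μ (S.U k) ≤ ENNReal.ofReal ((Fintype.card ι * S.r ^ Module.finrank ℝ V) ^ k) *
      μ (closedBall 0 1) := by
  have hr := S.hr
  induction k with
  | zero => simp [CSys.U]
  | succ k ih =>
    calc μ (S.U (k + 1)) ≤ ∑ i, μ ((fun u => S.a i + S.r • u) '' S.U k) := by
          rw [CSys.U]; exact measure_iUnion_fintype_le _ _
      _ = Fintype.card ι * (ENNReal.ofReal (S.r ^ Module.finrank ℝ V) * μ (S.U k)) := by
          simp only [S.measure_image]
          simp
      _ ≤ Fintype.card ι * (ENNReal.ofReal (S.r ^ Module.finrank ℝ V) *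
          (ENNReal.ofReal ((Fintype.card ι * S.r ^ Module.finrank ℝ V) ^ k) *
            μ (closedBall 0 1))) := by gcongr
      _ = _ := by
          rw [pow_succ, ENNReal.ofReal_mul (by positivity), ENNReal.ofReal_mul (by positivity),
            ENNReal.ofReal_natCast]
          ring

theorem CSys.measure_iInter_U (S : CSys V ι) (μ : Measure V) [μ.IsAddHaarMeasure]
    (hq : Fintype.card ι * S.r ^ Module.finrank ℝ V < 1) : μ (⋂ k, S.U k) = 0 := by
  have hr := S.hr
  have : ProperSpace V := FiniteDimensional.proper ℝ V
  have hfin : μ (closedBall (0:V) 1) ≠ ⊤ := (isCompact_closedBall (0:V) 1).measure_lt_top.ne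
  have h1 : Tendsto (fun k : ℕ => ENNReal.ofReal
      ((Fintype.card ι * S.r ^ Module.finrank ℝ V) ^ k) * μ (closedBall 0 1)) atTop (𝓝 0) := by
    have h2 := ENNReal.tendsto_ofReal
      (tendsto_pow_atTop_nhds_zero_of_lt_one (by positivity) hq)
    have h3 := ENNReal.Tendsto.mul_const (b := μ (closedBall (0:V) 1)) h2 (Or.inr hfin)
    simpa using h3
  refine le_antisymm (ge_of_tendsto' h1 fun k => ?_) zero_le
  exact (measure_mono (iInter_subset _ k)).trans (S.measure_U_le μ k)

theorem CSys.IsLim.ae_differentiable (h : S.IsLim Φ) (μ : Measure V) [μ.IsAddHaarMeasure]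
    (hq : Fintype.card ι * S.r ^ Module.finrank ℝ V < 1) :
    ∀ᵐ x ∂μ, DifferentiableAt ℝ Φ x := by
  have hr := S.hr
  have hρ := S.hρ
  have hN : ∀ k : ℕ, μ {x | x ∉ S.U (k + 1) ∧ (k = 0 ∨ x ∈ S.U k) ∧
      ¬ DifferentiableAt ℝ Φ x} = 0 := by
    intro k
    induction k with
    | zero =>
      refine measure_mono_null ?_ (ae_iff.1 (S.lip.ae_differentiableAt (μ := μ)))
      rintro x ⟨hx, -, hxd⟩ hcon
      apply hxd
      refine hcon.congr_of_eventuallyEq ?_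
      have hopen : ∀ i, 7 / 8 * S.r < ‖x - S.a i‖ := by
        intro i
        by_contra hcon
        push Not at hcon
        apply hx
        refine S.mem_U_succ.2 ⟨i, S.r⁻¹ • (x - S.a i), ?_, by rw [smul_inv_smul₀ hr.ne']; abel⟩
        simp only [CSys.U, mem_closedBall, dist_zero_right]
        rw [norm_smul, norm_inv, Real.norm_of_nonneg hr.le, inv_mul_le_iff₀ hr]
        linarith
      have hev : ∀ᶠ y in 𝓝 x, ∀ i, 7 / 8 * S.r < ‖y - S.a i‖ := by
        refine eventually_all.2 fun i => ?_
        have hc : Continuous fun y : V => ‖y - S.a i‖ := by fun_prop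
        exact hc.continuousAt.eventually (lt_mem_nhds (hopen i))
      filter_upwards [hev] with y hy
      exact h.outside y fun i => (hy i).le
    | succ k ih =>
      refine measure_mono_null (t := ⋃ i, (fun u => S.a i + S.r • u) '' {x | x ∉ S.U (k + 1) ∧
        (k = 0 ∨ x ∈ S.U k) ∧ ¬ DifferentiableAt ℝ Φ x}) ?_ ?_
      · rintro x ⟨hx, hx', hxd⟩
        have hx' : x ∈ S.U (k + 1) := by simpa using hx'
        obtain ⟨i, u, hu, rfl⟩ := S.mem_U_succ.1 hx'
        refine mem_iUnion.2 ⟨i, u, ⟨fun hcon => hx (S.mem_U_succ.2 ⟨i, u, hcon, rfl⟩),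
          Or.inr hu, fun hdu => hxd ?_⟩, rfl⟩
        have hu1 := S.U_norm hu
        have e : (fun y => S.b i + S.ρ • Φ (S.r⁻¹ • (y - S.a i))) =ᶠ[𝓝 (S.a i + S.r • u)] Φ := by
          filter_upwards [Metric.closedBall_mem_nhds (S.a i + S.r • u)
            (show 0 < 1 / 8 * S.r by positivity)] with y hy
          obtain ⟨v, rfl, hv, -⟩ := S.near i le_rfl hu1 (mem_closedBall.1 hy)
          rw [h.inside i v hv, add_sub_cancel_left, inv_smul_smul₀ hr.ne']
        refine DifferentiableAt.congr_of_eventuallyEq ?_ e.symm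
        have hin : DifferentiableAt ℝ (fun y => S.r⁻¹ • (y - S.a i)) (S.a i + S.r • u) := by
          fun_prop
        have hu' : S.r⁻¹ • (S.a i + S.r • u - S.a i) = u := by
          rw [add_sub_cancel_left, inv_smul_smul₀ hr.ne']
        have hcomp : DifferentiableAt ℝ (fun y => Φ (S.r⁻¹ • (y - S.a i))) (S.a i + S.r • u) := by
          refine DifferentiableAt.comp (g := Φ) _ ?_ hin
          rw [hu']; exact hdu
        exact (hcomp.const_smul S.ρ).const_add _
      · refine measure_iUnion_null fun i => ?_
        rw [S.measure_image, ih, mul_zero]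
  rw [ae_iff]
  refine measure_mono_null (t := (⋂ k, S.U k) ∪ ⋃ k : ℕ, {x | x ∉ S.U (k + 1) ∧
    (k = 0 ∨ x ∈ S.U k) ∧ ¬ DifferentiableAt ℝ Φ x}) ?_
    (measure_union_null (S.measure_iInter_U μ hq) (measure_iUnion_null hN))
  intro x hx
  by_cases hxU : x ∈ ⋂ k, S.U k
  · exact Or.inl hxU
  · obtain ⟨k, h1, h2⟩ := S.exists_level hxU
    exact Or.inr (mem_iUnion.2 ⟨k, h1, h2, hx⟩)

theorem CSys.IsLim.lintegral_lt_top (h : S.IsLim Φ) (μ : Measure V) [μ.IsAddHaarMeasure]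
    (hq : Fintype.card ι * S.r ^ Module.finrank ℝ V < 1) {p : ℝ} (hp : 0 < p)
    (hqp : Fintype.card ι * S.r ^ Module.finrank ℝ V * (S.ρ / S.r) ^ p < 1)
    {K : Set V} (hK : IsCompact K) :
    ∫⁻ x in K, ENNReal.ofReal (‖fderiv ℝ Φ x‖ ^ p) ∂μ < ⊤ := by
  have hr := S.hr
  have hρ := S.hρ
  have : ProperSpace V := FiniteDimensional.proper ℝ V
  have hfin : μ (closedBall (0:V) 1) ≠ ⊤ := (isCompact_closedBall (0:V) 1).measure_lt_top.ne
  set A : ℝ := S.C + 1 with hA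
  have hA0 : 0 < A := by positivity
  set lam : ℝ := S.ρ / S.r with hlam
  have hlam0 : 0 < lam := by positivity
  set q : ℝ := Fintype.card ι * S.r ^ Module.finrank ℝ V with hqdef
  have hq0 : 0 ≤ q := by positivity
  let f : ℕ → ℝ≥0∞ := fun k => ENNReal.ofReal ((A * lam ^ k) ^ p)
  have hmeas : ∀ k, MeasurableSet (S.U k) := fun k => (S.U_compact k).measurableSet
  have hbound : ∀ᵐ x ∂(μ.restrict K), ENNReal.ofReal (‖fderiv ℝ Φ x‖ ^ p) ≤
      ENNReal.ofReal (A ^ p) + ∑' k, (S.U k).indicator (fun _ => f k) x := by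
    refine ae_restrict_of_ae ?_
    have h0 : ∀ᵐ x ∂μ, x ∉ ⋂ k, S.U k := measure_eq_zero_iff_ae_notMem.1 (S.measure_iInter_U μ hq)
    filter_upwards [h0] with x hx
    obtain ⟨k, hk1, hk2⟩ := S.exists_level hx
    obtain ⟨ε, hε, hball⟩ := h.loc k x hk1 hk2
    have hfd : ‖fderiv ℝ Φ x‖ ≤ A * lam ^ k := by
      refine norm_fderiv_le_of_lip' ℝ (by positivity) ?_
      filter_upwards [Metric.ball_mem_nhds x hε] with y hy
      have := (hball y (mem_ball.1 hy)).1
      rwa [dist_eq_norm, dist_eq_norm] at this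
    have h1 : ENNReal.ofReal (‖fderiv ℝ Φ x‖ ^ p) ≤ f k :=
      ENNReal.ofReal_le_ofReal (Real.rpow_le_rpow (norm_nonneg _) hfd hp.le)
    rcases hk2 with rfl | hk2
    · refine (h1.trans ?_).trans le_self_add
      simp [f]
    · refine le_trans ?_ le_add_self
      refine le_trans ?_ (ENNReal.le_tsum k)
      rw [indicator_of_mem hk2]
      exact h1
  refine (lintegral_mono_ae hbound).trans_lt ?_
  rw [lintegral_add_left measurable_const, ENNReal.add_lt_top]
  constructor
  · rw [lintegral_const]
    refine ENNReal.mul_lt_top ENNReal.ofReal_lt_top ?_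
    rw [Measure.restrict_apply_univ]
    exact hK.measure_lt_top
  · rw [lintegral_tsum (fun k => (measurable_const.indicator (hmeas k)).aemeasurable)]
    have hterm : ∀ k, ∫⁻ x in K, (S.U k).indicator (fun _ => f k) x ∂μ ≤
        ENNReal.ofReal ((q * lam ^ p) ^ k) * (ENNReal.ofReal (A ^ p) * μ (closedBall 0 1)) := by
      intro k
      calc ∫⁻ x in K, (S.U k).indicator (fun _ => f k) x ∂μ
          ≤ ∫⁻ x, (S.U k).indicator (fun _ => f k) x ∂μ := setLIntegral_le_lintegral _ _
        _ = f k * μ (S.U k) := lintegral_indicator_const (hmeas k) _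
        _ ≤ f k * (ENNReal.ofReal (q ^ k) * μ (closedBall 0 1)) := by
            gcongr; exact S.measure_U_le μ k
        _ = _ := by
            have e : (A * lam ^ k) ^ p = A ^ p * (lam ^ p) ^ k := by
              rw [Real.mul_rpow hA0.le (by positivity), ← Real.rpow_natCast, ← Real.rpow_natCast,
                ← Real.rpow_mul hlam0.le, ← Real.rpow_mul hlam0.le, mul_comm p]
            simp only [f]
            clear_value q
            rw [e, mul_pow q, ENNReal.ofReal_mul (by positivity),
              ENNReal.ofReal_mul (p := q ^ k) (by positivity)]
            ring
    refine (ENNReal.tsum_le_tsum hterm).trans_lt ?_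
    rw [ENNReal.tsum_mul_right]
    refine ENNReal.mul_lt_top ?_ (ENNReal.mul_lt_top ENNReal.ofReal_lt_top hfin.lt_top)
    have hs : Summable fun k : ℕ => (q * lam ^ p) ^ k :=
      summable_geometric_of_lt_one (by positivity) hqp
    exact hs.tsum_ofReal_lt_top

end MeasureEstimates

end SelfSimilar

/-! ### Coding of the invariant sets -/

section Coding

variable {V : Type*} [NormedAddCommGroup V] [NormedSpace ℝ V] [FiniteDimensional ℝ V]
variable {ι : Type*}

/-- The point of the invariant set with a given address. -/
noncomputable def codePt (r : ℝ) (a : ι → V) (ω : ℕ → ι) : V := ∑' k, r ^ k • a (ω k)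

theorem codePt_summable {r : ℝ} (hr : 0 < r) (hr' : r ≤ 1 / 8) {a : ι → V}
    (ha : ∀ i, ‖a i‖ ≤ 1 / 2) (ω : ℕ → ι) : Summable fun k => ‖r ^ k • a (ω k)‖ := by
  refine Summable.of_nonneg_of_le (fun _ => norm_nonneg _) (fun k => ?_)
    ((summable_geometric_of_lt_one hr.le (by linarith : r < 1)).mul_right (1 / 2))
  rw [norm_smul, norm_pow, Real.norm_of_nonneg hr.le]
  gcongr
  exact ha _

theorem codePt_succ {r : ℝ} (hr : 0 < r) (hr' : r ≤ 1 / 8) {a : ι → V}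
    (ha : ∀ i, ‖a i‖ ≤ 1 / 2) (ω : ℕ → ι) :
    codePt r a ω = a (ω 0) + r • codePt r a (fun k => ω (k + 1)) := by
  have hcomp : CompleteSpace V := FiniteDimensional.complete ℝ V
  have hs := (codePt_summable hr hr' ha ω).of_norm
  have hs' := (codePt_summable hr hr' ha (fun k => ω (k + 1))).of_norm
  unfold codePt
  rw [hs.tsum_eq_zero_add, ← hs'.tsum_const_smul r]
  simp [pow_succ', mul_smul]

theorem codePt_norm {r : ℝ} (hr : 0 < r) (hr' : r ≤ 1 / 8) {a : ι → V}
    (ha : ∀ i, ‖a i‖ ≤ 1 / 2) (ω : ℕ → ι) : ‖codePt r a ω‖ ≤ 1 := by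
  have hg := (hasSum_geometric_of_lt_one hr.le (by linarith : r < 1)).mul_right (1 / 2)
  refine (tsum_of_norm_bounded hg fun k => ?_).trans ?_
  · rw [norm_smul, norm_pow, Real.norm_of_nonneg hr.le]
    gcongr
    exact ha _
  · rw [inv_mul_le_iff₀ (by linarith)]
    linarith

theorem codePt_sep {r : ℝ} (hr : 0 < r) (hr' : r ≤ 1 / 8) {a : ι → V}
    (ha : ∀ i, ‖a i‖ ≤ 1 / 2) (hsep : ∀ i j, i ≠ j → 3 * r ≤ ‖a i - a j‖) (k : ℕ) :
    ∀ ω ω' : ℕ → ι, (∀ i < k, ω i = ω' i) → ω k ≠ ω' k →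
      r * r ^ k ≤ dist (codePt r a ω) (codePt r a ω') := by
  induction k with
  | zero =>
    intro ω ω' _ hne
    rw [codePt_succ hr hr' ha ω, codePt_succ hr hr' ha ω', dist_eq_norm]
    have h1 := hsep _ _ hne
    set x := codePt r a (fun k => ω (k + 1)) with hx
    set y := codePt r a (fun k => ω' (k + 1)) with hy
    have hx1 : ‖x‖ ≤ 1 := codePt_norm hr hr' ha _
    have hy1 : ‖y‖ ≤ 1 := codePt_norm hr hr' ha _
    have h2 : ‖r • (y - x)‖ ≤ r * 2 := by
      rw [norm_smul, Real.norm_of_nonneg hr.le]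
      gcongr
      exact (norm_sub_le _ _).trans (by linarith)
    have e : a (ω 0) + r • x - (a (ω' 0) + r • y) = (a (ω 0) - a (ω' 0)) - r • (y - x) := by
      rw [smul_sub]; abel
    rw [e]
    have h3 := norm_sub_norm_le (a (ω 0) - a (ω' 0)) (r • (y - x))
    rw [pow_zero]
    linarith
  | succ k ih =>
    intro ω ω' heq hne
    rw [codePt_succ hr hr' ha ω, codePt_succ hr hr' ha ω', heq 0 (by omega), dist_add_left,
      dist_smul₀, Real.norm_of_nonneg hr.le, pow_succ']
    have := ih (fun k => ω (k + 1)) (fun k => ω' (k + 1)) (fun i hi => heq _ (by omega)) hne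
    gcongr

theorem codePt_add {κ : Type*} {r : ℝ} (hr : 0 < r) (hr' : r ≤ 1 / 8) {t : ι → V} {e : κ → V}
    (ht : ∀ i, ‖t i‖ ≤ 1 / 2) (he : ∀ i, ‖e i‖ ≤ 1 / 2) (ω : ℕ → ι) (η : ℕ → κ) :
    codePt r (fun q : ι × κ => t q.1 + e q.2) (fun k => (ω k, η k)) =
      codePt r t ω + codePt r e η := by
  have hcomp : CompleteSpace V := FiniteDimensional.complete ℝ V
  have hs := (codePt_summable hr hr' ht ω).of_norm
  have hs' := (codePt_summable hr hr' he η).of_norm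
  unfold codePt
  rw [← hs.tsum_add hs']
  simp

theorem codePt_mem {r : ℝ} (hr : 0 < r) (hr' : r ≤ 1 / 8) {a : ι → V}
    (ha : ∀ i, ‖a i‖ ≤ 1 / 2) (ω : ℕ → ι) (W : Submodule ℝ V) (hW : ∀ i, a i ∈ W) :
    codePt r a ω ∈ W := by
  have hcomp : CompleteSpace V := FiniteDimensional.complete ℝ V
  have hs := (codePt_summable hr hr' ha ω).of_norm
  have hcl : IsClosed (W : Set V) := W.closed_of_finiteDimensional
  refine hcl.mem_of_tendsto hs.hasSum (Eventually.of_forall fun s => ?_)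
  exact W.sum_mem fun i _ => W.smul_mem _ (hW _)

theorem CSys.IsLim.codePt_map [Fintype ι] {S : CSys V ι} {Φ : V ≃ₜ V} (h : S.IsLim Φ)
    (ω : ℕ → ι) : Φ (codePt S.r S.a ω) = codePt S.ρ S.b ω := by
  have hρ := S.hρ
  have key : ∀ (k : ℕ) (ω : ℕ → ι),
      dist (Φ (codePt S.r S.a ω)) (codePt S.ρ S.b ω) ≤ 2 * S.ρ ^ k := by
    intro k
    induction k with
    | zero =>
      intro ω
      have h1 : ‖Φ (codePt S.r S.a ω)‖ ≤ 1 :=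
        h.inv.le (by norm_num) (codePt_norm S.hr S.hr' S.ha ω)
      have h2 := codePt_norm S.hρ S.hρ' S.hb ω
      have := dist_le_norm_add_norm (Φ (codePt S.r S.a ω)) (codePt S.ρ S.b ω)
      rw [pow_zero]
      linarith
    | succ k ih =>
      intro ω
      rw [codePt_succ S.hr S.hr' S.ha, codePt_succ S.hρ S.hρ' S.hb, h.inside _ _
        ((codePt_norm S.hr S.hr' S.ha _).trans (by norm_num)), dist_add_left, dist_smul₀,
        Real.norm_of_nonneg hρ.le]
      have := ih (fun k => ω (k + 1))
      calc _ ≤ S.ρ * (2 * S.ρ ^ k) := by gcongr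
        _ = _ := by ring
  refine dist_le_zero.1 (ge_of_tendsto' (x := atTop) ?_ fun k => key k ω)
  have := (tendsto_pow_atTop_nhds_zero_of_lt_one hρ.le
    (S.hρ'.trans_lt (by norm_num))).const_mul 2
  simpa using this

end Coding

/-! ### Choice of parameters -/

theorem half_le_floor {x : ℝ} (hx : 1 ≤ x) : x / 2 ≤ (⌊x⌋₊ : ℝ) := by
  have h1 := Nat.lt_floor_add_one x
  have h2 : (1 : ℝ) ≤ (⌊x⌋₊ : ℝ) := by exact_mod_cast (Nat.one_le_floor_iff x).2 hx
  linarith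

theorem eventually_rpow_le {θ K : ℝ} (hθ : 0 < θ) (hK : 0 < K) :
    ∀ᶠ r in 𝓝[>] (0:ℝ), r ^ θ ≤ K := by
  have h : ContinuousAt (fun r : ℝ => r ^ θ) 0 := Real.continuousAt_rpow_const 0 θ (Or.inr hθ.le)
  have h2 : ∀ᶠ r in 𝓝 (0:ℝ), r ^ θ < K := by
    refine h.eventually (gt_mem_nhds ?_)
    change (0:ℝ) ^ θ < K
    rwa [Real.zero_rpow hθ.ne']
  exact nhdsWithin_le_nhds (h2.mono fun _ h => h.le)

theorem exists_exponents (n : ℕ) (p : ℝ) (hn : 2 ≤ n) (hp : (n : ℝ) < p)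
    (α : ℝ) (hα₁ : 1 ≤ α) (hα₂ : α < p / (p - ((n : ℝ) - 1)))
    (β : ℝ) (hβ : β < ((n : ℝ) - 1) - p * (1 - 1 / α)) :
    ∃ σ s α' β' : ℝ, 0 < σ ∧ σ < 1 ∧ 0 < s ∧ 0 < α' ∧ 0 < β' ∧ α < α' ∧ β < β' ∧ σ * α' < 1 ∧
      β' < s ∧ s < ((n : ℝ) - 1) - p * (1 - σ) := by
  have hn' : (2 : ℝ) ≤ n := by exact_mod_cast hn
  have hα0 : 0 < α := by linarith
  have hp0 : 0 < p := by linarith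
  have hpos : 0 < ((n : ℝ) - 1) - p * (1 - 1 / α) := by
    rw [lt_div_iff₀ (by linarith)] at hα₂
    have : p * (1 - 1 / α) = (p * α - p) / α := by field_simp
    rw [this, sub_pos, div_lt_iff₀ hα0]
    linarith
  obtain ⟨β0, hβ0, hβ1⟩ := exists_between (max_lt hβ hpos)
  have hb := max_lt_iff.1 hβ0
  have hσ : max (1 - (((n : ℝ) - 1) - β0) / p) 0 < 1 / α := by
    refine max_lt ?_ (by positivity)
    have : 1 - 1 / α < (((n : ℝ) - 1) - β0) / p := by
      rw [lt_div_iff₀ hp0]; linarith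
    linarith
  obtain ⟨σ, hσ1, hσ2⟩ := exists_between hσ
  obtain ⟨hσ3, hσ0⟩ := max_lt_iff.1 hσ1
  have hσ4 : β0 < ((n : ℝ) - 1) - p * (1 - σ) := by
    have : 1 - σ < (((n : ℝ) - 1) - β0) / p := by linarith
    rw [lt_div_iff₀ hp0] at this
    linarith
  have hσ5 : α < 1 / σ := by
    rw [lt_div_iff₀ hσ0]
    rw [lt_div_iff₀ hα0] at hσ2
    linarith
  obtain ⟨α', h1, h2⟩ := exists_between hσ5
  obtain ⟨s, h3, h4⟩ := exists_between hσ4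
  obtain ⟨β', h5, h6⟩ := exists_between h3
  refine ⟨σ, s, α', β', hσ0, ?_, by linarith, by linarith, by linarith, h1, by linarith, ?_, h6, h4⟩
  · refine hσ2.trans_le ?_
    rw [div_le_one hα0]; exact hα₁
  · rw [lt_div_iff₀ hσ0] at h2
    linarith

theorem exists_params (n : ℕ) (hn : 2 ≤ n) (p σ s α' β' : ℝ) (hp : (n : ℝ) < p)
    (hσ0 : 0 < σ) (hσ1 : σ < 1) (hs0 : 0 < s) (hσα : σ * α' < 1) (hβs : β' < s)
    (hs : s < ((n : ℝ) - 1) - p * (1 - σ)) {c₁ c₂ c₃ : ℝ} (hc₁ : 0 < c₁) (hc₂ : 0 < c₂)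
    (hc₃ : 0 < c₃) :
    ∃ (r ρ : ℝ) (M N m₂ m₃ : ℕ), 0 < r ∧ r ≤ 1 / 8 ∧ 0 < ρ ∧ ρ ≤ 1 / 8 ∧ 1 < M ∧ 1 < N ∧
      M * (3 * r) ≤ c₁ ∧ m₂ * (3 * r) ≤ c₂ ∧ m₃ * (3 * ρ) ≤ c₃ ∧ N ≤ m₂ ^ (n - 1) ∧
      M * N ≤ m₃ ^ n ∧ (M * N : ℝ) * r ^ n < 1 ∧ (M * N : ℝ) * r ^ n * (ρ / r) ^ p < 1 ∧
      1 ≤ N * r ^ β' ∧ 1 ≤ M * ρ ^ α' := by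
  have hn' : (2 : ℝ) ≤ n := by exact_mod_cast hn
  have hp0 : 0 < p := by linarith
  have hps : 0 < p * (1 - σ) := mul_pos hp0 (by linarith)
  have hps' : n * (1 - σ) < p * (1 - σ) := mul_lt_mul_of_pos_right hp (by linarith)
  have hθ1 : 0 < (n : ℝ) - 1 - s := by linarith
  have hθ2 : 0 < (n : ℝ) - 1 - s - p * (1 - σ) := by linarith
  have hθ3 : 0 < n * σ - 1 - s := by linarith
  have hθ4 : 0 < s - β' := by linarith
  have hθ5 : 0 < 1 - σ * α' := by linarith
  have key : ∀ᶠ r in 𝓝[>] (0:ℝ), 0 < r ∧ r ^ (1:ℝ) ≤ 1 / 8 ∧ r ^ σ ≤ 1 / 8 ∧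
      r ^ (1:ℝ) ≤ c₁ / 6 ∧ r ^ (1:ℝ) ≤ c₂ / 6 ∧ r ^ σ ≤ c₃ / 6 ∧ r ^ s ≤ 1 / 2 ∧
      r ^ (s - β') ≤ 1 / 2 ∧ r ^ (1 - σ * α') ≤ c₁ / 6 ∧
      r ^ ((n : ℝ) - 1 - s) ≤ 1 / c₁ ∧ r ^ ((n : ℝ) - 1 - s - p * (1 - σ)) ≤ 1 / c₁ ∧
      r ^ ((n : ℝ) - 1 - s) ≤ (c₂ / 6) ^ (n - 1) ∧
      r ^ (n * σ - 1 - s) ≤ (c₃ / 6) ^ n / c₁ := by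
    have hpos : ∀ᶠ r in 𝓝[>] (0:ℝ), 0 < r := self_mem_nhdsWithin
    refine hpos.and ?_
    refine (eventually_rpow_le one_pos (by positivity)).and ?_
    refine (eventually_rpow_le hσ0 (by positivity)).and ?_
    refine (eventually_rpow_le one_pos (by positivity)).and ?_
    refine (eventually_rpow_le one_pos (by positivity)).and ?_
    refine (eventually_rpow_le hσ0 (by positivity)).and ?_
    refine (eventually_rpow_le hs0 (by positivity)).and ?_
    refine (eventually_rpow_le hθ4 (by positivity)).and ?_
    refine (eventually_rpow_le hθ5 (by positivity)).and ?_
    refine (eventually_rpow_le hθ1 (by positivity)).and ?_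
    refine (eventually_rpow_le hθ2 (by positivity)).and ?_
    refine (eventually_rpow_le hθ1 (by positivity)).and ?_
    exact eventually_rpow_le hθ3 (by positivity)
  obtain ⟨r, hr, k1, k2, k3, k4, k5, k6, k7, k8, k9, k10, k11, k12⟩ := key.exists
  rw [Real.rpow_one] at k1 k3 k4
  set ρ := r ^ σ with hρdef
  have hρ : 0 < ρ := Real.rpow_pos_of_pos hr σ
  have hrs : 0 < r ^ s := Real.rpow_pos_of_pos hr s
  have hrn : r ^ n = r ^ ((n : ℝ) - 1 - s) * (r ^ s * r) := by
    rw [← Real.rpow_add_one hr.ne', ← Real.rpow_add hr, ← Real.rpow_natCast]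
    congr 1; ring
  have x1 : 2 ≤ c₁ / (3 * r) := by rw [le_div_iff₀ (by positivity)]; linarith
  have x2 : 1 ≤ c₂ / (3 * r) := by rw [le_div_iff₀ (by positivity)]; linarith
  have x3 : 1 ≤ c₃ / (3 * ρ) := by rw [le_div_iff₀ (by positivity)]; linarith
  have x4 : 2 ≤ 1 / r ^ s := by rw [le_div_iff₀ hrs]; linarith
  have M1 : (⌊c₁ / (3 * r)⌋₊ : ℝ) ≤ c₁ / (3 * r) := Nat.floor_le (by positivity)
  have M2 := half_le_floor (x := c₁ / (3 * r)) (by linarith)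
  have N1 : (⌊1 / r ^ s⌋₊ : ℝ) ≤ 1 / r ^ s := Nat.floor_le (by positivity)
  have N2 := half_le_floor (x := 1 / r ^ s) (by linarith)
  have A1 : (⌊c₂ / (3 * r)⌋₊ : ℝ) ≤ c₂ / (3 * r) := Nat.floor_le (by positivity)
  have A2 := half_le_floor (x := c₂ / (3 * r)) (by linarith)
  have B1 : (⌊c₃ / (3 * ρ)⌋₊ : ℝ) ≤ c₃ / (3 * ρ) := Nat.floor_le (by positivity)
  have B2 := half_le_floor (x := c₃ / (3 * ρ)) (by linarith)
  have hM : 1 < ⌊c₁ / (3 * r)⌋₊ := (Nat.le_floor (by exact_mod_cast x1) : 2 ≤ _)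
  have hN : 1 < ⌊1 / r ^ s⌋₊ := (Nat.le_floor (by exact_mod_cast x4) : 2 ≤ _)
  generalize ⌊c₁ / (3 * r)⌋₊ = M at *
  generalize ⌊1 / r ^ s⌋₊ = N at *
  generalize ⌊c₂ / (3 * r)⌋₊ = m₂ at *
  generalize ⌊c₃ / (3 * ρ)⌋₊ = m₃ at *
  have hMN : (M * N : ℝ) ≤ c₁ / (3 * r) * (1 / r ^ s) := by gcongr
  have hMN' : (M * N : ℝ) * r ^ n ≤ c₁ / 3 * r ^ ((n : ℝ) - 1 - s) := by
    calc (M * N : ℝ) * r ^ n ≤ c₁ / (3 * r) * (1 / r ^ s) * r ^ n := by gcongr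
      _ = _ := by rw [hrn]; field_simp
  refine ⟨r, ρ, M, N, m₂, m₃, hr, k1, hρ, k2, hM, hN, ?_, ?_, ?_, ?_, ?_, ?_, ?_, ?_, ?_⟩
  · rwa [le_div_iff₀ (by positivity)] at M1
  · rwa [le_div_iff₀ (by positivity)] at A1
  · rwa [le_div_iff₀ (by positivity)] at B1
  · have h1 : (N : ℝ) ≤ (m₂ : ℝ) ^ (n - 1) := by
      refine N1.trans ?_
      calc 1 / r ^ s = r ^ ((n : ℝ) - 1 - s) / r ^ (n - 1) := by
            have e : r ^ (n - 1) = r ^ ((n : ℝ) - 1 - s) * r ^ s := by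
              rw [← Real.rpow_add hr, ← Real.rpow_natCast]
              congr 1
              push_cast [Nat.cast_sub (show 1 ≤ n by omega)]
              ring
            rw [e]
            have := Real.rpow_pos_of_pos hr ((n : ℝ) - 1 - s)
            field_simp
        _ ≤ (c₂ / 6) ^ (n - 1) / r ^ (n - 1) := by gcongr
        _ = (c₂ / (3 * r) / 2) ^ (n - 1) := by
            rw [← div_pow]; congr 1; field_simp; norm_num
        _ ≤ _ := by gcongr
    exact_mod_cast h1
  · have h1 : (M * N : ℝ) ≤ (m₃ : ℝ) ^ n := by
      refine hMN.trans ?_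
      have e : ρ ^ n = r ^ (n * σ - 1 - s) * (r ^ s * r) := by
        rw [hρdef, ← Real.rpow_natCast, ← Real.rpow_mul hr.le]
        rw [← Real.rpow_add_one hr.ne', ← Real.rpow_add hr]
        congr 1; ring
      have hpos := Real.rpow_pos_of_pos hr (n * σ - 1 - s)
      calc c₁ / (3 * r) * (1 / r ^ s) = c₁ / 3 * r ^ (n * σ - 1 - s) / ρ ^ n := by
            rw [e]; field_simp
        _ ≤ c₁ * r ^ (n * σ - 1 - s) / ρ ^ n := by gcongr; linarith
        _ ≤ c₁ * ((c₃ / 6) ^ n / c₁) / ρ ^ n := by gcongr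
        _ = (c₃ / (3 * ρ) / 2) ^ n := by
            rw [mul_div_cancel₀ _ hc₁.ne', ← div_pow]; congr 1; field_simp; norm_num
        _ ≤ _ := by gcongr
    exact_mod_cast h1
  · refine hMN'.trans_lt ?_
    calc c₁ / 3 * r ^ ((n : ℝ) - 1 - s) ≤ c₁ / 3 * (1 / c₁) := by gcongr
      _ = 1 / 3 := by field_simp
      _ < 1 := by norm_num
  · have e : (ρ / r) ^ p = r ^ (- (p * (1 - σ))) := by
      have : ρ / r = r ^ (σ - 1) := by rw [Real.rpow_sub_one hr.ne']
      rw [this, ← Real.rpow_mul hr.le]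
      congr 1; ring
    rw [e]
    calc (M * N : ℝ) * r ^ n * r ^ (- (p * (1 - σ)))
        ≤ c₁ / 3 * r ^ ((n : ℝ) - 1 - s) * r ^ (- (p * (1 - σ))) := by gcongr
      _ = c₁ / 3 * r ^ ((n : ℝ) - 1 - s - p * (1 - σ)) := by
          rw [mul_assoc, ← Real.rpow_add hr]; rfl
      _ ≤ c₁ / 3 * (1 / c₁) := by gcongr
      _ = 1 / 3 := by field_simp
      _ < 1 := by norm_num
  · have e : r ^ s = r ^ (s - β') * r ^ β' := by rw [← Real.rpow_add hr]; congr 1; ring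
    have h1 := Real.rpow_pos_of_pos hr β'
    have h2 := Real.rpow_pos_of_pos hr (s - β')
    calc (1 : ℝ) ≤ (1 / 2) / r ^ (s - β') := by rw [le_div_iff₀ h2]; linarith
      _ = 1 / r ^ s / 2 * r ^ β' := by rw [e]; field_simp
      _ ≤ _ := by gcongr
  · have e : r = r ^ (1 - σ * α') * ρ ^ α' := by
      rw [hρdef, ← Real.rpow_mul hr.le, ← Real.rpow_add hr, sub_add_cancel, Real.rpow_one]
    have h1 := Real.rpow_pos_of_pos hρ α'
    have h2 := Real.rpow_pos_of_pos hr (1 - σ * α')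
    calc (1 : ℝ) ≤ (c₁ / 6) / r ^ (1 - σ * α') := by rw [le_div_iff₀ h2]; linarith
      _ = c₁ / 6 * ρ ^ α' / r := by rw [div_eq_div_iff h2.ne' hr.ne']; linear_combination c₁ / 6 * e
      _ = c₁ / (3 * r) / 2 * ρ ^ α' := by field_simp; norm_num
      _ ≤ _ := by gcongr

/-! ### Conclusion -/

theorem exists_map_of_params (n : ℕ) (hn : 2 ≤ n) {p : ℝ} (hp : 0 < p)
    (L : Submodule ℝ (EuclideanSpace ℝ (Fin n))) {r ρ : ℝ} {M N : ℕ} {α' β' : ℝ}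
    (hr : 0 < r) (hr' : r ≤ 1 / 8) (hρ : 0 < ρ) (hρ' : ρ ≤ 1 / 8) (hM : 1 < M) (hN : 1 < N)
    (hα' : 0 < α') (hβ' : 0 < β')
    (t : Fin M → L) (ht : ∀ i, ‖t i‖ ≤ 1 / 4) (htsep : ∀ i j, i ≠ j → 3 * r ≤ ‖t i - t j‖)
    (e : Fin N → Lᗮ) (he : ∀ i, ‖e i‖ ≤ 1 / 4) (hesep : ∀ i j, i ≠ j → 3 * r ≤ ‖e i - e j‖)
    (b : Fin M × Fin N → EuclideanSpace ℝ (Fin n)) (hb : ∀ i, ‖b i‖ ≤ 1 / 2)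
    (hbsep : ∀ i j, i ≠ j → 3 * ρ ≤ ‖b i - b j‖)
    (hq : (M * N : ℝ) * r ^ n < 1) (hqp : (M * N : ℝ) * r ^ n * (ρ / r) ^ p < 1)
    (hNβ : 1 ≤ N * r ^ β') (hMα : 1 ≤ M * ρ ^ α') :
    ∃ (E : Set (EuclideanSpace ℝ (Fin n)))
      (Φ : EuclideanSpace ℝ (Fin n) ≃ₜ EuclideanSpace ℝ (Fin n)),
      E ⊆ (Lᗮ : Set (EuclideanSpace ℝ (Fin n))) ∧
      ENNReal.ofReal β' ≤ dimH E ∧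
      QuasiconformalOn Set.univ ⇑Φ ∧
      (∀ᵐ x, DifferentiableAt ℝ (⇑Φ) x) ∧
      (∀ K : Set (EuclideanSpace ℝ (Fin n)), IsCompact K →
        ∫⁻ x in K, ENNReal.ofReal (‖fderiv ℝ (⇑Φ) x‖ ^ p) < ⊤) ∧
      ∀ a ∈ E, ENNReal.ofReal α' ≤ dimH (⇑Φ '' {x | ∃ v ∈ L, x = a + v}) := by
  have hfr : Module.finrank ℝ (EuclideanSpace ℝ (Fin n)) = n := by simp
  have hrank : 1 < Module.rank ℝ (EuclideanSpace ℝ (Fin n)) := by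
    rw [← Module.finrank_eq_rank, hfr]
    exact_mod_cast (by omega : 1 < n)
  have hnt : Nontrivial (EuclideanSpace ℝ (Fin n)) :=
    Module.nontrivial_of_finrank_pos (R := ℝ) (by rw [hfr]; omega)
  set t' : Fin M → EuclideanSpace ℝ (Fin n) := fun i => (t i : EuclideanSpace ℝ (Fin n)) with ht'
  set e' : Fin N → EuclideanSpace ℝ (Fin n) := fun i => (e i : EuclideanSpace ℝ (Fin n)) with he'
  have ht2 : ∀ i, ‖t' i‖ ≤ 1 / 4 := ht
  have he2 : ∀ i, ‖e' i‖ ≤ 1 / 4 := he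
  have ht3 : ∀ i, ‖t' i‖ ≤ 1 / 2 := fun i => (ht2 i).trans (by norm_num)
  have he3 : ∀ i, ‖e' i‖ ≤ 1 / 2 := fun i => (he2 i).trans (by norm_num)
  have hesep' : ∀ i j, i ≠ j → 3 * r ≤ ‖e' i - e' j‖ := hesep
  have hpyth : ∀ (x : L) (y : Lᗮ), ‖x‖ ≤ ‖(x : EuclideanSpace ℝ (Fin n)) + y‖ ∧
      ‖y‖ ≤ ‖(x : EuclideanSpace ℝ (Fin n)) + y‖ := by
    intro x y
    have h0 : inner ℝ (x : EuclideanSpace ℝ (Fin n)) (y : EuclideanSpace ℝ (Fin n)) = 0 :=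
      Submodule.inner_right_of_mem_orthogonal x.2 y.2
    have h1 := norm_add_sq_eq_norm_sq_add_norm_sq_of_inner_eq_zero _ _ h0
    have h2 : ‖(x : EuclideanSpace ℝ (Fin n))‖ = ‖x‖ := rfl
    have h3 : ‖(y : EuclideanSpace ℝ (Fin n))‖ = ‖y‖ := rfl
    rw [h2, h3] at h1
    constructor <;> refine le_of_sq_le_sq ?_ (norm_nonneg _) <;> nlinarith [norm_nonneg x, norm_nonneg y]
  set a : Fin M × Fin N → EuclideanSpace ℝ (Fin n) := fun q => t' q.1 + e' q.2 with ha
  have ha2 : ∀ q, ‖a q‖ ≤ 1 / 2 := fun q =>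
    (norm_add_le _ _).trans (by linarith [ht2 q.1, he2 q.2])
  have hasep : ∀ q q', q ≠ q' → 3 * r ≤ ‖a q - a q'‖ := by
    intro q q' hqq
    have e1 : a q - a q' = ((t q.1 - t q'.1 : L) : EuclideanSpace ℝ (Fin n)) +
        ((e q.2 - e q'.2 : Lᗮ) : EuclideanSpace ℝ (Fin n)) := by
      simp only [ha, ht', he', Submodule.coe_sub]; abel
    rw [e1]
    obtain ⟨h1, h2⟩ := hpyth (t q.1 - t q'.1) (e q.2 - e q'.2)
    by_cases h3 : q.1 = q'.1
    · have h4 : q.2 ≠ q'.2 := fun h4 => hqq (Prod.ext h3 h4)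
      exact (hesep _ _ h4).trans h2
    · exact (htsep _ _ h3).trans h1
  obtain ⟨φ, ⟨⟨C, hC1, hC2⟩, hout⟩, hin⟩ :=
    exists_base_map hrank a b hr hr' hρ hρ' ha2 hasep hb hbsep
  let S : CSys (EuclideanSpace ℝ (Fin n)) (Fin M × Fin N) :=
    { r := r, ρ := ρ, a := a, b := b, φ := φ, C := C, hr := hr, hr' := hr', hρ := hρ, hρ' := hρ',
      ha := ha2, hb := hb, hasep := hasep, hbsep := hbsep, lip := hC1, lip' := hC2,
      hout := hout, hin := hin }
  obtain ⟨Φ, hΦ⟩ := S.exists_homeo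
  have hq' : Fintype.card (Fin M × Fin N) * S.r ^ Module.finrank ℝ (EuclideanSpace ℝ (Fin n)) < 1 := by
    rw [hfr]; simpa [S] using hq
  have hqp' : Fintype.card (Fin M × Fin N) * S.r ^ Module.finrank ℝ (EuclideanSpace ℝ (Fin n)) *
      (S.ρ / S.r) ^ p < 1 := by
    rw [hfr]; simpa [S] using hqp
  refine ⟨Set.range (codePt r e'), Φ, ?_, ?_, hΦ.quasiconformal,
    hΦ.ae_differentiable volume hq', fun K hK => hΦ.lintegral_lt_top volume hq' hp hqp' hK, ?_⟩
  · rintro _ ⟨η, rfl⟩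
    exact codePt_mem hr hr' he3 η Lᗮ fun i => (e i).2
  · exact le_dimH_of_coding hN _ hr hr hβ'
      (fun ω ω' k h1 h2 => codePt_sep hr hr' he3 hesep' k ω ω' h1 h2) hNβ
  · rintro _ ⟨η, rfl⟩
    have h1 : ENNReal.ofReal α' ≤
        dimH (Set.range fun ω : ℕ → Fin M => codePt ρ b fun k => (ω k, η k)) := by
      refine le_dimH_of_coding hM _ hρ hρ hα' (fun ω ω' k h1 h2 => ?_) hMα
      refine codePt_sep hρ hρ' hb hbsep k _ _ (fun i hi => by rw [h1 i hi]) fun h3 => h2 ?_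
      exact (Prod.ext_iff.1 h3).1
    refine h1.trans (dimH_mono ?_)
    rintro _ ⟨ω, rfl⟩
    refine ⟨codePt r t' ω + codePt r e' η, ⟨codePt r t' ω, ?_, add_comm _ _⟩, ?_⟩
    · exact codePt_mem hr hr' ht3 ω L fun i => (t i).2
    · rw [← codePt_add hr hr' ht3 he3]
      exact hΦ.codePt_map fun k => (ω k, η k)

theorem lt_toReal_dimH {n : ℕ} {A : Set (EuclideanSpace ℝ (Fin n))} {x y : ℝ} (hxy : x < y)
    (hy : 0 < y) (h : ENNReal.ofReal y ≤ dimH A) : x < (dimH A).toReal := by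
  have htop : dimH A ≠ ⊤ := by
    refine ne_top_of_le_ne_top ?_ (dimH_mono (subset_univ A))
    rw [Real.dimH_univ_eq_finrank]
    exact ENNReal.natCast_ne_top _
  exact hxy.trans_le ((ENNReal.ofReal_le_iff_le_toReal htop).1 h)

/-- **Main theorem.** Let `p > n ≥ 2`, `α ∈ [1, p/(p-(n-1)))`, and let `L` be a
one-dimensional linear subspace of `ℝⁿ`. For any `β < (n-1) - p(1 - 1/α)` there are a set
`E ⊆ L^⊥` with `dim E > β` and a quasiconformal homeomorphism `Φ : ℝⁿ → ℝⁿ` belonging to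
`W^{1,p}_loc(ℝⁿ;ℝⁿ)` such that `dim Φ(a + L) > α` for every `a ∈ E`. -/
theorem qc_sharp_line_dimension_distortion
    (n : ℕ) (hn : 2 ≤ n) (p : ℝ) (hp : (n : ℝ) < p)
    (α : ℝ) (hα₁ : 1 ≤ α) (hα₂ : α < p / (p - ((n : ℝ) - 1)))
    (L : Submodule ℝ (EuclideanSpace ℝ (Fin n))) (hL : Module.finrank ℝ L = 1)
    (β : ℝ) (hβ : β < ((n : ℝ) - 1) - p * (1 - 1 / α)) :
    ∃ (E : Set (EuclideanSpace ℝ (Fin n)))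
      (Φ : EuclideanSpace ℝ (Fin n) ≃ₜ EuclideanSpace ℝ (Fin n)),
      E ⊆ (Lᗮ : Set (EuclideanSpace ℝ (Fin n))) ∧
      β < (dimH E).toReal ∧
      QuasiconformalOn Set.univ ⇑Φ ∧
      (∀ᵐ x, DifferentiableAt ℝ (⇑Φ) x) ∧
      (∀ K : Set (EuclideanSpace ℝ (Fin n)), IsCompact K →
        ∫⁻ x in K, ENNReal.ofReal (‖fderiv ℝ (⇑Φ) x‖ ^ p) < ⊤) ∧
      ∀ a ∈ E, α < (dimH (⇑Φ '' {x | ∃ v ∈ L, x = a + v})).toReal := by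
  obtain ⟨σ, s, α', β', hσ0, hσ1, hs0, hα', hβ', hαα, hββ, hσα, hβs, hs⟩ :=
    exists_exponents n p hn hp α hα₁ hα₂ β hβ
  have hfr : Module.finrank ℝ (EuclideanSpace ℝ (Fin n)) = n := by simp
  have hLp : Module.finrank ℝ Lᗮ = n - 1 := by
    have := L.finrank_add_finrank_orthogonal
    omega
  obtain ⟨c₁, hc₁, H₁⟩ := exists_separated L
  obtain ⟨c₂, hc₂, H₂⟩ := exists_separated Lᗮ
  obtain ⟨c₃, hc₃, H₃⟩ := exists_separated (EuclideanSpace ℝ (Fin n))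
  obtain ⟨r, ρ, M, N, m₂, m₃, hr, hr', hρ, hρ', hM, hN, h1, h2, h3, h4, h5, hq, hqp, hNβ, hMα⟩ :=
    exists_params n hn p σ s α' β' hp hσ0 hσ1 hs0 hσα hβs hs hc₁ hc₂ hc₃
  obtain ⟨t, ht, htsep⟩ := H₁ M M (3 * r) (by positivity) h1 (by rw [hL, pow_one])
  obtain ⟨e, he, hesep⟩ := H₂ m₂ N (3 * r) (by positivity) h2 (by rw [hLp]; exact h4)
  obtain ⟨b, hb, hbsep⟩ := H₃ m₃ (M * N) (3 * ρ) (by positivity) h3 (by rw [hfr]; exact h5)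
  have hp0 : 0 < p := lt_of_le_of_lt (Nat.cast_nonneg n) hp
  obtain ⟨E, Φ, hE, hdE, hqc, hdiff, hfinite, hdim⟩ :=
    exists_map_of_params n hn hp0 L hr hr' hρ hρ' hM hN hα' hβ' t ht htsep e he hesep
      (fun q => b (finProdFinEquiv q)) (fun q => (hb _).trans (by norm_num))
      (fun q q' hqq => hbsep _ _ fun h => hqq (finProdFinEquiv.injective h)) hq hqp hNβ hMα
  exact ⟨E, Φ, hE, lt_toReal_dimH hββ hβ' hdE, hqc, hdiff, hfinite,
    fun a ha => lt_toReal_dimH hαα hα' (hdim a ha)⟩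
end
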